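/- arXiv:math/0511066 — 5 statements merged into one kernel-verified Lean document; each statement's English description precedes it below -/
import Mathlib

section
/- Let λ > 0 and let S : ℤ³ → ℂ be a kernel satisfying: S(k,m,n) = 0 whenever kmn = 0; S(k,m,n) = conj(S(−k,−m,−n)); S(k,m,n) = S(k,n,m); S(k,m,n) = S(m,n,k); S(ηk,ηm,ηn) = η^{−λ} S(k,m,n) for every positive integer η; and the bound |S(k,m,n)| ≤ C / min{|k|^λ, |m|^λ, |n|^λ} for some constant C > 0 and all k,m,n ∈ ℤ with kmn ≠ 0. Let s > max{3/2 − λ, 1/2}, let C_{s,λ} be a constant such that |k|k|^{2s} + m|m|^{2s} + n|n|^{2s}| / min{|k|^λ, |m|^λ, |n|^λ} ≤ C_{s,λ}(|k|^s|m|^s|n|^{1−λ} + |n|^s|k|^s|m|^{1−λ} + |m|^s|n|^s|k|^{1−λ}) for all nonzero real k,m,n with k+m+n = 0, and set K_{s,λ} = C·C_{s,λ}·M_{s+λ−1} where M_σ = (2 Σ_{n=1}^∞ n^{−2σ})^{1/2}. Then for every f ∈ Ḣ^s(𝕋), the initial-value problem u_t + a(u,u)_x = 0, u(·,0) = f has a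 unique solution u ∈ C(I; Ḣ^s(𝕋)) ∩ C¹(I; Ḣ^{s−1}(𝕋)) on the time interval I = (−t₊, t₊) with t₊ = 1/(K_{s,λ} ‖f‖_s). -/
open scoped BigOperators
open Filter

/-- The homogeneous Sobolev norm of order `s` of a Fourier coefficient sequence. -/
noncomputable def hnorm (s : ℝ) (u : ℤ → ℂ) : ℝ :=
  (∑' k : ℤ, |(k : ℝ)| ^ (2 * s) * ‖u k‖ ^ 2) ^ ((1 : ℝ) / 2)

/-- Membership in the homogeneous Sobolev space `Ḣ^s(𝕋)`. -/
def InHs (s : ℝ) (u : ℤ → ℂ) : Prop :=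
  u 0 = 0 ∧ (∀ k : ℤ, u (-k) = starRingEnd ℂ (u k)) ∧
    Summable fun k : ℤ => |(k : ℝ)| ^ (2 * s) * ‖u k‖ ^ 2

/-- `M_σ = (2 Σ_{n=1}^∞ n^{−2σ})^{1/2}`. -/
noncomputable def Mconst (σ : ℝ) : ℝ :=
  Real.sqrt (2 * ∑' n : ℕ, ((n : ℝ) + 1) ^ (-(2 * σ)))

/-- The Fourier coefficients of the bilinear form `a(u,v)` determined by the kernel `S`. -/
noncomputable def aHat (S : ℤ → ℤ → ℤ → ℂ) (u v : ℤ → ℂ) (k : ℤ) : ℂ :=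
  ∑' n : ℤ, S (-k) (k - n) n * u (k - n) * v n

/-- Continuity of `t ↦ u(·,t)` on `I` with values in `Ḣ^s`. -/
def HsContOn (s : ℝ) (u : ℝ → ℤ → ℂ) (I : Set ℝ) : Prop :=
  ∀ t₀ ∈ I, Tendsto (fun t => hnorm s fun k => u t k - u t₀ k) (nhdsWithin t₀ I) (nhds 0)

/-- `u` is a solution of `u_t + a(u,u)_x = 0` on the time interval `I`,
belonging to `C(I; Ḣ^s) ∩ C¹(I; Ḣ^{s-1})`. -/
def IsSolution (S : ℤ → ℤ → ℤ → ℂ) (s : ℝ) (I : Set ℝ) (u : ℝ → ℤ → ℂ) : Prop :=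
  (∀ t ∈ I, InHs s (u t)) ∧ HsContOn s u I ∧
    (∀ t ∈ I, ∀ k : ℤ, HasDerivAt (fun τ => u τ k)
      (-(Complex.I * (k : ℂ) * aHat S (u t) (u t) k)) t) ∧
    (∀ t ∈ I, InHs (s - 1) fun k => -(Complex.I * (k : ℂ) * aHat S (u t) (u t) k)) ∧
    HsContOn (s - 1) (fun t k => -(Complex.I * (k : ℂ) * aHat S (u t) (u t) k)) I


/-! ### l2 tools -/

lemma cs_aux {ι : Type*} (a b : ι → ℝ) (ha : ∀ i, 0 ≤ a i) (hb : ∀ i, 0 ≤ b i)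
    (hA : Summable fun i => a i ^ 2) (hB : Summable fun i => b i ^ 2) :
    (Summable fun i => a i * b i) ∧
      ∑' i, a i * b i ≤ Real.sqrt (∑' i, a i ^ 2) * Real.sqrt (∑' i, b i ^ 2) := by
  have hpq : (2:ℝ).HolderConjugate 2 := Real.HolderConjugate.two_two
  have := Real.summable_and_inner_le_Lp_mul_Lq_tsum_of_nonneg hpq ha hb
    (by simpa using hA) (by simpa using hB)
  simpa [Real.sqrt_eq_rpow] using this

lemma tri1 (a b c : ℤ → ℝ) (ha : ∀ i, 0 ≤ a i) (hb : ∀ i, 0 ≤ b i) (hc : ∀ i, 0 ≤ c i)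
    (hA : Summable fun i => a i ^ 2) (hB : Summable fun i => b i ^ 2) (hC : Summable c) :
    (Summable fun p : ℤ × ℤ => a p.1 * b (p.1 - p.2) * c p.2) ∧
      ∑' p : ℤ × ℤ, a p.1 * b (p.1 - p.2) * c p.2 ≤
        Real.sqrt (∑' i, a i ^ 2) * Real.sqrt (∑' i, b i ^ 2) * ∑' i, c i := by
  have key : ∀ n : ℤ, (Summable fun k => a k * b (k - n)) ∧
      ∑' k, a k * b (k - n) ≤ Real.sqrt (∑' i, a i ^ 2) * Real.sqrt (∑' i, b i ^ 2) := by
    intro n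
    have h1 : Summable fun i => b (i - n) ^ 2 :=
      (Equiv.subRight n).summable_iff (f := fun i => b i ^ 2) |>.2 hB
    have h2 : ∑' i, b (i - n) ^ 2 = ∑' i, b i ^ 2 :=
      (Equiv.subRight n).tsum_eq (fun i => b i ^ 2)
    have := cs_aux a (fun k => b (k - n)) ha (fun _ => hb _) hA h1
    rwa [h2] at this
  have hs : Summable fun p : ℤ × ℤ => a p.2 * b (p.2 - p.1) * c p.1 := by
    rw [summable_prod_of_nonneg (fun p => mul_nonneg (mul_nonneg (ha _) (hb _)) (hc _))]
    refine ⟨fun n => ?_, ?_⟩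
    · dsimp only
      exact (key n).1.mul_right _
    dsimp only
    refine Summable.of_nonneg_of_le (fun n => tsum_nonneg fun k =>
      mul_nonneg (mul_nonneg (ha _) (hb _)) (hc _)) (fun n => ?_)
      (hC.mul_left (Real.sqrt (∑' i, a i ^ 2) * Real.sqrt (∑' i, b i ^ 2)))
    rw [tsum_mul_right]
    exact mul_le_mul_of_nonneg_right (key n).2 (hc n)
  have hs' : Summable fun p : ℤ × ℤ => a p.1 * b (p.1 - p.2) * c p.2 :=
    (Equiv.prodComm ℤ ℤ).summable_iff (f := fun p : ℤ × ℤ => a p.2 * b (p.2 - p.1) * c p.1) |>.2 hs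
  refine ⟨hs', ?_⟩
  have e : ∑' p : ℤ × ℤ, a p.1 * b (p.1 - p.2) * c p.2 =
      ∑' p : ℤ × ℤ, a p.2 * b (p.2 - p.1) * c p.1 :=
    (Equiv.prodComm ℤ ℤ).tsum_eq (fun p : ℤ × ℤ => a p.2 * b (p.2 - p.1) * c p.1)
  rw [e, hs.tsum_prod, ← tsum_mul_left]
  refine Summable.tsum_le_tsum (fun n => ?_) hs.prod (hC.mul_left _)
  simp only
  rw [tsum_mul_right]
  exact mul_le_mul_of_nonneg_right (key n).2 (hc n)

/-- `(k,n) ↦ (k, k-n)`. -/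
def eSwap : ℤ × ℤ ≃ ℤ × ℤ where
  toFun p := (p.1, p.1 - p.2)
  invFun p := (p.1, p.1 - p.2)
  left_inv p := by ext <;> simp
  right_inv p := by ext <;> simp

/-- `(k,n) ↦ (n-k, n)`. -/
def eFlip : ℤ × ℤ ≃ ℤ × ℤ where
  toFun p := (p.2 - p.1, p.2)
  invFun p := (p.2 - p.1, p.2)
  left_inv p := by ext <;> simp
  right_inv p := by ext <;> simp

/-- `(k,n) ↦ (-n, k-n)`. -/
def eCyc : ℤ × ℤ ≃ ℤ × ℤ where
  toFun p := (-p.2, p.1 - p.2)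
  invFun p := (p.2 - p.1, -p.1)
  left_inv p := by ext <;> simp
  right_inv p := by ext <;> simp

lemma tri2 (a b c : ℤ → ℝ) (ha : ∀ i, 0 ≤ a i) (hb : ∀ i, 0 ≤ b i) (hc : ∀ i, 0 ≤ c i)
    (hA : Summable fun i => a i ^ 2) (hB : Summable fun i => b i ^ 2) (hC : Summable c) :
    (Summable fun p : ℤ × ℤ => a p.1 * b p.2 * c (p.1 - p.2)) ∧
      ∑' p : ℤ × ℤ, a p.1 * b p.2 * c (p.1 - p.2) ≤
        Real.sqrt (∑' i, a i ^ 2) * Real.sqrt (∑' i, b i ^ 2) * ∑' i, c i := by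
  have h := tri1 a b c ha hb hc hA hB hC
  have e := eSwap.tsum_eq (fun p : ℤ × ℤ => a p.1 * b (p.1 - p.2) * c p.2)
  have f := eSwap.summable_iff (f := fun p : ℤ × ℤ => a p.1 * b (p.1 - p.2) * c p.2)
  simp only [eSwap, Equiv.coe_fn_mk, Function.comp_def, sub_sub_cancel] at e f
  exact ⟨f.2 h.1, e ▸ h.2⟩

lemma tri3 (a b c : ℤ → ℝ) (ha : ∀ i, 0 ≤ a i) (hb : ∀ i, 0 ≤ b i) (hc : ∀ i, 0 ≤ c i)
    (hev : ∀ i, a (-i) = a i) (hevc : ∀ i, c (-i) = c i)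
    (hA : Summable fun i => a i ^ 2) (hB : Summable fun i => b i ^ 2) (hC : Summable c) :
    (Summable fun p : ℤ × ℤ => a (p.1 - p.2) * b p.2 * c p.1) ∧
      ∑' p : ℤ × ℤ, a (p.1 - p.2) * b p.2 * c p.1 ≤
        Real.sqrt (∑' i, a i ^ 2) * Real.sqrt (∑' i, b i ^ 2) * ∑' i, c i := by
  have h := tri2 a b c ha hb hc hA hB hC
  have e := eFlip.tsum_eq (fun p : ℤ × ℤ => a p.1 * b (p.2) * c (p.1 - p.2))
  have f := eFlip.summable_iff (f := fun p : ℤ × ℤ => a p.1 * b (p.2) * c (p.1 - p.2))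
  have h1 : ∀ x y : ℤ, a (y - x) = a (x - y) := fun x y => by rw [← hev, neg_sub]
  have h2 : ∀ x y : ℤ, c (y - x - y) = c x := fun x y => by rw [← hevc]; congr 1; ring
  simp only [eFlip, Equiv.coe_fn_mk, Function.comp_def, h1, h2] at e f
  exact ⟨f.2 h.1, e ▸ h.2⟩

lemma young (a c : ℤ → ℝ) (ha : ∀ i, 0 ≤ a i) (hc : ∀ i, 0 ≤ c i)
    (hA : Summable fun i => a i ^ 2) (hC : Summable c) :
    (∀ k, Summable fun n => a (k - n) * c n) ∧
    (Summable fun k => (∑' n, a (k - n) * c n) ^ 2) ∧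
      ∑' k, (∑' n, a (k - n) * c n) ^ 2 ≤ (∑' i, a i ^ 2) * (∑' i, c i) ^ 2 := by
  -- double sum of a(k-n)^2 c(n)
  have hs : Summable fun p : ℤ × ℤ => a (p.2 - p.1) ^ 2 * c p.1 := by
    rw [summable_prod_of_nonneg (fun p => mul_nonneg (sq_nonneg _) (hc _))]
    refine ⟨fun n => ?_, ?_⟩
    · dsimp only
      exact ((Equiv.subRight n).summable_iff (f := fun i => a i ^ 2) |>.2 hA).mul_right _
    dsimp only
    refine (hC.mul_left (∑' i, a i ^ 2)).congr fun n => ?_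
    rw [tsum_mul_right]
    congr 1
    exact ((Equiv.subRight n).tsum_eq (fun i => a i ^ 2)).symm
  have hs' : Summable fun p : ℤ × ℤ => a (p.1 - p.2) ^ 2 * c p.2 :=
    (Equiv.prodComm ℤ ℤ).summable_iff (f := fun p : ℤ × ℤ => a (p.2 - p.1) ^ 2 * c p.1) |>.2 hs
  have hval : ∑' p : ℤ × ℤ, a (p.1 - p.2) ^ 2 * c p.2 = (∑' i, a i ^ 2) * ∑' i, c i := by
    have e : ∑' p : ℤ × ℤ, a (p.1 - p.2) ^ 2 * c p.2 = ∑' p : ℤ × ℤ, a (p.2 - p.1) ^ 2 * c p.1 :=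
      (Equiv.prodComm ℤ ℤ).tsum_eq (fun p : ℤ × ℤ => a (p.2 - p.1) ^ 2 * c p.1)
    rw [e, hs.tsum_prod, ← tsum_mul_left]
    refine tsum_congr fun n => ?_
    simp only
    rw [tsum_mul_right]
    congr 1
    exact ((Equiv.subRight n).tsum_eq (fun i => a i ^ 2))
  have hfib : ∀ k, Summable fun n => a (k - n) ^ 2 * c n := fun k => hs'.prod_factor k
  have key : ∀ k, (Summable fun n => a (k - n) * c n) ∧
      (∑' n, a (k - n) * c n) ^ 2 ≤ (∑' n, a (k - n) ^ 2 * c n) * ∑' n, c n := by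
    intro k
    have h := cs_aux (fun n => a (k - n) * Real.sqrt (c n)) (fun n => Real.sqrt (c n))
      (fun n => mul_nonneg (ha _) (Real.sqrt_nonneg _)) (fun n => Real.sqrt_nonneg _)
      (by simpa [mul_pow, Real.sq_sqrt (hc _)] using hfib k)
      (by simpa [Real.sq_sqrt (hc _)] using hC)
    simp only [mul_pow, Real.sq_sqrt (hc _), mul_assoc, Real.mul_self_sqrt (hc _)] at h
    refine ⟨h.1, ?_⟩
    calc _ ≤ (Real.sqrt (∑' n, a (k - n) ^ 2 * c n) * Real.sqrt (∑' n, c n)) ^ 2 :=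
          pow_le_pow_left₀ (tsum_nonneg fun n => mul_nonneg (ha _) (hc _)) h.2 2
      _ = _ := by
          rw [mul_pow, Real.sq_sqrt (tsum_nonneg fun n => mul_nonneg (sq_nonneg _) (hc _)),
            Real.sq_sqrt (tsum_nonneg hc)]
  have hsum : Summable fun k => (∑' n, a (k - n) ^ 2 * c n) * ∑' n, c n := hs'.prod.mul_right _
  refine ⟨fun k => (key k).1, Summable.of_nonneg_of_le (fun _ => sq_nonneg _) (fun k => (key k).2) hsum, ?_⟩
  calc _ ≤ ∑' k, (∑' n, a (k - n) ^ 2 * c n) * ∑' n, c n :=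
        Summable.tsum_le_tsum (fun k => (key k).2)
          (Summable.of_nonneg_of_le (fun _ => sq_nonneg _) (fun k => (key k).2) hsum) hsum
    _ = (∑' p : ℤ × ℤ, a (p.1 - p.2) ^ 2 * c p.2) * ∑' n, c n := by
        rw [tsum_mul_right, hs'.tsum_prod]
    _ = _ := by rw [hval]; ring


/-! ### Weighted sequences -/

noncomputable def Wt (ρ : ℝ) (u : ℤ → ℂ) (k : ℤ) : ℝ := |(k : ℝ)| ^ ρ * ‖u k‖

noncomputable def En (ρ : ℝ) (u : ℤ → ℂ) : ℝ := ∑' k, Wt ρ u k ^ 2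

lemma Wt_nonneg (ρ : ℝ) (u : ℤ → ℂ) (k : ℤ) : 0 ≤ Wt ρ u k := by
  unfold Wt; positivity

lemma Wt_sq (ρ : ℝ) (u : ℤ → ℂ) (k : ℤ) : Wt ρ u k ^ 2 = |(k : ℝ)| ^ (2 * ρ) * ‖u k‖ ^ 2 := by
  unfold Wt
  rw [mul_pow, ← Real.rpow_mul_natCast (abs_nonneg _)]
  congr 2
  push_cast; ring

lemma En_nonneg (ρ : ℝ) (u : ℤ → ℂ) : 0 ≤ En ρ u := tsum_nonneg fun _ => sq_nonneg _

lemma hnorm_eq (ρ : ℝ) (u : ℤ → ℂ) : hnorm ρ u = Real.sqrt (En ρ u) := by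
  unfold hnorm En
  rw [Real.sqrt_eq_rpow]
  simp only [Wt_sq]

lemma hnorm_nonneg (ρ : ℝ) (u : ℤ → ℂ) : 0 ≤ hnorm ρ u := by
  rw [hnorm_eq]; positivity

lemma hnorm_sq (ρ : ℝ) (u : ℤ → ℂ) : hnorm ρ u ^ 2 = En ρ u := by
  rw [hnorm_eq, Real.sq_sqrt (En_nonneg _ _)]

lemma InHs.summ {ρ : ℝ} {u : ℤ → ℂ} (h : InHs ρ u) : Summable fun k => Wt ρ u k ^ 2 := by
  simpa only [Wt_sq] using h.2.2

lemma inHs_of {ρ : ℝ} {u : ℤ → ℂ} (h0 : u 0 = 0) (h1 : ∀ k : ℤ, u (-k) = starRingEnd ℂ (u k))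
    (h2 : Summable fun k => Wt ρ u k ^ 2) : InHs ρ u :=
  ⟨h0, h1, by simpa only [Wt_sq] using h2⟩

lemma InHs.neg_norm {ρ : ℝ} {u : ℤ → ℂ} (h : InHs ρ u) (k : ℤ) : ‖u (-k)‖ = ‖u k‖ := by
  rw [h.2.1 k]; simp

lemma InHs.Wt_neg {ρ : ℝ} {u : ℤ → ℂ} (h : InHs ρ u) (σ : ℝ) (k : ℤ) : Wt σ u (-k) = Wt σ u k := by
  unfold Wt; rw [h.neg_norm]; simp

lemma one_le_abs_int {k : ℤ} (hk : k ≠ 0) : (1 : ℝ) ≤ |(k : ℝ)| := by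
  have : (1 : ℤ) ≤ |k| := Int.one_le_abs hk
  exact_mod_cast this

lemma Wt_mono {ρ σ : ℝ} (h : ρ ≤ σ) {u : ℤ → ℂ} (h0 : u 0 = 0) (k : ℤ) : Wt ρ u k ≤ Wt σ u k := by
  unfold Wt
  rcases eq_or_ne k 0 with rfl | hk
  · simp [h0]
  · exact mul_le_mul_of_nonneg_right (Real.rpow_le_rpow_of_exponent_le (one_le_abs_int hk) h)
      (norm_nonneg _)

lemma InHs.mono {ρ σ : ℝ} (h : ρ ≤ σ) {u : ℤ → ℂ} (hu : InHs σ u) : InHs ρ u :=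
  inHs_of hu.1 hu.2.1 (Summable.of_nonneg_of_le (fun _ => sq_nonneg _)
    (fun k => pow_le_pow_left₀ (Wt_nonneg _ _ _) (Wt_mono h hu.1 k) 2) hu.summ)

lemma InHs.En_mono {ρ σ : ℝ} (h : ρ ≤ σ) {u : ℤ → ℂ} (hu : InHs σ u) : En ρ u ≤ En σ u :=
  Summable.tsum_le_tsum (fun k => pow_le_pow_left₀ (Wt_nonneg _ _ _) (Wt_mono h hu.1 k) 2)
    (hu.mono h).summ hu.summ

lemma Wt_add_sq (ρ : ℝ) (u v : ℤ → ℂ) (k : ℤ) :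
    Wt ρ (fun k => u k + v k) k ^ 2 ≤ 2 * Wt ρ u k ^ 2 + 2 * Wt ρ v k ^ 2 := by
  simp only [Wt_sq]
  have h1 : ‖u k + v k‖ ^ 2 ≤ 2 * ‖u k‖ ^ 2 + 2 * ‖v k‖ ^ 2 := by
    have := norm_add_le (u k) (v k)
    have h2 := norm_nonneg (u k + v k)
    nlinarith [sq_nonneg (‖u k‖ - ‖v k‖)]
  have h3 : 0 ≤ |(k : ℝ)| ^ (2 * ρ) := by positivity
  nlinarith

lemma Wt_sub_sq (ρ : ℝ) (u v : ℤ → ℂ) (k : ℤ) :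
    Wt ρ (fun k => u k - v k) k ^ 2 ≤ 2 * Wt ρ u k ^ 2 + 2 * Wt ρ v k ^ 2 := by
  have := Wt_add_sq ρ u (fun k => - v k) k
  simpa [Wt, sub_eq_add_neg] using this

lemma InHs.add {ρ : ℝ} {u v : ℤ → ℂ} (hu : InHs ρ u) (hv : InHs ρ v) :
    InHs ρ (fun k => u k + v k) :=
  inHs_of (by simp [hu.1, hv.1]) (fun k => by simp [hu.2.1, hv.2.1])
    (Summable.of_nonneg_of_le (fun _ => sq_nonneg _) (Wt_add_sq ρ u v)
      ((hu.summ.mul_left 2).add (hv.summ.mul_left 2)))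

lemma InHs.sub {ρ : ℝ} {u v : ℤ → ℂ} (hu : InHs ρ u) (hv : InHs ρ v) :
    InHs ρ (fun k => u k - v k) :=
  inHs_of (by simp [hu.1, hv.1]) (fun k => by simp [hu.2.1, hv.2.1])
    (Summable.of_nonneg_of_le (fun _ => sq_nonneg _) (Wt_sub_sq ρ u v)
      ((hu.summ.mul_left 2).add (hv.summ.mul_left 2)))

lemma InHs.En_add {ρ : ℝ} {u v : ℤ → ℂ} (hu : InHs ρ u) (hv : InHs ρ v) :
    En ρ (fun k => u k + v k) ≤ 2 * En ρ u + 2 * En ρ v := by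
  unfold En
  rw [← tsum_mul_left, ← tsum_mul_left, ← (hu.summ.mul_left 2).tsum_add (hv.summ.mul_left 2)]
  exact Summable.tsum_le_tsum (Wt_add_sq ρ u v) (hu.add hv).summ
    ((hu.summ.mul_left 2).add (hv.summ.mul_left 2))

lemma InHs.En_sub {ρ : ℝ} {u v : ℤ → ℂ} (hu : InHs ρ u) (hv : InHs ρ v) :
    En ρ (fun k => u k - v k) ≤ 2 * En ρ u + 2 * En ρ v := by
  unfold En
  rw [← tsum_mul_left, ← tsum_mul_left, ← (hu.summ.mul_left 2).tsum_add (hv.summ.mul_left 2)]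
  exact Summable.tsum_le_tsum (Wt_sub_sq ρ u v) (hu.sub hv).summ
    ((hu.summ.mul_left 2).add (hv.summ.mul_left 2))

lemma Mconst_sum {σ : ℝ} (hσ : 1 / 2 < σ) :
    (Summable fun k : ℤ => (|(k : ℝ)| ^ (-σ)) ^ 2) ∧
      Real.sqrt (∑' k : ℤ, (|(k : ℝ)| ^ (-σ)) ^ 2) = Mconst σ ∧ 0 < Mconst σ := by
  have e : ∀ k : ℤ, (|(k : ℝ)| ^ (-σ)) ^ 2 = |(k : ℝ)| ^ (-(2 * σ)) := by
    intro k
    rw [← Real.rpow_mul_natCast (abs_nonneg _)]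
    congr 1; push_cast; ring
  simp only [e]
  have h0 : Summable fun n : ℕ => (n : ℝ) ^ (-(2 * σ)) := by
    rw [Real.summable_nat_rpow]; linarith
  have h1 : Summable fun n : ℕ => ((n : ℝ) + 1) ^ (-(2 * σ)) := by
    simpa using (summable_nat_add_iff 1).2 h0
  have hz : ((0 : ℕ) : ℝ) ^ (-(2 * σ)) = 0 := by
    rw [Nat.cast_zero, Real.zero_rpow]; linarith
  have a1 : Summable fun n : ℕ => |((n : ℤ) : ℝ)| ^ (-(2 * σ)) := by
    simpa using h0
  have hab : ∀ n : ℕ, |((-((n : ℤ) + 1) : ℤ) : ℝ)| = (n : ℝ) + 1 := by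
    intro n
    push_cast
    rw [abs_neg, abs_of_nonneg]
    positivity
  have a2 : Summable fun n : ℕ => |((-((n : ℤ) + 1) : ℤ) : ℝ)| ^ (-(2 * σ)) := by
    simpa only [hab] using h1
  have hS : Summable fun k : ℤ => |(k : ℝ)| ^ (-(2 * σ)) := Summable.of_nat_of_neg_add_one
    (f := fun k : ℤ => |(k : ℝ)| ^ (-(2 * σ))) a1 a2
  refine ⟨hS, ?_, ?_⟩
  · rw [tsum_of_nat_of_neg_add_one (f := fun k : ℤ => |(k : ℝ)| ^ (-(2 * σ))) a1 a2]
    unfold Mconst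
    congr 1
    simp only [hab, Int.cast_natCast, Nat.abs_cast]
    rw [h0.tsum_eq_zero_add, hz]
    push_cast
    ring
  · unfold Mconst
    apply Real.sqrt_pos.2
    have := h1.tsum_pos (fun n => by positivity) 0 (by positivity)
    linarith

lemma l1_bound {s ρ : ℝ} (h : 1 / 2 < s - ρ) {u : ℤ → ℂ} (hu : InHs s u) :
    Summable (Wt ρ u) ∧ ∑' k, Wt ρ u k ≤ Mconst (s - ρ) * Real.sqrt (En s u) := by
  obtain ⟨h1, h2, -⟩ := Mconst_sum h
  have := cs_aux (fun k : ℤ => |(k : ℝ)| ^ (-(s - ρ))) (Wt s u) (fun _ => by positivity)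
    (Wt_nonneg s u) h1 hu.summ
  rw [h2] at this
  have e : ∀ k : ℤ, |(k : ℝ)| ^ (-(s - ρ)) * Wt s u k = Wt ρ u k := by
    intro k
    unfold Wt
    rcases eq_or_ne k 0 with rfl | hk
    · simp [hu.1]
    · have : 0 < |(k : ℝ)| := lt_of_lt_of_le one_pos (one_le_abs_int hk)
      rw [← mul_assoc, ← Real.rpow_add this]
      congr 2; ring
  simp only [e] at this
  exact this

lemma Wt_zero (u : ℤ → ℂ) (k : ℤ) : Wt 0 u k = ‖u k‖ := by simp [Wt]

/-- coefficient bound -/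
lemma InHs.coef_le {ρ : ℝ} {u : ℤ → ℂ} (hu : InHs ρ u) (k : ℤ) : Wt ρ u k ^ 2 ≤ En ρ u :=
  hu.summ.le_tsum k (fun _ _ => sq_nonneg _)

/-! ### The kernel -/

structure Ker (lam s C : ℝ) (S : ℤ → ℤ → ℤ → ℂ) : Prop where
  lpos : 0 < lam
  h0 : ∀ k m n : ℤ, k * m * n = 0 → S k m n = 0
  hreal : ∀ k m n : ℤ, S k m n = starRingEnd ℂ (S (-k) (-m) (-n))
  hsym : ∀ k m n : ℤ, S k m n = S k n m
  hcyc : ∀ k m n : ℤ, S k m n = S m n k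
  Cpos : 0 < C
  hb : ∀ k m n : ℤ, k * m * n ≠ 0 → ‖S k m n‖ ≤
      C / min (|(k : ℝ)| ^ lam) (min (|(m : ℝ)| ^ lam) (|(n : ℝ)| ^ lam))
  hs1 : 1 / 2 < s
  hs2 : 1 / 2 < s + lam - 1

section
variable {lam s C : ℝ} {S : ℤ → ℤ → ℤ → ℂ}

lemma Ker.norm_le (K : Ker lam s C S) (k m n : ℤ) : ‖S k m n‖ ≤ C := by
  by_cases h : k * m * n = 0
  · rw [K.h0 _ _ _ h]; simpa using K.Cpos.le
  · refine (K.hb k m n h).trans ?_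
    have hk : k ≠ 0 := by rintro rfl; simp at h
    have hm : m ≠ 0 := by rintro rfl; simp at h
    have hn : n ≠ 0 := by rintro rfl; simp at h
    apply div_le_self K.Cpos.le
    have := K.lpos.le
    refine le_min ?_ (le_min ?_ ?_) <;> exact Real.one_le_rpow (one_le_abs_int (by assumption)) this

lemma Ker.s_pos (K : Ker lam s C S) : 0 < s := by linarith [K.hs1]

lemma Ker.term_le (K : Ker lam s C S) (u v : ℤ → ℂ) (k n : ℤ) :
    ‖S (-k) (k - n) n * u (k - n) * v n‖ ≤ C * (‖u (k - n)‖ * ‖v n‖) := by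
  rw [norm_mul, norm_mul, mul_assoc]
  exact mul_le_mul_of_nonneg_right (K.norm_le _ _ _) (by positivity)

lemma pow_split {s : ℝ} (hs : 0 ≤ s) (k n : ℤ) :
    |(k : ℝ)| ^ s ≤ 2 ^ s * (|((k - n : ℤ) : ℝ)| ^ s + |(n : ℝ)| ^ s) := by
  have h1 : |(k : ℝ)| ≤ 2 * max |((k - n : ℤ) : ℝ)| |(n : ℝ)| := by
    have : |(k : ℝ)| ≤ |((k - n : ℤ) : ℝ)| + |(n : ℝ)| := by
      calc |(k : ℝ)| = |((k - n : ℤ) : ℝ) + (n : ℝ)| := by push_cast; ring_nf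
        _ ≤ _ := abs_add_le _ _
    linarith [le_max_left |((k - n : ℤ) : ℝ)| |(n : ℝ)|, le_max_right |((k - n : ℤ) : ℝ)| |(n : ℝ)|]
  calc |(k : ℝ)| ^ s ≤ (2 * max |((k - n : ℤ) : ℝ)| |(n : ℝ)|) ^ s :=
        Real.rpow_le_rpow (abs_nonneg _) h1 hs
    _ = 2 ^ s * (max |((k - n : ℤ) : ℝ)| |(n : ℝ)|) ^ s := Real.mul_rpow (by norm_num) (by positivity)
    _ ≤ _ := by
        apply mul_le_mul_of_nonneg_left _ (by positivity)
        rcases max_cases |((k - n : ℤ) : ℝ)| |(n : ℝ)| with h | h <;> rw [h.1]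
        · linarith [Real.rpow_nonneg (abs_nonneg (n : ℝ)) s]
        · linarith [Real.rpow_nonneg (abs_nonneg ((k - n : ℤ) : ℝ)) s]

lemma Ker.aux_summ (K : Ker lam s C S) {u v : ℤ → ℂ} (hu : InHs s u) (hv : InHs s v) (k : ℤ) :
    Summable fun n => ‖u (k - n)‖ * ‖v n‖ := by
  have hu1 := l1_bound (ρ := 0) (by simpa using K.hs1) hv
  simp only [Wt_zero, funext (Wt_zero v)] at hu1
  have hu2 := (hu.mono K.s_pos.le).summ
  simp only [Wt_zero] at hu2
  exact (young (fun k => ‖u k‖) (fun k => ‖v k‖) (fun _ => norm_nonneg _) (fun _ => norm_nonneg _)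
    hu2 hu1.1).1 k

lemma Ker.summ (K : Ker lam s C S) {u v : ℤ → ℂ} (hu : InHs s u) (hv : InHs s v) (k : ℤ) :
    Summable fun n => S (-k) (k - n) n * u (k - n) * v n :=
  Summable.of_norm_bounded ((K.aux_summ hu hv k).mul_left C) (K.term_le u v k)

noncomputable def Ca (s C : ℝ) : ℝ := 2 * (C * 2 ^ s * Mconst s)

lemma Ker.Ca_nonneg (K : Ker lam s C S) : 0 ≤ Ca s C := by
  have := K.Cpos
  unfold Ca Mconst; positivity

lemma Ker.aHat_bound (K : Ker lam s C S) {u v : ℤ → ℂ} (hu : InHs s u) (hv : InHs s v) :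
    (Summable fun k => Wt s (aHat S u v) k ^ 2) ∧
      En s (aHat S u v) ≤ Ca s C ^ 2 * (En s u * En s v) := by
  have hs1 : 1 / 2 < s - 0 := by simpa using K.hs1
  have u1 := l1_bound hs1 hu
  have v1 := l1_bound hs1 hv
  simp only [Wt_zero, funext (Wt_zero u), funext (Wt_zero v), sub_zero] at u1 v1
  have y1 := young (Wt s u) (fun k => ‖v k‖) (Wt_nonneg s u) (fun _ => norm_nonneg _) hu.summ v1.1
  have y2 := young (Wt s v) (fun k => ‖u k‖) (Wt_nonneg s v) (fun _ => norm_nonneg _) hv.summ u1.1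
  have esw : ∀ k, ∑' n, Wt s v (k - n) * ‖u n‖ = ∑' n, ‖u (k - n)‖ * Wt s v n := by
    intro k
    have := (Equiv.subLeft k).tsum_eq (fun n => Wt s v (k - n) * ‖u n‖)
    simp only [Equiv.subLeft_apply, sub_sub_cancel] at this
    rw [← this]
    exact tsum_congr fun n => mul_comm _ _
  have ssw : ∀ k, Summable fun n => ‖u (k - n)‖ * Wt s v n := by
    intro k
    have := (Equiv.subLeft k).summable_iff (f := fun n => Wt s v (k - n) * ‖u n‖) |>.2 (y2.1 k)
    simp only [Function.comp_def, Equiv.subLeft_apply, sub_sub_cancel] at this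
    exact this.congr fun n => mul_comm _ _
  have hD : 0 ≤ C * 2 ^ s := by have := K.Cpos; positivity
  have pt : ∀ k, Wt s (aHat S u v) k ≤
      C * 2 ^ s * ((∑' n, Wt s u (k - n) * ‖v n‖) + ∑' n, Wt s v (k - n) * ‖u n‖) := by
    intro k
    rw [esw k, ← (y1.1 k).tsum_add (ssw k), ← tsum_mul_left]
    unfold Wt aHat
    rw [show |(k : ℝ)| ^ s = ‖((|(k : ℝ)| ^ s : ℝ) : ℂ)‖ by
      rw [Complex.norm_real, Real.norm_of_nonneg (by positivity)], ← norm_mul, ← tsum_mul_left]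
    refine tsum_of_norm_bounded (Summable.hasSum (((y1.1 k).add (ssw k)).mul_left _)) fun n => ?_
    rw [norm_mul, Complex.norm_real, Real.norm_of_nonneg (by positivity)]
    calc _ ≤ (2 ^ s * (|((k - n : ℤ) : ℝ)| ^ s + |(n : ℝ)| ^ s)) * (C * (‖u (k - n)‖ * ‖v n‖)) :=
          mul_le_mul (pow_split K.s_pos.le k n) (K.term_le u v k n) (norm_nonneg _) (by positivity)
      _ = _ := by ring
  have pt2 : ∀ k, Wt s (aHat S u v) k ^ 2 ≤ 2 * (C * 2 ^ s) ^ 2 *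
      ((∑' n, Wt s u (k - n) * ‖v n‖) ^ 2 + (∑' n, Wt s v (k - n) * ‖u n‖) ^ 2) := by
    intro k
    calc _ ≤ _ := pow_le_pow_left₀ (Wt_nonneg _ _ _) (pt k) 2
      _ ≤ _ := by
        rw [mul_pow]
        nlinarith [sq_nonneg (C * 2 ^ s), sq_nonneg ((∑' n, Wt s u (k - n) * ‖v n‖) -
          ∑' n, Wt s v (k - n) * ‖u n‖), mul_nonneg (sq_nonneg (C * 2 ^ s)) (sq_nonneg ((∑' n, Wt s u (k - n) * ‖v n‖) -
          ∑' n, Wt s v (k - n) * ‖u n‖))]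
  have sm := (y1.2.1.add y2.2.1).mul_left (2 * (C * 2 ^ s) ^ 2)
  have s0 := Summable.of_nonneg_of_le (fun _ => sq_nonneg _) pt2 sm
  refine ⟨s0, ?_⟩
  have hM : 0 ≤ Mconst s := by unfold Mconst; positivity
  have q1 : (∑' k, ‖v k‖) ^ 2 ≤ Mconst s ^ 2 * En s v := by
    calc _ ≤ _ := pow_le_pow_left₀ (tsum_nonneg fun _ => norm_nonneg _) v1.2 2
      _ = _ := by rw [mul_pow, Real.sq_sqrt (En_nonneg _ _)]
  have q2 : (∑' k, ‖u k‖) ^ 2 ≤ Mconst s ^ 2 * En s u := by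
    calc _ ≤ _ := pow_le_pow_left₀ (tsum_nonneg fun _ => norm_nonneg _) u1.2 2
      _ = _ := by rw [mul_pow, Real.sq_sqrt (En_nonneg _ _)]
  calc En s (aHat S u v) ≤ _ := Summable.tsum_le_tsum pt2 s0 sm
    _ = 2 * (C * 2 ^ s) ^ 2 * ((∑' k, (∑' n, Wt s u (k - n) * ‖v n‖) ^ 2) +
          ∑' k, (∑' n, Wt s v (k - n) * ‖u n‖) ^ 2) := by
        rw [tsum_mul_left, y1.2.1.tsum_add y2.2.1]
    _ ≤ 2 * (C * 2 ^ s) ^ 2 * (En s u * (Mconst s ^ 2 * En s v) +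
          En s v * (Mconst s ^ 2 * En s u)) := by
        apply mul_le_mul_of_nonneg_left _ (by positivity)
        exact add_le_add (y1.2.2.trans (mul_le_mul_of_nonneg_left q1 (En_nonneg _ _)))
          (y2.2.2.trans (mul_le_mul_of_nonneg_left q2 (En_nonneg _ _)))
    _ = _ := by unfold Ca; ring

lemma Ker.aHat_conj (K : Ker lam s C S) {u v : ℤ → ℂ} (hu : InHs s u) (hv : InHs s v) (k : ℤ) :
    aHat S u v (-k) = starRingEnd ℂ (aHat S u v k) := by
  unfold aHat
  rw [Complex.conj_tsum, ← (Equiv.neg ℤ).tsum_eq]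
  refine tsum_congr fun n => ?_
  simp only [Equiv.neg_apply, map_mul]
  rw [show -k - -n = -(k - n) by ring, hu.2.1, hv.2.1, neg_neg]
  rw [K.hreal k]
  simp

lemma Ker.aHat_comm (K : Ker lam s C S) (u v : ℤ → ℂ) (k : ℤ) : aHat S u v k = aHat S v u k := by
  unfold aHat
  rw [← (Equiv.subLeft k).tsum_eq]
  refine tsum_congr fun n => ?_
  simp only [Equiv.subLeft_apply, sub_sub_cancel]
  rw [K.hsym]; ring

lemma Ker.aHat_diff (K : Ker lam s C S) {u v : ℤ → ℂ} (hu : InHs s u) (hv : InHs s v) (k : ℤ) :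
    aHat S u u k - aHat S v v k = aHat S (fun k => u k - v k) (fun k => u k + v k) k := by
  have h1 : aHat S (fun k => u k - v k) (fun k => u k + v k) k =
      (aHat S u u k + aHat S u v k) - (aHat S v u k + aHat S v v k) := by
    unfold aHat
    rw [← (K.summ hu hu k).tsum_add (K.summ hu hv k), ← (K.summ hv hu k).tsum_add (K.summ hv hv k),
      ← ((K.summ hu hu k).add (K.summ hu hv k)).tsum_sub ((K.summ hv hu k).add (K.summ hv hv k))]
    exact tsum_congr fun n => by ring
  rw [h1, K.aHat_comm v u]; ring

lemma Ker.aHat_zero (K : Ker lam s C S) (u v : ℤ → ℂ) : aHat S u v 0 = 0 := by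
  unfold aHat
  rw [← tsum_zero (α := ℂ) (β := ℤ)]
  refine tsum_congr fun n => ?_
  rw [K.h0 _ _ _ (by simp)]; simp

lemma Ker.aHat_inHs (K : Ker lam s C S) {u v : ℤ → ℂ} (hu : InHs s u) (hv : InHs s v) :
    InHs s (aHat S u v) :=
  inHs_of (K.aHat_zero u v) (K.aHat_conj hu hv) (K.aHat_bound hu hv).1

/-- derivative field -/
noncomputable def Fld (S : ℤ → ℤ → ℤ → ℂ) (u : ℤ → ℂ) (k : ℤ) : ℂ :=
  -(Complex.I * (k : ℂ) * aHat S u u k)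

lemma Wt_deriv (a : ℤ → ℂ) (h0 : a 0 = 0) (k : ℤ) :
    Wt (s - 1) (fun k => -(Complex.I * (k : ℂ) * a k)) k = Wt s a k := by
  unfold Wt
  rcases eq_or_ne k 0 with rfl | hk
  · simp [h0]
  · have : 0 < |(k : ℝ)| := lt_of_lt_of_le one_pos (one_le_abs_int hk)
    rw [norm_neg, norm_mul, norm_mul, Complex.norm_I, one_mul, ← mul_assoc, Complex.norm_intCast]
    congr 1
    rw [Real.rpow_sub_one this.ne', div_mul_cancel₀ _ this.ne']

lemma Ker.deriv_inHs (K : Ker lam s C S) {u : ℤ → ℂ} (hu : InHs s u) :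
    InHs (s - 1) (Fld S u) := by
  refine inHs_of (by simp [Fld]) (fun k => ?_) ?_
  · simp only [Fld, K.aHat_conj hu hu]; simp
  · unfold Fld
    simp only [Wt_deriv _ (K.aHat_zero u u)]
    exact (K.aHat_bound hu hu).1

/-- weak bilinear bound on a coefficient -/
lemma Ker.aHat_weak (K : Ker lam s C S) {w z : ℤ → ℂ} (hw : InHs s w) (hz : InHs s z) (k : ℤ) :
    ‖aHat S w z k‖ ≤ C * (1 + |(k : ℝ)|) * (Real.sqrt (En (s - 1) w) * Real.sqrt (En s z)) := by
  have hw1 := (hw.mono (ρ := s - 1) (by linarith)).summ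
  have h1 : Summable fun n => Wt (s - 1) w (k - n) ^ 2 :=
    (Equiv.subLeft k).summable_iff (f := fun n => Wt (s - 1) w n ^ 2) |>.2 hw1
  have h2 : ∑' n, Wt (s - 1) w (k - n) ^ 2 = En (s - 1) w :=
    (Equiv.subLeft k).tsum_eq (fun n => Wt (s - 1) w n ^ 2)
  have h := cs_aux (fun n => Wt (s - 1) w (k - n)) (Wt s z) (fun _ => Wt_nonneg _ _ _)
    (Wt_nonneg s z) h1 hz.summ
  rw [h2] at h
  have hC : 0 ≤ C * (1 + |(k : ℝ)|) := by have := K.Cpos; positivity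
  refine le_trans ?_ (mul_le_mul_of_nonneg_left h.2 hC)
  rw [← tsum_mul_left]
  refine tsum_of_norm_bounded (h.1.mul_left _).hasSum fun n => ?_
  refine (K.term_le w z k n).trans ?_
  rw [mul_assoc]
  refine mul_le_mul_of_nonneg_left ?_ K.Cpos.le
  rcases eq_or_ne n 0 with rfl | hn
  · simp [hz.1, Wt]
  rcases eq_or_ne (k - n) 0 with hm | hm
  · simp [hm, hw.1, Wt]
  have m1 := one_le_abs_int hm
  have n1 := one_le_abs_int hn
  set m := k - n with hmdef
  have hmn : |(m : ℝ)| ≤ (1 + |(k : ℝ)|) * |(n : ℝ)| := by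
    have : |(m : ℝ)| ≤ |(k : ℝ)| + |(n : ℝ)| := by
      rw [hmdef]; push_cast; exact abs_sub _ _
    nlinarith [abs_nonneg (k : ℝ)]
  have key : 1 ≤ (1 + |(k : ℝ)|) * (|(m : ℝ)| ^ (s - 1) * |(n : ℝ)| ^ s) := by
    have hk1 : (1 : ℝ) ≤ 1 + |(k : ℝ)| := by linarith [abs_nonneg (k : ℝ)]
    have hns : 1 ≤ |(n : ℝ)| ^ s := Real.one_le_rpow n1 K.s_pos.le
    rcases le_or_gt 1 s with h1s | h1s
    · have : 1 ≤ |(m : ℝ)| ^ (s - 1) := Real.one_le_rpow m1 (by linarith)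
      exact one_le_mul_of_one_le_of_one_le hk1 (one_le_mul_of_one_le_of_one_le this hns)
    · have mp : 0 < |(m : ℝ)| := by linarith
      have np : 0 < |(n : ℝ)| := by linarith
      have a1 : |(m : ℝ)| ^ (1 - s) ≤ (1 + |(k : ℝ)|) * |(n : ℝ)| ^ s := by
        calc |(m : ℝ)| ^ (1 - s) ≤ ((1 + |(k : ℝ)|) * |(n : ℝ)|) ^ (1 - s) :=
              Real.rpow_le_rpow mp.le hmn (by linarith)
          _ = (1 + |(k : ℝ)|) ^ (1 - s) * |(n : ℝ)| ^ (1 - s) := Real.mul_rpow (by linarith) np.le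
          _ ≤ _ := by
            refine mul_le_mul ?_ (Real.rpow_le_rpow_of_exponent_le n1 (by linarith [K.hs1]))
              (by positivity) (by linarith)
            calc _ ≤ (1 + |(k : ℝ)|) ^ (1 : ℝ) :=
                  Real.rpow_le_rpow_of_exponent_le hk1 (by linarith [K.s_pos])
              _ = _ := Real.rpow_one _
      have a2 : |(m : ℝ)| ^ (s - 1) * |(m : ℝ)| ^ (1 - s) = 1 := by
        rw [← Real.rpow_add mp]; simp
      have a3 : 0 ≤ |(m : ℝ)| ^ (s - 1) := by positivity
      calc (1 : ℝ) = |(m : ℝ)| ^ (s - 1) * |(m : ℝ)| ^ (1 - s) := a2.symm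
        _ ≤ |(m : ℝ)| ^ (s - 1) * ((1 + |(k : ℝ)|) * |(n : ℝ)| ^ s) :=
          mul_le_mul_of_nonneg_left a1 a3
        _ = _ := by ring
  unfold Wt
  calc ‖w m‖ * ‖z n‖ = 1 * (‖w m‖ * ‖z n‖) := (one_mul _).symm
    _ ≤ _ * (‖w m‖ * ‖z n‖) := mul_le_mul_of_nonneg_right key (by positivity)
    _ = _ := by ring

end


/-- the odd multiplier `x |x|^(2ρ)` -/
noncomputable def Pm (ρ x : ℝ) : ℝ := x * |x| ^ (2 * ρ)

lemma Pm_neg (ρ x : ℝ) : Pm ρ (-x) = - Pm ρ x := by unfold Pm; simp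

lemma abs_Pm (ρ x : ℝ) (hx : x ≠ 0) : |Pm ρ x| = |x| ^ (2 * ρ + 1) := by
  unfold Pm
  rw [abs_mul, abs_of_nonneg (Real.rpow_nonneg (abs_nonneg x) _), mul_comm,
    Real.rpow_add_one (abs_pos.2 hx).ne']

noncomputable def Cc (s : ℝ) : ℝ := (2 * s - 1) * 2 ^ (2 * s - 1) * 2 ^ |s - 1| + 2 * 2 ^ s

lemma Pm_core {s : ℝ} (hs : 1 / 2 < s) {a b : ℝ} (hb : 0 < b) (hab : b ≤ a) (ha2 : a ≤ 2 * b) :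
    |Pm (s - 1) a - Pm (s - 1) b| ≤ Cc s * ((a - b) * (a ^ (s - 1) * b ^ (s - 1))) := by
  have ha : 0 < a := by linarith
  set q := 2 * s - 1 with hq
  have hq0 : 0 < q := by linarith
  have e : ∀ x : ℝ, 0 < x → Pm (s - 1) x = x ^ q := by
    intro x hx
    unfold Pm
    rw [abs_of_pos hx, mul_comm, ← Real.rpow_add_one hx.ne']
    congr 1; rw [hq]; ring
  rw [e a ha, e b hb, abs_of_nonneg (sub_nonneg.2 (Real.rpow_le_rpow hb.le hab hq0.le))]
  -- x = a / b
  set x := a / b with hx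
  have hx1 : 1 ≤ x := by rw [hx, le_div_iff₀ hb]; linarith
  have hx2 : x ≤ 2 := by rw [hx, div_le_iff₀ hb]; linarith
  have hx0 : 0 < x := by linarith
  have hax : a = x * b := by rw [hx]; field_simp
  have h1 : x ^ q - 1 ≤ q * (x - 1) * 2 ^ q := by
    have hl : Real.log x ≤ x - 1 := Real.log_le_sub_one_of_pos hx0
    have hl0 : 0 ≤ Real.log x := Real.log_nonneg hx1
    have hexp : x ^ q = Real.exp (Real.log x * q) := Real.rpow_def_of_pos hx0 q
    have h2 : 1 - Real.log x * q ≤ Real.exp (-(Real.log x * q)) := by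
      have := Real.add_one_le_exp (-(Real.log x * q)); linarith
    have h3 : Real.exp (-(Real.log x * q)) * x ^ q = 1 := by
      rw [hexp, ← Real.exp_add]; simp
    have h4 : x ^ q ≤ 2 ^ q := Real.rpow_le_rpow hx0.le hx2 hq0.le
    have h5 : 0 < x ^ q := by positivity
    have h6 : x ^ q - 1 ≤ Real.log x * q * x ^ q := by nlinarith
    calc x ^ q - 1 ≤ Real.log x * q * x ^ q := h6
      _ ≤ ((x - 1) * q) * 2 ^ q := by
          apply mul_le_mul _ h4 h5.le (mul_nonneg (by linarith) hq0.le)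
          exact mul_le_mul_of_nonneg_right hl hq0.le
      _ = _ := by ring
  have h2 : b ^ (s - 1) ≤ 2 ^ |s - 1| * a ^ (s - 1) := by
    rw [hax, Real.mul_rpow hx0.le hb.le, ← mul_assoc]
    have : 1 ≤ 2 ^ |s - 1| * x ^ (s - 1) := by
      rcases le_or_gt 0 (s - 1) with h | h
      · have a1 : 1 ≤ (2 : ℝ) ^ |s - 1| := Real.one_le_rpow (by norm_num) (abs_nonneg _)
        have a2 : 1 ≤ x ^ (s - 1) := Real.one_le_rpow hx1 h
        exact one_le_mul_of_one_le_of_one_le a1 a2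
      · rw [abs_of_neg h]
        have a1 : (2 : ℝ) ^ (s - 1) ≤ x ^ (s - 1) := Real.rpow_le_rpow_of_nonpos hx0 hx2 h.le
        calc (1 : ℝ) = 2 ^ (-(s - 1)) * 2 ^ (s - 1) := by
              rw [← Real.rpow_add (by norm_num)]; simp
          _ ≤ _ := mul_le_mul_of_nonneg_left a1 (by positivity)
    calc b ^ (s - 1) = 1 * b ^ (s - 1) := (one_mul _).symm
      _ ≤ _ := mul_le_mul_of_nonneg_right this (by positivity)
  have h3 : b ^ q = b * (b ^ (s - 1) * b ^ (s - 1)) := by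
    rw [← Real.rpow_add hb, mul_comm, ← Real.rpow_add_one hb.ne']; congr 1; rw [hq]; ring
  have h4 : a ^ q - b ^ q = (x ^ q - 1) * b ^ q := by
    rw [hax, Real.mul_rpow hx0.le hb.le]; ring
  have h5 : (x - 1) * b = a - b := by rw [hax]; ring
  have hbs : 0 < b ^ (s - 1) := by positivity
  have hab0 : 0 ≤ a - b := by linarith
  calc a ^ q - b ^ q = (x ^ q - 1) * b ^ q := h4
    _ ≤ (q * (x - 1) * 2 ^ q) * b ^ q := mul_le_mul_of_nonneg_right h1 (by positivity)
    _ = (q * 2 ^ q) * ((a - b) * (b ^ (s - 1) * b ^ (s - 1))) := by rw [h3, ← h5]; ring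
    _ ≤ (q * 2 ^ q) * ((a - b) * ((2 ^ |s - 1| * a ^ (s - 1)) * b ^ (s - 1))) := by gcongr
    _ = (q * 2 ^ q * 2 ^ |s - 1|) * ((a - b) * (a ^ (s - 1) * b ^ (s - 1))) := by ring
    _ ≤ _ := by
        apply mul_le_mul_of_nonneg_right _ (by positivity)
        unfold Cc
        have : 0 ≤ 2 * (2 : ℝ) ^ s := by positivity
        linarith

lemma Cc_nonneg {s : ℝ} (hs : 1 / 2 < s) : 0 ≤ Cc s := by
  unfold Cc
  have : 0 ≤ 2 * s - 1 := by linarith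
  positivity

/-- case where `n` is the smallest -/
lemma pw_small {s : ℝ} (hs : 1 / 2 < s) {k m n : ℝ} (hk : k ≠ 0) (hm : m ≠ 0)
    (h : k + m + n = 0) (h1 : |n| ≤ |k|) (h2 : |n| ≤ |m|) (hn : n ≠ 0) :
    |Pm (s - 1) k + Pm (s - 1) m| ≤ Cc s * (|n| * (|k| ^ (s - 1) * |m| ^ (s - 1))) := by
  -- reduce to |m| ≤ |k|
  have main : ∀ k m : ℝ, k ≠ 0 → m ≠ 0 → k + m + n = 0 → |n| ≤ |k| → |n| ≤ |m| → |m| ≤ |k| →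
      |Pm (s - 1) k + Pm (s - 1) m| ≤ Cc s * (|n| * (|k| ^ (s - 1) * |m| ^ (s - 1))) := by
    intro k m hk hm h h1 h2 h3
    rcases lt_or_gt_of_ne hk with k0 | k0 <;> rcases lt_or_gt_of_ne hm with m0 | m0
    · exfalso
      have : |n| = -k - m := by rw [show n = -k - m by linarith, abs_of_pos]; linarith
      rw [abs_of_neg m0] at h2; rw [abs_of_neg k0] at h1; linarith
    · rw [abs_of_neg k0, abs_of_pos m0] at *
      have hn' : |n| = -k - m := by rw [show n = -k - m by linarith, abs_of_nonneg]; linarith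
      have := Pm_core hs m0 h3 (by linarith)
      rw [hn']
      rwa [Pm_neg, ← neg_add', abs_neg] at this
    · rw [abs_of_pos k0, abs_of_neg m0] at *
      have hn' : |n| = k - -m := by
        rw [show n = -(k - -m) by linarith, abs_neg, abs_of_nonneg]; linarith
      have := Pm_core hs (by linarith : 0 < -m) h3 (by linarith)
      rw [hn']
      rwa [Pm_neg, sub_neg_eq_add] at this
    · exfalso
      have : |n| = k + m := by rw [show n = -(k + m) by linarith, abs_neg, abs_of_pos]; linarith
      rw [abs_of_pos m0] at h2; rw [abs_of_pos k0] at h1; linarith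
  rcases le_total |m| |k| with h3 | h3
  · exact main k m hk hm h h1 h2 h3
  · have := main m k hm hk (by linarith) h2 h1 h3
    rw [add_comm, mul_comm (|k| ^ (s - 1))]; exact this

/-- case where `k` is the smallest -/
lemma pw_large {s : ℝ} (hs : 1 / 2 < s) {k m n : ℝ} (hk : k ≠ 0) (hm : m ≠ 0)
    (h : k + m + n = 0) (h1 : |k| ≤ |m|) (h2 : |k| ≤ |n|) :
    |Pm (s - 1) k + Pm (s - 1) m| ≤ Cc s * (|m| ^ (s - 1) * |n| ^ s) := by
  have mp : 0 < |m| := abs_pos.2 hm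
  have kp : 0 < |k| := abs_pos.2 hk
  have hmn : |m| ≤ 2 * |n| := by
    have : |m| ≤ |k| + |n| := by
      rw [show m = -(k + n) by linarith, abs_neg]; exact abs_add_le _ _
    linarith
  have e1 : |Pm (s - 1) k| ≤ |m| ^ (2 * (s - 1) + 1) := by
    rw [abs_Pm _ _ hk]
    exact Real.rpow_le_rpow kp.le h1 (by linarith)
  have e2 : |Pm (s - 1) m| = |m| ^ (2 * (s - 1) + 1) := abs_Pm _ _ hm
  have e3 : |m| ^ (2 * (s - 1) + 1) = |m| ^ (s - 1) * |m| ^ s := by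
    rw [← Real.rpow_add mp]; congr 1; ring
  have e4 : |m| ^ s ≤ 2 ^ s * |n| ^ s := by
    rw [← Real.mul_rpow (by norm_num) (abs_nonneg _)]
    exact Real.rpow_le_rpow mp.le hmn (by linarith)
  calc |Pm (s - 1) k + Pm (s - 1) m| ≤ |Pm (s - 1) k| + |Pm (s - 1) m| := abs_add_le _ _
    _ ≤ 2 * (|m| ^ (s - 1) * |m| ^ s) := by rw [← e3]; linarith
    _ ≤ 2 * (|m| ^ (s - 1) * (2 ^ s * |n| ^ s)) := by gcongr
    _ = 2 * 2 ^ s * (|m| ^ (s - 1) * |n| ^ s) := by ring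
    _ ≤ _ := by
        apply mul_le_mul_of_nonneg_right _ (by positivity)
        unfold Cc
        have : 0 ≤ 2 * s - 1 := by linarith
        have : 0 ≤ (2 * s - 1) * 2 ^ (2 * s - 1) * (2 : ℝ) ^ |s - 1| := by positivity
        linarith

lemma pw {s lam : ℝ} (hs : 1 / 2 < s) (hl : 0 < lam) {k m n : ℝ} (hk : k ≠ 0) (hm : m ≠ 0)
    (hn : n ≠ 0) (h : k + m + n = 0) :
    |Pm (s - 1) k + Pm (s - 1) m| / min (|k| ^ lam) (min (|m| ^ lam) (|n| ^ lam)) ≤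
      Cc s * (|k| ^ (s - 1) * |m| ^ (s - 1) * |n| ^ (1 - lam) +
        |m| ^ (s - 1) * |n| ^ s * |k| ^ (-lam) + |k| ^ (s - 1) * |n| ^ s * |m| ^ (-lam)) := by
  have kp : 0 < |k| := abs_pos.2 hk
  have mp : 0 < |m| := abs_pos.2 hm
  have np : 0 < |n| := abs_pos.2 hn
  have hc := Cc_nonneg hs
  have t1 : 0 ≤ |k| ^ (s - 1) * |m| ^ (s - 1) * |n| ^ (1 - lam) := by positivity
  have t2 : 0 ≤ |m| ^ (s - 1) * |n| ^ s * |k| ^ (-lam) := by positivity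
  have t3 : 0 ≤ |k| ^ (s - 1) * |n| ^ s * |m| ^ (-lam) := by positivity
  have mono : ∀ x y : ℝ, 0 < x → x ≤ y → x ^ lam ≤ y ^ lam := fun x y hx hxy =>
    Real.rpow_le_rpow hx.le hxy hl.le
  have fin : ∀ X Y x : ℝ, 0 < x → X ≤ Cc s * Y → X / x ^ lam ≤ Cc s * (Y * x ^ (-lam)) := by
    intro X Y x hx hXY
    rw [Real.rpow_neg hx.le, ← mul_assoc, ← div_eq_mul_inv]
    exact div_le_div_of_nonneg_right hXY (by positivity)
  by_cases c1 : |n| ≤ |k| ∧ |n| ≤ |m|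
  · have := fin _ _ _ np (pw_small hs hk hm h c1.1 c1.2 hn)
    rw [min_eq_right (mono _ _ np c1.2), min_eq_right (mono _ _ np c1.1)]
    refine this.trans (mul_le_mul_of_nonneg_left ?_ hc)
    have e : |n| ^ (1 - lam) = |n| * |n| ^ (-lam) := by
      rw [mul_comm, ← Real.rpow_add_one np.ne']; congr 1; ring
    have : |n| * (|k| ^ (s - 1) * |m| ^ (s - 1)) * |n| ^ (-lam) =
      |k| ^ (s - 1) * |m| ^ (s - 1) * |n| ^ (1 - lam) := by rw [e]; ring
    linarith
  · by_cases c2 : |k| ≤ |m|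
    · have c3 : |k| ≤ |n| := by
        by_contra hcon
        exact c1 ⟨by linarith, by linarith⟩
      have := fin _ _ _ kp (pw_large hs hk hm h c2 c3)
      rw [min_eq_left (le_min (mono _ _ kp c2) (mono _ _ kp c3))]
      refine this.trans (mul_le_mul_of_nonneg_left ?_ hc)
      linarith
    · have c3 : |m| ≤ |n| := by
        by_contra hcon
        exact c1 ⟨by linarith, by linarith⟩
      have c2' : |m| ≤ |k| := by linarith
      have := fin _ _ _ mp (pw_large hs hm hk (by linarith) c2' c3)
      rw [min_eq_left (mono _ _ mp c3), min_eq_right (mono _ _ mp c2'), add_comm (Pm (s - 1) k)]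
      refine this.trans (mul_le_mul_of_nonneg_left ?_ hc)
      linarith

section
variable {lam s C : ℝ} {S : ℤ → ℤ → ℤ → ℂ}

/-- trilinear term -/
noncomputable def Tt (S : ℤ → ℤ → ℤ → ℂ) (ρ : ℝ) (w z : ℤ → ℂ) (p : ℤ × ℤ) : ℂ :=
  (Pm ρ p.1 : ℂ) * (w (-p.1) * (S (-p.1) (p.1 - p.2) p.2 * w (p.1 - p.2) * z p.2))

lemma Ker.Tt_summ (K : Ker lam s C S) {w z : ℤ → ℂ} (hw : InHs s w) (hz : InHs s z) :
    Summable (Tt S (s - 1) w z) := by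
  have hs1 : 1 / 2 < s - 0 := by simpa using K.hs1
  have w1 := l1_bound hs1 hw
  have z1 := l1_bound hs1 hz
  have h1 := (tri1 (Wt s w) (Wt s w) (Wt 0 z) (Wt_nonneg _ _) (Wt_nonneg _ _) (Wt_nonneg _ _)
    hw.summ hw.summ z1.1).1
  have h2 := (tri2 (Wt s w) (Wt s z) (Wt 0 w) (Wt_nonneg _ _) (Wt_nonneg _ _) (Wt_nonneg _ _)
    hw.summ hz.summ w1.1).1
  refine Summable.of_norm_bounded ((h1.add h2).mul_left (C * 2 ^ s)) ?_
  rintro ⟨k, n⟩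
  unfold Tt
  simp only
  rcases eq_or_ne k 0 with rfl | hk
  · simp only [Int.cast_zero, Pm, zero_mul, Complex.ofReal_zero, norm_zero]
    have := K.Cpos
    have q := Wt_nonneg
    exact mul_nonneg (by positivity) (add_nonneg (mul_nonneg (mul_nonneg (q _ _ _) (q _ _ _)) (q _ _ _))
      (mul_nonneg (mul_nonneg (q _ _ _) (q _ _ _)) (q _ _ _)))
  have k1 := one_le_abs_int hk
  have hk' : (k : ℝ) ≠ 0 := by exact_mod_cast hk
  rw [norm_mul, norm_mul, Complex.norm_real, Real.norm_eq_abs, abs_Pm _ _ hk', hw.neg_norm]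
  have e : |(k : ℝ)| ^ (2 * (s - 1) + 1) ≤ |(k : ℝ)| ^ s * (2 ^ s * (|((k - n : ℤ) : ℝ)| ^ s + |(n : ℝ)| ^ s)) := by
    calc _ ≤ |(k : ℝ)| ^ (s + s) := Real.rpow_le_rpow_of_exponent_le k1 (by linarith)
      _ = |(k : ℝ)| ^ s * |(k : ℝ)| ^ s := Real.rpow_add (by linarith) _ _
      _ ≤ _ := mul_le_mul_of_nonneg_left (pow_split K.s_pos.le k n) (by positivity)
  calc _ ≤ (|(k : ℝ)| ^ s * (2 ^ s * (|((k - n : ℤ) : ℝ)| ^ s + |(n : ℝ)| ^ s))) *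
        (‖w k‖ * (C * (‖w (k - n)‖ * ‖z n‖))) := by
        apply mul_le_mul e _ (by positivity) (by positivity)
        exact mul_le_mul_of_nonneg_left (K.term_le w z k n) (norm_nonneg _)
    _ = _ := by simp only [Wt_zero]; unfold Wt; ring

lemma Ker.hflip (K : Ker lam s C S) (k m n : ℤ) : S k m n = S m k n := by
  rw [K.hcyc, K.hsym]

lemma Ker.pair_bound (K : Ker lam s C S) {w z : ℤ → ℂ} (hw : InHs s w) (hz : InHs s z) :
    ‖∑' p, Tt S (s - 1) w z p‖ ≤ 2 * (C * Cc s * Mconst (s + lam - 1)) *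
      (En (s - 1) w * Real.sqrt (En s z)) := by
  have hT := K.Tt_summ hw hz
  have hflip : ∑' p, Tt S (s - 1) w z p = ∑' p, Tt S (s - 1) w z (eFlip p) :=
    (eFlip.tsum_eq _).symm
  have hT2 : Summable fun p => Tt S (s - 1) w z (eFlip p) := eFlip.summable_iff.2 hT
  have h2 : (2 : ℂ) * ∑' p, Tt S (s - 1) w z p =
      ∑' p, (Tt S (s - 1) w z p + Tt S (s - 1) w z (eFlip p)) := by
    rw [hT.tsum_add hT2, ← hflip]; ring
  have hw' : InHs (s - 1) w := hw.mono (by linarith)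
  have z1 := l1_bound (s := s) (ρ := 1 - lam) (by linarith [K.hs2]) hz
  have w1 := l1_bound (s := s - 1) (ρ := -lam) (by linarith [K.hs2]) hw'
  have q := Wt_nonneg
  have h1 := tri1 (Wt (s - 1) w) (Wt (s - 1) w) (Wt (1 - lam) z) (q _ _) (q _ _) (q _ _)
    hw'.summ hw'.summ z1.1
  have h3 := tri3 (Wt (s - 1) w) (Wt s z) (Wt (-lam) w) (q _ _) (q _ _) (q _ _)
    (hw.Wt_neg _) (hw.Wt_neg _) hw'.summ hz.summ w1.1
  have h4 := tri2 (Wt (s - 1) w) (Wt s z) (Wt (-lam) w) (q _ _) (q _ _) (q _ _)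
    hw'.summ hz.summ w1.1
  have pt : ∀ p : ℤ × ℤ, ‖Tt S (s - 1) w z p + Tt S (s - 1) w z (eFlip p)‖ ≤
      (C * Cc s) * ((Wt (s - 1) w p.1 * Wt (s - 1) w (p.1 - p.2) * Wt (1 - lam) z p.2 +
        Wt (s - 1) w (p.1 - p.2) * Wt s z p.2 * Wt (-lam) w p.1) +
        Wt (s - 1) w p.1 * Wt s z p.2 * Wt (-lam) w (p.1 - p.2)) := by
    rintro ⟨k, n⟩
    have e : Tt S (s - 1) w z (k, n) + Tt S (s - 1) w z (eFlip (k, n)) =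
        ((Pm (s - 1) k + Pm (s - 1) (n - k) : ℝ) : ℂ) *
          (S (-k) (k - n) n * (w (-k) * w (k - n) * z n)) := by
      simp only [Tt, eFlip, Equiv.coe_fn_mk]
      rw [show -(n - k) = k - n by ring, show n - k - n = -k by ring, K.hflip (k - n) (-k) n]
      push_cast
      ring
    rw [e]
    simp only
    have rhs : 0 ≤ (C * Cc s) * ((Wt (s - 1) w k * Wt (s - 1) w (k - n) * Wt (1 - lam) z n +
        Wt (s - 1) w (k - n) * Wt s z n * Wt (-lam) w k) +
        Wt (s - 1) w k * Wt s z n * Wt (-lam) w (k - n)) :=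
      mul_nonneg (mul_nonneg K.Cpos.le (Cc_nonneg K.hs1)) (add_nonneg (add_nonneg
        (mul_nonneg (mul_nonneg (q _ _ _) (q _ _ _)) (q _ _ _))
        (mul_nonneg (mul_nonneg (q _ _ _) (q _ _ _)) (q _ _ _)))
        (mul_nonneg (mul_nonneg (q _ _ _) (q _ _ _)) (q _ _ _)))
    by_cases h0 : -k * (k - n) * n = 0
    · rw [K.h0 _ _ _ h0]; simpa using rhs
    have hk : k ≠ 0 := by rintro rfl; simp at h0
    have hn : n ≠ 0 := by rintro rfl; simp at h0
    have hm : k - n ≠ 0 := by intro h; simp [h] at h0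
    have hp := pw (lam := lam) K.hs1 K.lpos (k := (k : ℝ)) (m := (n : ℝ) - k) (n := -(n : ℝ))
      (by exact_mod_cast hk) (by intro h; apply hm; have : (n : ℝ) = k := by linarith
                                 have : n = k := by exact_mod_cast this
                                 omega)
      (by simpa using hn) (by ring)
    have hb := K.hb _ _ _ h0
    have ab : |(n : ℝ) - k| = |((k - n : ℤ) : ℝ)| := by rw [abs_sub_comm]; push_cast; rfl
    rw [ab, abs_neg] at hp
    have ab2 : |((-k : ℤ) : ℝ)| = |(k : ℝ)| := by push_cast; exact abs_neg _
    rw [ab2] at hb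
    set mn := min (|(k : ℝ)| ^ lam) (min (|((k - n : ℤ) : ℝ)| ^ lam) (|(n : ℝ)| ^ lam)) with hmn
    rw [norm_mul, norm_mul, norm_mul, norm_mul, hw.neg_norm, Complex.norm_real, Real.norm_eq_abs]
    set A := |Pm (s - 1) k + Pm (s - 1) (n - k)| with hA
    calc A * (‖S (-k) (k - n) n‖ * (‖w k‖ * ‖w (k - n)‖ * ‖z n‖))
        ≤ A * (C / mn * (‖w k‖ * ‖w (k - n)‖ * ‖z n‖)) := by gcongr
      _ = C * (A / mn) * (‖w k‖ * ‖w (k - n)‖ * ‖z n‖) := by ring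
      _ ≤ C * _ * (‖w k‖ * ‖w (k - n)‖ * ‖z n‖) :=
          mul_le_mul_of_nonneg_right (mul_le_mul_of_nonneg_left hp K.Cpos.le) (by positivity)
      _ = _ := by unfold Wt; ring
  have hS := (((h1.1.add h3.1).add h4.1).mul_left (C * Cc s))
  have := tsum_of_norm_bounded hS.hasSum pt
  rw [← h2, norm_mul, tsum_mul_left, (h1.1.add h3.1).tsum_add h4.1, h1.1.tsum_add h3.1] at this
  have eA : ∑' i, Wt (s - 1) w i ^ 2 = En (s - 1) w := rfl
  have eB : ∑' i, Wt s z i ^ 2 = En s z := rfl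
  rw [eA, eB] at h3 h4
  rw [eA, Real.mul_self_sqrt (En_nonneg _ _)] at h1
  rw [show s - (1 - lam) = s + lam - 1 by ring] at z1
  rw [show s - 1 - -lam = s + lam - 1 by ring] at w1
  set X := En (s - 1) w with hX
  set Y := Real.sqrt (En s z) with hY
  set M := Mconst (s + lam - 1)
  have X0 : 0 ≤ X := En_nonneg _ _
  have Y0 : 0 ≤ Y := Real.sqrt_nonneg _
  have b1 := h1.2.trans (mul_le_mul_of_nonneg_left z1.2 X0)
  have b3 := h3.2.trans (mul_le_mul_of_nonneg_left w1.2 (by positivity))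
  have b4 := h4.2.trans (mul_le_mul_of_nonneg_left w1.2 (by positivity))
  have e5 : √X * Y * (M * √X) = X * (M * Y) := by
    rw [show √X * Y * (M * √X) = (√X * √X) * (M * Y) by ring, Real.mul_self_sqrt X0]
  rw [e5] at b3 b4
  have hCC : 0 ≤ C * Cc s := mul_nonneg K.Cpos.le (Cc_nonneg K.hs1)
  have M0 : 0 ≤ M := Real.sqrt_nonneg _
  have fin := this.trans (mul_le_mul_of_nonneg_left (add_le_add (add_le_add b1 b3) b4) hCC)
  have n2 : ‖(2 : ℂ)‖ = 2 := by simp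
  rw [n2] at fin
  have : 0 ≤ C * Cc s * (X * (M * Y)) := by positivity
  nlinarith

lemma pair_eq {ρ : ℝ} {w z : ℤ → ℂ} (hT : Summable (Tt S ρ w z)) :
    (Summable fun k : ℤ => (Pm ρ k : ℂ) * (w (-k) * aHat S w z k)) ∧
    ∑' k : ℤ, (Pm ρ k : ℂ) * (w (-k) * aHat S w z k) = ∑' p, Tt S ρ w z p := by
  have e : ∀ k : ℤ, ∑' n, Tt S ρ w z (k, n) = (Pm ρ k : ℂ) * (w (-k) * aHat S w z k) := by
    intro k
    simp only [Tt]
    rw [tsum_mul_left, tsum_mul_left]; rfl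
  constructor
  · exact hT.prod.congr fun k => e k
  · rw [hT.tsum_prod]; exact tsum_congr fun k => (e k).symm
end


lemma gron_half {E E' : ℝ → ℝ} {T α β : ℝ} (hα : 0 < α) (hβ : 0 ≤ β)
    (hE : ∀ t, 0 ≤ E t) (h0 : E 0 = 0)
    (hd : ∀ t, 0 ≤ t → t ≤ T → HasDerivAt E (E' t) t)
    (hb : ∀ t, 0 ≤ t → t ≤ T → |E' t| ≤ α * E t + β) :
    ∀ t, 0 ≤ t → t ≤ T → E t ≤ β * (Real.exp (α * T) / α) := by
  intro t ht0 htT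
  have := norm_le_gronwallBound_of_norm_deriv_right_le (f := E) (f' := E') (δ := 0) (K := α)
    (ε := β) (a := 0) (b := T)
    (fun x hx => (hd x hx.1 hx.2).continuousAt.continuousWithinAt)
    (fun x hx => (hd x hx.1 hx.2.le).hasDerivWithinAt) (by simp [h0])
    (fun x hx => by
      rw [Real.norm_eq_abs, Real.norm_eq_abs, abs_of_nonneg (hE x)]
      exact hb x hx.1 hx.2.le) t ⟨ht0, htT⟩
  rw [Real.norm_eq_abs, abs_of_nonneg (hE t), gronwallBound_of_K_ne_0 hα.ne'] at this
  have e : Real.exp (α * t) ≤ Real.exp (α * T) := Real.exp_le_exp.2 (by nlinarith)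
  calc E t ≤ β / α * (Real.exp (α * t) - 1) := by simpa using this
    _ ≤ β / α * Real.exp (α * T) := by
        apply mul_le_mul_of_nonneg_left _ (by positivity); linarith
    _ = _ := by ring

lemma gron {E E' : ℝ → ℝ} {T α β : ℝ} (hα : 0 < α) (hβ : 0 ≤ β)
    (hE : ∀ t, 0 ≤ E t) (h0 : E 0 = 0)
    (hd : ∀ t, |t| ≤ T → HasDerivAt E (E' t) t)
    (hb : ∀ t, |t| ≤ T → |E' t| ≤ α * E t + β) :
    ∀ t, |t| ≤ T → E t ≤ β * (Real.exp (α * T) / α) := by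
  intro t ht
  rcases le_total 0 t with h | h
  · refine gron_half hα hβ hE h0 (fun t h0 hT => hd t (by rwa [abs_of_nonneg h0]))
      (fun t h0 hT => hb t (by rwa [abs_of_nonneg h0])) t h (by rwa [abs_of_nonneg h] at ht)
  · have := gron_half (E := fun t => E (-t)) (E' := fun t => - E' (-t)) (T := T) hα hβ
      (fun t => hE _) (by simpa using h0)
      (fun t h0 hT => by
        have := (hd (-t) (by rwa [abs_neg, abs_of_nonneg h0])).comp t (hasDerivAt_neg t)
        simpa [Function.comp_def] using this)
      (fun t h0 hT => by simpa using hb (-t) (by rwa [abs_neg, abs_of_nonneg h0])) (-t) (by linarith)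
      (by rwa [abs_of_nonpos h] at ht)
    simpa using this

lemma wsq_deriv (ρ : ℝ) (k : ℤ) {x : ℝ → ℂ} {a : ℂ} {t : ℝ}
    (h : HasDerivAt x (-(Complex.I * (k : ℂ) * a)) t) :
    HasDerivAt (fun τ => |(k : ℝ)| ^ (2 * ρ) * ‖x τ‖ ^ 2)
      (2 * ((Pm ρ k : ℂ) * (starRingEnd ℂ (x t) * a)).im) t := by
  refine (h.norm_sq.const_mul (|(k : ℝ)| ^ (2 * ρ))).congr_deriv ?_
  rw [Complex.inner, Pm]
  simp only [Complex.mul_im, Complex.mul_re, Complex.neg_re, Complex.neg_im, Complex.ofReal_re,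
    Complex.ofReal_im, Complex.conj_re, Complex.conj_im, Complex.I_re, Complex.I_im,
    Complex.intCast_re, Complex.intCast_im]
  ring

section
variable {lam s C : ℝ} {S : ℤ → ℤ → ℤ → ℂ}

/-- frequency window -/
noncomputable def Fw (N : ℕ) : Finset ℤ := Finset.Icc (-(N : ℤ)) N

lemma mem_Fw {N : ℕ} {k : ℤ} : k ∈ Fw N ↔ |k| ≤ N := by
  simp [Fw, abs_le]

lemma not_mem_Fw {N : ℕ} {k : ℤ} (h : k ∉ Fw N) : (N : ℝ) ≤ |(k : ℝ)| := by
  rw [mem_Fw, not_le] at h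
  have : ((N : ℤ) : ℝ) ≤ ((|k| : ℤ) : ℝ) := by exact_mod_cast h.le
  simpa using this

/-- An approximate solution. -/
def ApproxSol (S : ℤ → ℤ → ℤ → ℂ) (s : ℝ) (N : ℕ) (T B : ℝ) (u : ℝ → ℤ → ℂ) : Prop :=
  ∀ t, |t| ≤ T → InHs s (u t) ∧ hnorm s (u t) ≤ B ∧
    ∀ k ∈ Fw N, HasDerivAt (fun τ => u τ k) (Fld S (u t) k) t

lemma En_tail {w : ℤ → ℂ} (hw : InHs s w) {N : ℕ} (hN : 1 ≤ N) :
    En (s - 1) w ≤ ∑ k ∈ Fw N, Wt (s - 1) w k ^ 2 + En s w / N := by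
  have hN' : (1 : ℝ) ≤ N := by exact_mod_cast hN
  have hw' : InHs (s - 1) w := hw.mono (by linarith)
  have pt : ∀ k, Wt (s - 1) w k ^ 2 ≤ (if k ∈ Fw N then Wt (s - 1) w k ^ 2 else 0) +
      Wt s w k ^ 2 / N := by
    intro k
    split_ifs with h
    · have : 0 ≤ Wt s w k ^ 2 / N := by positivity
      linarith
    · have h1 := not_mem_Fw h
      have hp : 0 < |(k : ℝ)| := by linarith
      have e : Wt s w k = |(k : ℝ)| * Wt (s - 1) w k := by
        unfold Wt; rw [Real.rpow_sub_one hp.ne']; field_simp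
      rw [e, zero_add, le_div_iff₀ (by linarith)]
      have : (N : ℝ) ≤ |(k : ℝ)| ^ 2 := by nlinarith
      rw [mul_pow]
      nlinarith [sq_nonneg (Wt (s - 1) w k)]
  have h1 : HasSum (fun k => if k ∈ Fw N then Wt (s - 1) w k ^ 2 else 0)
      (∑ k ∈ Fw N, Wt (s - 1) w k ^ 2) := by
    have := hasSum_sum_of_ne_finset_zero (L := .unconditional ℤ) (s := Fw N)
      (f := fun k => if k ∈ Fw N then Wt (s - 1) w k ^ 2 else 0) (fun k hk => by simp [hk])
    rwa [Finset.sum_congr rfl (fun k hk => if_pos hk)] at this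
  exact hasSum_le pt hw'.summ.hasSum (h1.add (hw.summ.hasSum.div_const _))

lemma Ker.pair_trunc (K : Ker lam s C S) {w z : ℤ → ℂ} (hw : InHs s w) (hz : InHs s z)
    {N : ℕ} (hN : 1 ≤ N) :
    ‖∑ k ∈ Fw N, (Pm (s - 1) k : ℂ) * (starRingEnd ℂ (w k) * aHat S w z k)‖ ≤
      2 * (C * Cc s * Mconst (s + lam - 1)) * (En (s - 1) w * Real.sqrt (En s z)) +
      Real.sqrt (En s w) * Real.sqrt (En s (aHat S w z)) / N := by
  have hN' : (1 : ℝ) ≤ N := by exact_mod_cast hN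
  obtain ⟨p1, p2⟩ := pair_eq (K.Tt_summ hw hz)
  have pb := K.pair_bound hw hz
  rw [← p2] at pb
  set d : ℤ → ℂ := fun k => (Pm (s - 1) k : ℂ) * (w (-k) * aHat S w z k) with hd
  have h1 : HasSum (fun k => if k ∈ Fw N then d k else 0) (∑ k ∈ Fw N, d k) := by
    have := hasSum_sum_of_ne_finset_zero (L := .unconditional ℤ) (s := Fw N)
      (f := fun k => if k ∈ Fw N then d k else 0) (fun k hk => by simp [hk])
    rwa [Finset.sum_congr rfl (fun k hk => if_pos hk)] at this
  have h2 := p1.hasSum.sub h1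
  have cs := cs_aux (Wt s w) (Wt s (aHat S w z)) (Wt_nonneg _ _) (Wt_nonneg _ _) hw.summ
    (K.aHat_bound hw hz).1
  have pt : ∀ k, ‖d k - (if k ∈ Fw N then d k else 0)‖ ≤ Wt s w k * Wt s (aHat S w z) k / N := by
    intro k
    split_ifs with h
    · have q := Wt_nonneg
      simpa using div_nonneg (mul_nonneg (q s w k) (q s (aHat S w z) k)) (by linarith)
    · have h1 := not_mem_Fw h
      have hp : 0 < |(k : ℝ)| := by linarith
      have hp' : (k : ℝ) ≠ 0 := abs_pos.1 hp
      rw [sub_zero, hd]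
      simp only
      rw [norm_mul, norm_mul, Complex.norm_real, Real.norm_eq_abs, abs_Pm _ _ hp', hw.neg_norm,
        le_div_iff₀ (by linarith)]
      unfold Wt
      have : |(k : ℝ)| ^ s * |(k : ℝ)| ^ s = |(k : ℝ)| ^ (2 * (s - 1) + 1) * |(k : ℝ)| := by
        rw [← Real.rpow_add hp, ← Real.rpow_add_one hp.ne']; congr 1; ring
      calc _ ≤ |(k : ℝ)| ^ (2 * (s - 1) + 1) * (‖w k‖ * ‖aHat S w z k‖) * |(k : ℝ)| := by gcongr
        _ = (|(k : ℝ)| ^ s * |(k : ℝ)| ^ s) * (‖w k‖ * ‖aHat S w z k‖) := by rw [this]; ring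
        _ = _ := by ring
  have h3 := tsum_of_norm_bounded (cs.1.hasSum.div_const (N : ℝ)) pt
  rw [h2.tsum_eq] at h3
  have e : ∑ k ∈ Fw N, (Pm (s - 1) k : ℂ) * (starRingEnd ℂ (w k) * aHat S w z k) =
      ∑ k ∈ Fw N, d k := Finset.sum_congr rfl fun k _ => by rw [hd, ← hw.2.1]
  rw [e]
  have e2 : ∑ k ∈ Fw N, d k = ∑' k, d k - (∑' k, d k - ∑ k ∈ Fw N, d k) := by ring
  rw [e2]
  have h4 : (∑' k, Wt s w k * Wt s (aHat S w z) k) / N ≤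
    Real.sqrt (En s w) * Real.sqrt (En s (aHat S w z)) / N :=
    div_le_div_of_nonneg_right cs.2 (by linarith)
  exact (norm_sub_le _ _).trans (add_le_add pb (h3.trans h4))

theorem Ker.compare (K : Ker lam s C S) (T B : ℝ) (hB : 0 ≤ B) :
    ∃ D : ℝ, 0 ≤ D ∧ ∀ (N : ℕ) (u v : ℝ → ℤ → ℂ), 1 ≤ N → ApproxSol S s N T B u →
      ApproxSol S s N T B v → (∀ k ∈ Fw N, u 0 k = v 0 k) → ∀ t, |t| ≤ T →
      En (s - 1) (fun k => u t k - v t k) ≤ D / N := by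
  set Q := C * Cc s * Mconst (s + lam - 1) with hQ
  have Q0 : 0 ≤ Q := mul_nonneg (mul_nonneg K.Cpos.le (Cc_nonneg K.hs1)) (Real.sqrt_nonneg _)
  have Ca0 := K.Ca_nonneg
  set α := 8 * Q * B + 1 with hα
  set β := α * (4 * B ^ 2) + 2 * (2 * B * (Ca s C * (4 * B ^ 2))) with hβ
  have α0 : 0 < α := by positivity
  have β0 : 0 ≤ β := by positivity
  refine ⟨β * (Real.exp (α * T) / α) + 4 * B ^ 2, by positivity, ?_⟩
  intro N u v hN hu hv h0 t ht
  have hN' : (1 : ℝ) ≤ N := by exact_mod_cast hN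
  set w : ℝ → ℤ → ℂ := fun t k => u t k - v t k with hw
  set z : ℝ → ℤ → ℂ := fun t k => u t k + v t k with hz
  have wH : ∀ t, |t| ≤ T → InHs s (w t) := fun t ht => (hu t ht).1.sub (hv t ht).1
  have zH : ∀ t, |t| ≤ T → InHs s (z t) := fun t ht => (hu t ht).1.add (hv t ht).1
  have uB : ∀ t, |t| ≤ T → En s (u t) ≤ B ^ 2 := fun t ht => by
    rw [← hnorm_sq]; exact pow_le_pow_left₀ (hnorm_nonneg _ _) (hu t ht).2.1 2
  have vB : ∀ t, |t| ≤ T → En s (v t) ≤ B ^ 2 := fun t ht => by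
    rw [← hnorm_sq]; exact pow_le_pow_left₀ (hnorm_nonneg _ _) (hv t ht).2.1 2
  have wB : ∀ t, |t| ≤ T → En s (w t) ≤ 4 * B ^ 2 := fun t ht => by
    have := (hu t ht).1.En_sub (hv t ht).1
    linarith [uB t ht, vB t ht]
  have zB : ∀ t, |t| ≤ T → En s (z t) ≤ 4 * B ^ 2 := fun t ht => by
    have := (hu t ht).1.En_add (hv t ht).1
    linarith [uB t ht, vB t ht]
  have sq : ∀ x, x ≤ 4 * B ^ 2 → Real.sqrt x ≤ 2 * B := fun x hx => by
    rw [Real.sqrt_le_left (by positivity)]; linarith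
  set E : ℝ → ℝ := fun t => ∑ k ∈ Fw N, Wt (s - 1) (w t) k ^ 2 with hE
  set E' : ℝ → ℝ := fun t => 2 * (∑ k ∈ Fw N, (Pm (s - 1) k : ℂ) *
    (starRingEnd ℂ (w t k) * aHat S (w t) (z t) k)).im with hE'
  have tail : ∀ t, |t| ≤ T → En (s - 1) (w t) ≤ E t + 4 * B ^ 2 / N := fun t ht => by
    refine (En_tail (wH t ht) hN).trans ?_
    have := wB t ht
    gcongr
  have main : ∀ t, |t| ≤ T → E t ≤ (β / N) * (Real.exp (α * T) / α) := by
    refine gron (E' := E') α0 (by positivity) (fun t => Finset.sum_nonneg fun _ _ => sq_nonneg _) ?_ ?_ ?_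
    · refine Finset.sum_eq_zero fun k hk => ?_
      simp [Wt, hw, h0 k hk]
    · intro t ht
      have : E = fun t => ∑ k ∈ Fw N, |(k : ℝ)| ^ (2 * (s - 1)) * ‖w t k‖ ^ 2 := by
        funext t; exact Finset.sum_congr rfl fun k _ => Wt_sq _ _ _
      rw [this, hE']
      simp only [Complex.im_sum, Finset.mul_sum]
      refine HasDerivAt.fun_sum fun k hk => wsq_deriv (s - 1) k (x := fun τ => w τ k) ?_
      have h1 := ((hu t ht).2.2 k hk).sub ((hv t ht).2.2 k hk)
      refine h1.congr_deriv ?_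
      rw [hw, hz]
      simp only
      rw [← K.aHat_diff (hu t ht).1 (hv t ht).1]
      unfold Fld
      ring
    · intro t ht
      have h1 := K.pair_trunc (wH t ht) (zH t ht) hN
      have h2 : |E' t| ≤ 2 * ‖∑ k ∈ Fw N, (Pm (s - 1) k : ℂ) *
          (starRingEnd ℂ (w t k) * aHat S (w t) (z t) k)‖ := by
        rw [hE']; simp only
        rw [abs_mul, abs_two]
        exact mul_le_mul_of_nonneg_left (Complex.abs_im_le_norm _) (by norm_num)
      have h3 := tail t ht
      have E0 : 0 ≤ E t := Finset.sum_nonneg fun _ _ => sq_nonneg _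
      have h4 : Real.sqrt (En s (aHat S (w t) (z t))) ≤ Ca s C * (4 * B ^ 2) := by
        rw [Real.sqrt_le_left (by positivity), mul_pow]
        refine (K.aHat_bound (wH t ht) (zH t ht)).2.trans ?_
        refine mul_le_mul_of_nonneg_left ?_ (sq_nonneg _)
        rw [pow_two (4 * B ^ 2)]
        exact mul_le_mul (wB t ht) (zB t ht) (En_nonneg _ _) (by positivity)
      have h5 : 2 * Q * (En (s - 1) (w t) * Real.sqrt (En s (z t))) ≤
          2 * Q * ((E t + 4 * B ^ 2 / N) * (2 * B)) := by
        apply mul_le_mul_of_nonneg_left _ (by positivity)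
        exact mul_le_mul h3 (sq _ (zB t ht)) (Real.sqrt_nonneg _) (by positivity)
      have h6 : Real.sqrt (En s (w t)) * Real.sqrt (En s (aHat S (w t) (z t))) / N ≤
          2 * B * (Ca s C * (4 * B ^ 2)) / N := by
        apply div_le_div_of_nonneg_right _ (by linarith)
        exact mul_le_mul (sq _ (wB t ht)) h4 (Real.sqrt_nonneg _) (by positivity)
      have h7 : 0 ≤ E t + 4 * B ^ 2 / N := by positivity
      calc |E' t| ≤ 2 * (2 * Q * ((E t + 4 * B ^ 2 / N) * (2 * B)) +
            2 * B * (Ca s C * (4 * B ^ 2)) / N) := by linarith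
        _ ≤ α * (E t + 4 * B ^ 2 / N) + 2 * (2 * B * (Ca s C * (4 * B ^ 2)) / N) := by
            rw [hα]; nlinarith
        _ = _ := by rw [hβ]; ring
  calc _ ≤ E t + 4 * B ^ 2 / N := tail t ht
    _ ≤ (β / N) * (Real.exp (α * T) / α) + 4 * B ^ 2 / N := by linarith [main t ht]
    _ = _ := by ring
end


lemma fence_half {E E' : ℝ → ℝ} {T K K' A : ℝ} (hK : 0 ≤ K) (hK' : K < K') (hA : 0 < A)
    (hT : K' * A * T < 1) (h0 : E 0 ≤ A ^ 2)
    (hd : ∀ t, 0 ≤ t → t ≤ T → HasDerivAt E (E' t) t)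
    (hb : ∀ t, 0 ≤ t → t ≤ T → |E' t| ≤ 2 * (K * (E t * Real.sqrt (E t)))) :
    ∀ t, 0 ≤ t → t ≤ T → E t ≤ (A / (1 - K' * A * t)) ^ 2 := by
  intro t ht0 htT
  have K0 : 0 < K' := by linarith
  have pos : ∀ x, x ≤ T → 0 < 1 - K' * A * x := fun x hx => by
    have : K' * A * x ≤ K' * A * T := mul_le_mul_of_nonneg_left hx (by positivity)
    linarith
  have dB : ∀ x, x ≤ T → HasDerivAt (fun x => (A / (1 - K' * A * x)) ^ 2)
      (2 * (K' * (A / (1 - K' * A * x)) ^ 3)) x := fun x hx => by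
    have h1 : HasDerivAt (fun x => 1 - K' * A * x) (-(K' * A)) x := by
      simpa using ((hasDerivAt_id x).const_mul (K' * A)).const_sub 1
    have p := (pos x hx).ne'
    have h2 := (((hasDerivAt_const x A).fun_div h1 p)).fun_pow 2
    refine h2.congr_deriv ?_
    generalize 1 - K' * A * x = y at p
    norm_num
    field_simp
  refine image_le_of_deriv_right_lt_deriv_boundary' (f := E) (f' := E') (a := 0) (b := T)
    (fun x hx => (hd x hx.1 hx.2).continuousAt.continuousWithinAt)
    (fun x hx => (hd x hx.1 hx.2.le).hasDerivWithinAt) (by simpa using h0)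
    (fun x hx => (dB x hx.2).continuousAt.continuousWithinAt)
    (fun x hx => (dB x hx.2.le).hasDerivWithinAt) ?_ ⟨ht0, htT⟩
  intro x hx hE
  have p := pos x hx.2.le
  have q : 0 < A / (1 - K' * A * x) := by positivity
  have h1 := (le_abs_self _).trans (hb x hx.1 hx.2.le)
  rw [hE, Real.sqrt_sq q.le] at h1
  refine h1.trans_lt ?_
  rw [show (A / (1 - K' * A * x)) ^ 2 * (A / (1 - K' * A * x)) = (A / (1 - K' * A * x)) ^ 3 by ring]
  have : 0 < (A / (1 - K' * A * x)) ^ 3 := by positivity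
  nlinarith

lemma fence {E E' : ℝ → ℝ} {T K K' A : ℝ} (hK : 0 ≤ K) (hK' : K < K') (hA : 0 < A)
    (hT : K' * A * T < 1) (h0 : E 0 ≤ A ^ 2)
    (hd : ∀ t, |t| ≤ T → HasDerivAt E (E' t) t)
    (hb : ∀ t, |t| ≤ T → |E' t| ≤ 2 * (K * (E t * Real.sqrt (E t)))) :
    ∀ t, |t| ≤ T → E t ≤ (A / (1 - K' * A * |t|)) ^ 2 := by
  intro t ht
  rcases le_total 0 t with h | h
  · rw [abs_of_nonneg h]
    refine fence_half hK hK' hA hT h0 (fun t h0 hT => hd t (by rwa [abs_of_nonneg h0]))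
      (fun t h0 hT => hb t (by rwa [abs_of_nonneg h0])) t h (by rwa [abs_of_nonneg h] at ht)
  · have := fence_half (E := fun t => E (-t)) (E' := fun t => - E' (-t)) (T := T) hK hK' hA hT
      (by simpa using h0)
      (fun t h0 hT => by
        have := (hd (-t) (by rwa [abs_neg, abs_of_nonneg h0])).comp t (hasDerivAt_neg t)
        simpa [Function.comp_def] using this)
      (fun t h0 hT => by simpa using hb (-t) (by rwa [abs_neg, abs_of_nonneg h0])) (-t) (by linarith)
      (by rwa [abs_of_nonpos h] at ht)
    rw [abs_of_nonpos h]
    simpa using this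

/-- the hypothesis on `C_{s,λ}` -/
def CsHyp (lam s Cs : ℝ) : Prop := ∀ k m n : ℝ, k ≠ 0 → m ≠ 0 → n ≠ 0 → k + m + n = 0 →
      |k * |k| ^ (2 * s) + m * |m| ^ (2 * s) + n * |n| ^ (2 * s)| /
          min (|k| ^ lam) (min (|m| ^ lam) (|n| ^ lam)) ≤
        Cs * (|k| ^ s * |m| ^ s * |n| ^ (1 - lam) + |n| ^ s * |k| ^ s * |m| ^ (1 - lam) +
          |m| ^ s * |n| ^ s * |k| ^ (1 - lam))

lemma CsHyp.pos {lam s Cs : ℝ} (hs : 0 < s) (h : CsHyp lam s Cs) : 0 < Cs := by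
  have := h 1 1 (-2) (by norm_num) (by norm_num) (by norm_num) (by norm_num)
  have e : |(-2 : ℝ)| = 2 := by norm_num
  rw [e, abs_one] at this
  simp only [Real.one_rpow] at this
  by_contra hc
  push Not at hc
  have p : 0 < (1 * 1 * (2 : ℝ) ^ (1 - lam) + 2 ^ s * 1 * 1 + 1 * 2 ^ s * 1) := by positivity
  have h2 : (1 : ℝ) < 2 ^ (2 * s) := Real.one_lt_rpow (by norm_num) (by linarith)
  have q : 0 < |(1 : ℝ) * 1 + 1 * 1 + -2 * 2 ^ (2 * s)| / min 1 (min 1 (2 ^ lam)) := by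
    apply div_pos
    · rw [abs_pos]; intro h; linarith
    · positivity
  nlinarith

section
variable {lam s C : ℝ} {S : ℤ → ℤ → ℤ → ℂ}

lemma Ker.energy (K : Ker lam s C S) {Cs : ℝ} (hcs : CsHyp lam s Cs) {u : ℤ → ℂ}
    (hu : InHs s u) (hT : Summable (Tt S s u u)) :
    ‖∑' p, Tt S s u u p‖ ≤ (C * Cs * Mconst (s + lam - 1)) * (En s u * Real.sqrt (En s u)) := by
  have e1 : ∑' p, Tt S s u u p = ∑' p, Tt S s u u (eCyc p) := (eCyc.tsum_eq _).symm
  have hT1 : Summable fun p => Tt S s u u (eCyc p) := eCyc.summable_iff.2 hT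
  have e2 : ∑' p, Tt S s u u p = ∑' p, Tt S s u u (eCyc (eCyc p)) :=
    e1.trans (eCyc.tsum_eq (fun p => Tt S s u u (eCyc p))).symm
  have hT2 : Summable fun p => Tt S s u u (eCyc (eCyc p)) :=
    (eCyc.summable_iff (f := fun p => Tt S s u u (eCyc p))).2 hT1
  have h2 : (3 : ℂ) * ∑' p, Tt S s u u p =
      ∑' p, (Tt S s u u p + Tt S s u u (eCyc p) + Tt S s u u (eCyc (eCyc p))) := by
    rw [(hT.add hT1).tsum_add hT2, hT.tsum_add hT1, ← e1, ← e2]; ring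
  have z1 := l1_bound (s := s) (ρ := 1 - lam) (by linarith [K.hs2]) hu
  have q := Wt_nonneg
  have Cs0 := hcs.pos K.s_pos
  have h1 := tri1 (Wt s u) (Wt s u) (Wt (1 - lam) u) (q _ _) (q _ _) (q _ _)
    hu.summ hu.summ z1.1
  have h3 := tri3 (Wt s u) (Wt s u) (Wt (1 - lam) u) (q _ _) (q _ _) (q _ _)
    (hu.Wt_neg _) (hu.Wt_neg _) hu.summ hu.summ z1.1
  have h4 := tri2 (Wt s u) (Wt s u) (Wt (1 - lam) u) (q _ _) (q _ _) (q _ _)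
    hu.summ hu.summ z1.1
  have pt : ∀ p : ℤ × ℤ, ‖Tt S s u u p + Tt S s u u (eCyc p) + Tt S s u u (eCyc (eCyc p))‖ ≤
      (C * Cs) * ((Wt s u p.1 * Wt s u (p.1 - p.2) * Wt (1 - lam) u p.2 +
        Wt s u (p.1 - p.2) * Wt s u p.2 * Wt (1 - lam) u p.1) +
        Wt s u p.1 * Wt s u p.2 * Wt (1 - lam) u (p.1 - p.2)) := by
    rintro ⟨k, n⟩
    have e : Tt S s u u (k, n) + Tt S s u u (eCyc (k, n)) + Tt S s u u (eCyc (eCyc (k, n))) =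
        ((Pm s k + Pm s (n - k) + Pm s (-n) : ℝ) : ℂ) *
          (S (-k) (k - n) n * (u (-k) * u (k - n) * u n)) := by
      simp only [Tt, eCyc, Equiv.coe_fn_mk]
      rw [show -n - (k - n) = -k by ring, show -(k - n) - -k = n by ring, neg_neg,
        neg_sub, neg_sub, ← K.hcyc (k - n) n (-k), ← K.hcyc (-k) (k - n) n]
      push_cast
      ring
    rw [e]
    simp only
    have rhs : 0 ≤ (C * Cs) * ((Wt s u k * Wt s u (k - n) * Wt (1 - lam) u n +
        Wt s u (k - n) * Wt s u n * Wt (1 - lam) u k) +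
        Wt s u k * Wt s u n * Wt (1 - lam) u (k - n)) :=
      mul_nonneg (mul_nonneg K.Cpos.le Cs0.le) (add_nonneg (add_nonneg
        (mul_nonneg (mul_nonneg (q _ _ _) (q _ _ _)) (q _ _ _))
        (mul_nonneg (mul_nonneg (q _ _ _) (q _ _ _)) (q _ _ _)))
        (mul_nonneg (mul_nonneg (q _ _ _) (q _ _ _)) (q _ _ _)))
    by_cases h0 : -k * (k - n) * n = 0
    · rw [K.h0 _ _ _ h0]; simpa using rhs
    have hk : k ≠ 0 := by rintro rfl; simp at h0
    have hn : n ≠ 0 := by rintro rfl; simp at h0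
    have hm : k - n ≠ 0 := by intro h; simp [h] at h0
    have hp := hcs (k : ℝ) ((n : ℝ) - k) (-(n : ℝ))
      (by exact_mod_cast hk) (by intro h; apply hm; have : (n : ℝ) = k := by linarith
                                 have : n = k := by exact_mod_cast this
                                 omega)
      (by simpa using hn) (by ring)
    have hb := K.hb _ _ _ h0
    have eA : |(k : ℝ) * |(k : ℝ)| ^ (2 * s) + ((n : ℝ) - k) * |(n : ℝ) - k| ^ (2 * s) +
      -(n : ℝ) * |-(n : ℝ)| ^ (2 * s)| = |Pm s k + Pm s (n - k) + Pm s (-n)| := rfl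
    rw [eA] at hp
    have ab : |(n : ℝ) - k| = |((k - n : ℤ) : ℝ)| := by rw [abs_sub_comm]; push_cast; rfl
    rw [ab, abs_neg] at hp
    have ab2 : |((-k : ℤ) : ℝ)| = |(k : ℝ)| := by push_cast; exact abs_neg _
    rw [ab2] at hb
    set mn := min (|(k : ℝ)| ^ lam) (min (|((k - n : ℤ) : ℝ)| ^ lam) (|(n : ℝ)| ^ lam)) with hmn
    rw [norm_mul, norm_mul, norm_mul, norm_mul, hu.neg_norm, Complex.norm_real, Real.norm_eq_abs]
    set A := |Pm s k + Pm s (n - k) + Pm s (-n)| with hA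
    calc A * (‖S (-k) (k - n) n‖ * (‖u k‖ * ‖u (k - n)‖ * ‖u n‖))
        ≤ A * (C / mn * (‖u k‖ * ‖u (k - n)‖ * ‖u n‖)) := by gcongr
      _ = C * (A / mn) * (‖u k‖ * ‖u (k - n)‖ * ‖u n‖) := by ring
      _ ≤ C * _ * (‖u k‖ * ‖u (k - n)‖ * ‖u n‖) :=
          mul_le_mul_of_nonneg_right (mul_le_mul_of_nonneg_left hp K.Cpos.le) (by positivity)
      _ = _ := by unfold Wt; ring
  have hS := (((h1.1.add h3.1).add h4.1).mul_left (C * Cs))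
  have := tsum_of_norm_bounded hS.hasSum pt
  rw [← h2, norm_mul, tsum_mul_left, (h1.1.add h3.1).tsum_add h4.1, h1.1.tsum_add h3.1] at this
  have eA : ∑' i, Wt s u i ^ 2 = En s u := rfl
  rw [eA, Real.mul_self_sqrt (En_nonneg _ _)] at h1 h3 h4
  rw [show s - (1 - lam) = s + lam - 1 by ring] at z1
  set X := En s u with hX
  set M := Mconst (s + lam - 1)
  have X0 : 0 ≤ X := En_nonneg _ _
  have b1 := h1.2.trans (mul_le_mul_of_nonneg_left z1.2 X0)
  have b3 := h3.2.trans (mul_le_mul_of_nonneg_left z1.2 X0)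
  have b4 := h4.2.trans (mul_le_mul_of_nonneg_left z1.2 X0)
  have hCC : 0 ≤ C * Cs := mul_nonneg K.Cpos.le Cs0.le
  have fin := this.trans (mul_le_mul_of_nonneg_left (add_le_add (add_le_add b1 b3) b4) hCC)
  have n2 : ‖(3 : ℂ)‖ = 3 := by simp
  rw [n2] at fin
  linarith
end


lemma ode_global {E : Type*} [NormedAddCommGroup E] [NormedSpace ℝ E] [CompleteSpace E]
    {G : E → E} (hG : ContDiff ℝ 1 G) (hc : HasCompactSupport G) (x0 : E) (T : ℝ) (hT : 0 ≤ T) :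
    ∃ α : ℝ → E, α 0 = x0 ∧ ∀ t, |t| ≤ T → HasDerivAt α (G (α t)) t := by
  obtain ⟨Kl, hK⟩ := ContDiff.lipschitzWith_of_hasCompactSupport hc hG (by norm_num)
  obtain ⟨L, hL⟩ := hc.exists_bound_of_continuous hG.continuous
  set L' : NNReal := ⟨max L 0, le_max_right _ _⟩ with hL'
  set T' : NNReal := ⟨T + 1, by linarith⟩ with hT'
  have pl : IsPicardLindelof (fun _ => G) (tmin := -(T + 1)) (tmax := T + 1)
      ⟨0, by constructor <;> linarith⟩ x0 (L' * T') 0 L' Kl := by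
    refine IsPicardLindelof.of_time_independent (fun x _ => (hL x).trans (le_max_left _ _))
      hK.lipschitzOnWith ?_
    have : (T' : ℝ) = T + 1 := rfl
    simp [this]
  obtain ⟨α, h0, h1⟩ := pl.exists_eq_forall_mem_Icc_hasDerivWithinAt₀
  refine ⟨α, h0, fun t ht => ?_⟩
  rw [abs_le] at ht
  exact (h1 t ⟨by linarith, by linarith⟩).hasDerivAt (Icc_mem_nhds (by linarith) (by linarith))

/-- finite dimensional state space -/
abbrev XN (N : ℕ) : Type := (↥(Finset.Icc (1 : ℤ) N)) → ℂ

open Classical in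
/-- extension to a real trigonometric polynomial -/
noncomputable def ext (N : ℕ) (x : XN N) (k : ℤ) : ℂ :=
  if h : k ∈ Finset.Icc (1 : ℤ) N then x ⟨k, h⟩ else
    if h : -k ∈ Finset.Icc (1 : ℤ) N then starRingEnd ℂ (x ⟨-k, h⟩) else 0

lemma ext_pos {N : ℕ} (x : XN N) (k : ↥(Finset.Icc (1 : ℤ) N)) : ext N x k = x k := by
  simp [ext]

lemma ext_neg {N : ℕ} (x : XN N) (k : ℤ) : ext N x (-k) = starRingEnd ℂ (ext N x k) := by
  unfold ext
  by_cases h : k ∈ Finset.Icc (1 : ℤ) N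
  · have h' : -k ∉ Finset.Icc (1 : ℤ) N := by
      rw [Finset.mem_Icc] at h ⊢; omega
    have h'' : -(-k) ∈ Finset.Icc (1 : ℤ) N := by rwa [neg_neg]
    rw [dif_neg h', dif_pos h'', dif_pos h]
    simp
  · have h'' : -(-k) ∉ Finset.Icc (1 : ℤ) N := by rwa [neg_neg]
    rw [dif_neg h, dif_neg h'']
    by_cases h2 : -k ∈ Finset.Icc (1 : ℤ) N
    · simp [h2]
    · simp [h2]

lemma ext_zero {N : ℕ} (x : XN N) : ext N x 0 = 0 := by
  simp [ext]

lemma ext_out {N : ℕ} (x : XN N) {k : ℤ} (hk : k ∉ Fw N) : ext N x k = 0 := by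
  rw [mem_Fw, abs_le] at hk
  have h1 : k ∉ Finset.Icc (1 : ℤ) N := by rw [Finset.mem_Icc]; omega
  have h2 : -k ∉ Finset.Icc (1 : ℤ) N := by rw [Finset.mem_Icc]; omega
  simp only [ext, dif_neg h1, dif_neg h2]

lemma Fw_cases {N : ℕ} {k : ℤ} (hk : k ∈ Fw N) :
    k = 0 ∨ k ∈ Finset.Icc (1 : ℤ) N ∨ -k ∈ Finset.Icc (1 : ℤ) N := by
  rw [mem_Fw, abs_le] at hk
  rw [Finset.mem_Icc, Finset.mem_Icc]; omega

lemma ext_contDiff {N : ℕ} (k : ℤ) : ContDiff ℝ 1 (fun x : XN N => ext N x k) := by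
  unfold ext
  by_cases h : k ∈ Finset.Icc (1 : ℤ) N
  · simp only [dif_pos h]; exact contDiff_apply ℝ ℂ _
  · simp only [dif_neg h]
    by_cases h2 : -k ∈ Finset.Icc (1 : ℤ) N
    · simp only [dif_pos h2]
      exact Complex.conjCLE.contDiff.comp (contDiff_apply ℝ ℂ (⟨-k, h2⟩ : ↥(Finset.Icc (1 : ℤ) N)))
    · simp only [dif_neg h2]; exact contDiff_const

lemma ext_inHs {N : ℕ} (ρ : ℝ) (x : XN N) : InHs ρ (ext N x) := by
  refine inHs_of (ext_zero x) (ext_neg x) ?_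
  refine summable_of_ne_finset_zero (s := Fw N) fun k hk => ?_
  simp [Wt, ext_out x hk]

lemma ext_En {N : ℕ} (ρ : ℝ) (x : XN N) : En ρ (ext N x) = ∑ k ∈ Fw N, Wt ρ (ext N x) k ^ 2 := by
  refine tsum_eq_sum fun k hk => ?_
  simp [Wt, ext_out x hk]

section
variable {lam s C : ℝ} {S : ℤ → ℤ → ℤ → ℂ}

lemma ext_aHat {N : ℕ} (x : XN N) (k : ℤ) :
    aHat S (ext N x) (ext N x) k =
      ∑ n ∈ Fw N, S (-k) (k - n) n * ext N x (k - n) * ext N x n := by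
  refine tsum_eq_sum fun n hn => ?_
  rw [ext_out x hn, mul_zero]

lemma ext_Tt {N : ℕ} (x : XN N) (ρ : ℝ) : Summable (Tt S ρ (ext N x) (ext N x)) := by
  refine summable_of_ne_finset_zero (s := Fw N ×ˢ Fw N) fun p hp => ?_
  rw [Finset.mem_product, not_and_or] at hp
  unfold Tt
  rcases hp with h | h
  · have : ext N x (-p.1) = 0 := by rw [ext_neg, ext_out x h, map_zero]
    rw [this]; simp
  · rw [ext_out x h]; simp

lemma ext_Fld_contDiff {N : ℕ} (k : ℤ) : ContDiff ℝ 1 (fun x : XN N => Fld S (ext N x) k) := by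
  unfold Fld
  simp only [ext_aHat]
  refine (contDiff_const.mul (ContDiff.sum fun n _ => ?_)).neg
  exact (contDiff_const.mul (ext_contDiff _)).mul (ext_contDiff _)

lemma Ker.Fld_conj (K : Ker lam s C S) {u : ℤ → ℂ} (hu : InHs s u) (k : ℤ) :
    Fld S u (-k) = starRingEnd ℂ (Fld S u k) := (K.deriv_inHs hu).2.1 k

theorem Ker.galerkin (K : Ker lam s C S) {Cs : ℝ} (hcs : CsHyp lam s Cs) {f : ℤ → ℂ}
    (hf : InHs s f) {A K' T : ℝ} (hA : 0 < A) (hfA : hnorm s f ≤ A)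
    (hK' : C * Cs * Mconst (s + lam - 1) < K') (hT0 : 0 ≤ T) (hT : K' * A * T < 1) (N : ℕ) :
    ∃ u : ℝ → ℤ → ℂ, (∀ t, |t| ≤ T → InHs s (u t) ∧ hnorm s (u t) ≤ A / (1 - K' * A * |t|) ∧
      ∀ k ∈ Fw N, HasDerivAt (fun τ => u τ k) (Fld S (u t) k) t) ∧ ∀ k ∈ Fw N, u 0 k = f k := by
  have Kk0 : 0 ≤ C * Cs * Mconst (s + lam - 1) :=
    mul_nonneg (mul_nonneg K.Cpos.le (hcs.pos K.s_pos).le) (Real.sqrt_nonneg _)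
  have K0 : 0 < K' := by linarith
  set R := A / (1 - K' * A * T) with hR
  have p1 : 0 < 1 - K' * A * T := by linarith
  have R0 : 0 < R := by positivity
  let χ : ContDiffBump (0 : XN N) := ⟨R, R + 1, R0, by linarith⟩
  let G : XN N → XN N := fun x k => ((χ x : ℝ) : ℂ) * Fld S (ext N x) k
  have hG : ContDiff ℝ 1 G := by
    refine contDiff_pi.2 fun k => ?_
    exact (Complex.ofRealCLM.contDiff.comp χ.contDiff).mul (ext_Fld_contDiff _)
  have hc : HasCompactSupport G := by
    refine χ.hasCompactSupport.mono fun x hx => ?_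
    rw [Function.mem_support] at hx ⊢
    intro h
    apply hx
    funext k
    simp [G, h]
  obtain ⟨α, a0, ad⟩ := ode_global hG hc (fun k => f k) T hT0
  set u : ℝ → ℤ → ℂ := fun t => ext N (α t) with hu
  have uH : ∀ t, InHs s (u t) := fun t => ext_inHs s _
  have u0 : ∀ k ∈ Fw N, u 0 k = f k := by
    intro k hk
    rcases Fw_cases hk with rfl | h | h
    · rw [hf.1]; exact ext_zero _
    · have := ext_pos (α 0) ⟨k, h⟩
      simp only at this
      rw [hu]; simp only
      rw [this, a0]
    · have := ext_pos (α 0) ⟨-k, h⟩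
      simp only at this
      rw [ext_neg, a0] at this
      have h3 := this.trans (hf.2.1 k)
      rw [← a0] at h3
      exact (starRingEnd ℂ).injective h3
  have ud : ∀ t, |t| ≤ T → ∀ k ∈ Fw N, HasDerivAt (fun τ => u τ k) ((χ (α t) : ℂ) * Fld S (u t) k) t := by
    intro t ht
    have pos : ∀ k, k ∈ Finset.Icc (1 : ℤ) N →
        HasDerivAt (fun τ => u τ k) ((χ (α t) : ℂ) * Fld S (u t) k) t := by
      intro k hk
      have := (hasDerivAt_pi.1 (ad t ht)) ⟨k, hk⟩
      have e : (fun τ => u τ k) = fun τ => α τ ⟨k, hk⟩ := by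
        funext τ; exact ext_pos (α τ) ⟨k, hk⟩
      rw [e]
      refine this.congr_deriv ?_
      simp [G, hu]
    intro k hk
    rcases Fw_cases hk with rfl | h | h
    · have e : (fun τ => u τ 0) = fun τ => 0 := by
        funext τ; exact ext_zero (α τ)
      rw [e]
      refine (hasDerivAt_const t (0 : ℂ)).congr_deriv ?_
      simp [Fld]
    · exact pos k h
    · have h1 := (pos _ h).star
      have e : (fun τ => u τ k) = fun τ => star (u τ (-k)) := by
        funext τ
        have := ext_neg (α τ) (-k)
        rw [neg_neg] at this
        exact this
      rw [e]
      refine h1.congr_deriv ?_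
      have h2 := K.Fld_conj (uH t) (-k)
      rw [neg_neg] at h2
      rw [h2]
      simp
  -- energy
  set E : ℝ → ℝ := fun t => En s (u t) with hE
  set E' : ℝ → ℝ := fun t => χ (α t) * (2 * (∑' p, Tt S s (u t) (u t) p).im) with hE'
  have dE : ∀ t, |t| ≤ T → HasDerivAt E (E' t) t := by
    intro t ht
    have e : E = fun t => ∑ k ∈ Fw N, |(k : ℝ)| ^ (2 * s) * ‖u t k‖ ^ 2 := by
      funext t
      rw [hE]; simp only
      rw [hu, ext_En]
      exact Finset.sum_congr rfl fun k _ => Wt_sq _ _ _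
    rw [e]
    have h1 : HasDerivAt (fun t => ∑ k ∈ Fw N, |(k : ℝ)| ^ (2 * s) * ‖u t k‖ ^ 2)
      (∑ k ∈ Fw N, 2 * ((Pm s k : ℂ) * (starRingEnd ℂ (u t k) *
        ((χ (α t) : ℂ) * aHat S (u t) (u t) k))).im) t := by
      refine HasDerivAt.fun_sum fun k hk => wsq_deriv s k (x := fun τ => u τ k) ?_
      refine (ud t ht k hk).congr_deriv ?_
      unfold Fld; ring
    refine h1.congr_deriv ?_
    have h2 := (pair_eq (ext_Tt (S := S) (α t) s)).2
    rw [hE']; simp only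
    rw [hu]; simp only
    rw [← h2, tsum_eq_sum (s := Fw N), Complex.im_sum, Finset.mul_sum, Finset.mul_sum]
    · refine Finset.sum_congr rfl fun k hk => ?_
      have e3 : (Pm s k : ℂ) * (starRingEnd ℂ (ext N (α t) k) *
          ((χ (α t) : ℂ) * aHat S (ext N (α t)) (ext N (α t)) k)) =
          (χ (α t) : ℂ) * ((Pm s k : ℂ) * (starRingEnd ℂ (ext N (α t) k) *
            aHat S (ext N (α t)) (ext N (α t)) k)) := by ring
      rw [ext_neg, e3, Complex.im_ofReal_mul]
      ring
    · intro k hk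
      rw [ext_neg, ext_out _ hk]; simp
  have bE : ∀ t, |t| ≤ T → |E' t| ≤ 2 * ((C * Cs * Mconst (s + lam - 1)) * (E t * Real.sqrt (E t))) := by
    intro t ht
    have h1 := K.energy hcs (uH t) (ext_Tt (S := S) (α t) s)
    rw [hE']; simp only
    rw [abs_mul, abs_of_nonneg χ.nonneg, abs_mul, abs_two]
    have h2 := (Complex.abs_im_le_norm (∑' p, Tt S s (u t) (u t) p)).trans h1
    have h3 : χ (α t) ≤ 1 := χ.le_one
    have h4 : 0 ≤ χ (α t) := χ.nonneg
    have h5 := abs_nonneg (∑' p, Tt S s (u t) (u t) p).im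
    calc _ ≤ 1 * (2 * |(∑' p, Tt S s (u t) (u t) p).im|) := by gcongr
      _ ≤ _ := by rw [one_mul]; linarith
  have E0 : E 0 ≤ A ^ 2 := by
    have h1 : E 0 = ∑ k ∈ Fw N, Wt s f k ^ 2 := by
      rw [hE]; simp only
      rw [hu, ext_En]
      refine Finset.sum_congr rfl fun k hk => ?_
      have := u0 k hk
      rw [hu] at this; simp only at this
      simp only [Wt, this]
    rw [h1]
    calc _ ≤ En s f := hf.summ.sum_le_tsum _ fun _ _ => sq_nonneg _
      _ = hnorm s f ^ 2 := (hnorm_sq _ _).symm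
      _ ≤ _ := pow_le_pow_left₀ (hnorm_nonneg _ _) hfA 2
  have key := fence Kk0 hK' hA hT E0 dE bE
  have key2 : ∀ t, |t| ≤ T → hnorm s (u t) ≤ A / (1 - K' * A * |t|) := by
    intro t ht
    have : K' * A * |t| ≤ K' * A * T := mul_le_mul_of_nonneg_left ht (by positivity)
    have : 0 < 1 - K' * A * |t| := by linarith
    rw [hnorm_eq, Real.sqrt_le_left (by positivity)]
    exact key t ht
  refine ⟨u, fun t ht => ⟨uH t, key2 t ht, fun k hk => ?_⟩, u0⟩
  have one : χ (α t) = 1 := by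
    apply χ.one_of_mem_closedBall
    rw [mem_closedBall_zero_iff, pi_norm_le_iff_of_nonneg R0.le]
    intro k
    have h1 : ‖α t k‖ ≤ Wt s (u t) k := by
      have hk1 : k.1 ≠ 0 := by
        have := (Finset.mem_Icc.1 k.2).1
        omega
      have e4 : u t k = α t k := ext_pos (α t) k
      unfold Wt
      rw [e4]
      have := Real.one_le_rpow (one_le_abs_int hk1) K.s_pos.le
      exact le_mul_of_one_le_left (norm_nonneg _) this
    have h2 : Wt s (u t) k ≤ hnorm s (u t) := by
      rw [hnorm_eq]; exact Real.le_sqrt_of_sq_le ((uH t).coef_le _)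
    refine (h1.trans h2).trans ((key2 t ht).trans ?_)
    have : K' * A * |t| ≤ K' * A * T := mul_le_mul_of_nonneg_left ht (by positivity)
    exact div_le_div_of_nonneg_left hA.le p1 (by linarith)
  have := ud t ht k hk
  rw [one] at this
  simpa using this
end


lemma fatou {ρ b : ℝ} {x : ℕ → ℤ → ℂ} {y : ℤ → ℂ} (hx : ∀ᶠ n in atTop, InHs ρ (x n))
    (hb : ∀ᶠ n in atTop, En ρ (x n) ≤ b) (hl : ∀ k, Tendsto (fun n => x n k) atTop (nhds (y k))) :
    InHs ρ y ∧ En ρ y ≤ b := by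
  have h1 : ∀ F : Finset ℤ, ∑ k ∈ F, Wt ρ y k ^ 2 ≤ b := by
    intro F
    have ht : Tendsto (fun n => ∑ k ∈ F, Wt ρ (x n) k ^ 2) atTop (nhds (∑ k ∈ F, Wt ρ y k ^ 2)) := by
      refine tendsto_finsetSum _ fun k _ => ?_
      exact (((hl k).norm).const_mul _).pow 2
    refine le_of_tendsto ht ?_
    filter_upwards [hx, hb] with n h1 h2
    exact (h1.summ.sum_le_tsum _ fun _ _ => sq_nonneg _).trans h2
  have hs : Summable fun k => Wt ρ y k ^ 2 := summable_of_sum_le (fun _ => sq_nonneg _) h1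
  refine ⟨inHs_of ?_ ?_ hs, hs.tsum_le_of_sum_le h1⟩
  · refine tendsto_nhds_unique (hl 0) ?_
    refine (tendsto_congr' ?_).2 tendsto_const_nhds
    filter_upwards [hx] with n hn using hn.1
  · intro k
    refine tendsto_nhds_unique (hl (-k)) ?_
    have : Tendsto (fun n => starRingEnd ℂ (x n k)) atTop (nhds (starRingEnd ℂ (y k))) :=
      (Complex.continuous_conj.tendsto _).comp (hl k)
    refine this.congr' ?_
    filter_upwards [hx] with n hn using (hn.2.1 k).symm

section
variable {lam s C : ℝ} {S : ℤ → ℤ → ℤ → ℂ}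

lemma InHs.coef_weak {ρ : ℝ} {w : ℤ → ℂ} (h : InHs ρ w) (k : ℤ) :
    ‖w k‖ ≤ |(k : ℝ)| ^ (-ρ) * Real.sqrt (En ρ w) := by
  rcases eq_or_ne k 0 with rfl | hk
  · rw [h.1, norm_zero]; positivity
  · have k1 := one_le_abs_int hk
    have h1 : Wt ρ w k ≤ Real.sqrt (En ρ w) := Real.le_sqrt_of_sq_le (h.coef_le k)
    have h2 : ‖w k‖ = |(k : ℝ)| ^ (-ρ) * Wt ρ w k := by
      unfold Wt
      rw [← mul_assoc, ← Real.rpow_add (by linarith)]; simp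
    rw [h2]; gcongr

lemma Ker.Fld_diff (K : Ker lam s C S) {u v : ℤ → ℂ} (hu : InHs s u) (hv : InHs s v) (k : ℤ) :
    ‖Fld S u k - Fld S v k‖ ≤ |(k : ℝ)| * (C * (1 + |(k : ℝ)|) *
      (Real.sqrt (En (s - 1) fun k => u k - v k) * Real.sqrt (En s fun k => u k + v k))) := by
  have e : Fld S u k - Fld S v k = -(Complex.I * k * (aHat S u u k - aHat S v v k)) := by
    unfold Fld; ring
  rw [e, K.aHat_diff hu hv, norm_neg, norm_mul, norm_mul, Complex.norm_I, one_mul]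
  have : ‖(k : ℂ)‖ = |(k : ℝ)| := by
    rw [Complex.norm_intCast]
  rw [this]
  exact mul_le_mul_of_nonneg_left (K.aHat_weak (hu.sub hv) (hu.add hv) k) (abs_nonneg _)

theorem Ker.exists_T (K : Ker lam s C S) {Cs : ℝ} (hcs : CsHyp lam s Cs) {f : ℤ → ℂ}
    (hf : InHs s f) {A K' T : ℝ} (hA : 0 < A) (hfA : hnorm s f ≤ A)
    (hK' : C * Cs * Mconst (s + lam - 1) < K') (hT0 : 0 ≤ T) (hT : K' * A * T < 1) :
    ∃ U : ℝ → ℤ → ℂ, (∀ t, |t| ≤ T → InHs s (U t) ∧ hnorm s (U t) ≤ A / (1 - K' * A * |t|)) ∧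
      (∀ t, |t| < T → ∀ k, HasDerivAt (fun τ => U τ k) (Fld S (U t) k) t) ∧ U 0 = f := by
  have Kk0 : 0 ≤ C * Cs * Mconst (s + lam - 1) :=
    mul_nonneg (mul_nonneg K.Cpos.le (hcs.pos K.s_pos).le) (Real.sqrt_nonneg _)
  have K0 : 0 < K' := by linarith
  set B := A / (1 - K' * A * T) with hB
  have p1 : 0 < 1 - K' * A * T := by linarith
  have B0 : 0 < B := by positivity
  have pt : ∀ t, |t| ≤ T → 0 < 1 - K' * A * |t| := fun t ht => by
    have : K' * A * |t| ≤ K' * A * T := mul_le_mul_of_nonneg_left ht (by positivity)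
    linarith
  have ptB : ∀ t, |t| ≤ T → A / (1 - K' * A * |t|) ≤ B := fun t ht => by
    have : K' * A * |t| ≤ K' * A * T := mul_le_mul_of_nonneg_left ht (by positivity)
    exact div_le_div_of_nonneg_left hA.le p1 (by linarith)
  choose u hu u0 using fun N => K.galerkin hcs hf hA hfA hK' hT0 hT N
  obtain ⟨D, D0, hD⟩ := K.compare T B B0.le
  have FwM : ∀ {N M : ℕ}, N ≤ M → Fw N ⊆ Fw M := fun {N M} h k hk => by
    rw [mem_Fw] at hk ⊢
    exact hk.trans (by exact_mod_cast h)
  have AS : ∀ N M, N ≤ M → ApproxSol S s N T B (u M) := fun N M h t ht =>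
    ⟨(hu M t ht).1, (hu M t ht).2.1.trans (ptB t ht), fun k hk => (hu M t ht).2.2 k (FwM h hk)⟩
  have cmp : ∀ N M, 1 ≤ N → N ≤ M → ∀ t, |t| ≤ T →
      En (s - 1) (fun k => u N t k - u M t k) ≤ D / N := fun N M h1 h t ht =>
    hD N (u N) (u M) h1 (AS N N le_rfl) (AS N M h)
      (fun k hk => (u0 N k hk).trans (u0 M k (FwM h hk)).symm) t ht
  have lim0 : ∀ c : ℝ, Tendsto (fun n : ℕ => c * Real.sqrt (D / n)) atTop (nhds 0) := fun c => by
    have h1 : Tendsto (fun n : ℕ => D / (n : ℝ)) atTop (nhds 0) :=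
      tendsto_const_div_atTop_nhds_zero_nat D
    have h2 := ((Real.continuous_sqrt.tendsto 0).comp h1).const_mul c
    simpa using h2
  have cau : ∀ t, |t| ≤ T → ∀ k, CauchySeq fun n => u n t k := by
    intro t ht k
    have hz := (lim0 (|(k : ℝ)| ^ (-(s - 1)) )).const_mul 1
    refine cauchySeq_of_le_tendsto_0' (fun n : ℕ => if n = 0 then dist (u 0 t k) 0 + dist (u 0 t k) 0 +
      |(k : ℝ)| ^ (-(s - 1)) * Real.sqrt (D / 1) + 0 + dist (u 0 t k) (u 1 t k) else
      |(k : ℝ)| ^ (-(s - 1)) * Real.sqrt (D / n)) ?_ ?_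
    · intro n m hnm
      have cf : ∀ n m, 1 ≤ n → n ≤ m → dist (u n t k) (u m t k) ≤
          |(k : ℝ)| ^ (-(s - 1)) * Real.sqrt (D / n) := fun n m h1 h => by
        rw [dist_eq_norm]
        have hw : InHs (s - 1) (fun k => u n t k - u m t k) :=
          ((hu n t ht).1.sub (hu m t ht).1).mono (by linarith)
        refine (hw.coef_weak k).trans ?_
        exact mul_le_mul_of_nonneg_left (Real.sqrt_le_sqrt (cmp n m h1 h t ht)) (by positivity)
      split_ifs with h0
      · subst h0
        have d0 := dist_nonneg (x := u 0 t k) (y := 0)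
        have e0 : 0 ≤ |(k : ℝ)| ^ (-(s - 1)) * Real.sqrt (D / 1) := by positivity
        rcases Nat.eq_zero_or_pos m with rfl | hm
        · simp only [dist_self]
          have := dist_nonneg (x := u 0 t k) (y := u 1 t k)
          linarith
        · have h1 := cf 1 m le_rfl hm
          have h2 := dist_triangle (u 0 t k) (u 1 t k) (u m t k)
          rw [Nat.cast_one] at h1
          linarith
      · exact cf n m (Nat.one_le_iff_ne_zero.2 h0) hnm
    · refine (lim0 (|(k : ℝ)| ^ (-(s - 1)))).congr' ?_
      filter_upwards [eventually_ge_atTop 1] with n hn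
      rw [if_neg (by omega)]
  have ex : ∀ t k, ∃ y, |t| ≤ T → Tendsto (fun n => u n t k) atTop (nhds y) := by
    intro t k
    by_cases ht : |t| ≤ T
    · obtain ⟨y, hy⟩ := cauchySeq_tendsto_of_complete (cau t ht k)
      exact ⟨y, fun _ => hy⟩
    · exact ⟨0, fun h => absurd h ht⟩
  choose U hU using ex
  have UH : ∀ t, |t| ≤ T → InHs s (U t) ∧ hnorm s (U t) ≤ A / (1 - K' * A * |t|) := by
    intro t ht
    have p := pt t ht
    have := fatou (ρ := s) (b := (A / (1 - K' * A * |t|)) ^ 2) (x := fun n => u n t) (y := U t)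
      (Eventually.of_forall fun n => (hu n t ht).1)
      (Eventually.of_forall fun n => by
        rw [← hnorm_sq]
        exact pow_le_pow_left₀ (hnorm_nonneg _ _) (hu n t ht).2.1 2) (fun k => hU t k ht)
    refine ⟨this.1, ?_⟩
    rw [hnorm_eq, Real.sqrt_le_left (by positivity)]
    exact this.2
  have UD : ∀ N, 1 ≤ N → ∀ t, |t| ≤ T → En (s - 1) (fun k => u N t k - U t k) ≤ D / N := by
    intro N hN t ht
    refine (fatou (ρ := s - 1) (x := fun m k => u N t k - u m t k) ?_ ?_ ?_).2
    · exact Eventually.of_forall fun m => ((hu N t ht).1.sub (hu m t ht).1).mono (by linarith)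
    · filter_upwards [eventually_ge_atTop N] with m hm using cmp N m hN hm t ht
    · exact fun k => (hU t k ht).const_sub _
  refine ⟨U, UH, ?_, ?_⟩
  · intro t ht k
    have hmem : ∀ x, x ∈ Set.Ioo (-T) T ↔ |x| < T := fun x => by rw [Set.mem_Ioo, abs_lt]
    refine hasDerivAt_of_tendstoUniformlyOn (l := atTop) (s := Set.Ioo (-T) T) isOpen_Ioo
      (f := fun n τ => u n τ k) (f' := fun n τ => Fld S (u n τ) k)
      (g := fun τ => U τ k) (g' := fun τ => Fld S (U τ) k) ?_ ?_ ?_ ((hmem t).2 ht)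
    · rw [Metric.tendstoUniformlyOn_iff]
      intro ε hε
      have hz := lim0 (|(k : ℝ)| * (C * (1 + |(k : ℝ)|) * (2 * B)))
      filter_upwards [hz.eventually (gt_mem_nhds hε), eventually_ge_atTop 1] with n hn hn1 x hx
      have hx' := ((hmem x).1 hx).le
      rw [dist_comm, dist_eq_norm]
      refine lt_of_le_of_lt ?_ hn
      refine (K.Fld_diff (hu n x hx').1 (UH x hx').1 k).trans ?_
      have h1 := Real.sqrt_le_sqrt (UD n hn1 x hx')
      have h2 : Real.sqrt (En s fun k => u n x k + U x k) ≤ 2 * B := by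
        rw [Real.sqrt_le_left (by positivity)]
        have := (hu n x hx').1.En_add (UH x hx').1
        have b1 : En s (u n x) ≤ B ^ 2 := by
          rw [← hnorm_sq]
          exact pow_le_pow_left₀ (hnorm_nonneg _ _) ((hu n x hx').2.1.trans (ptB x hx')) 2
        have b2 : En s (U x) ≤ B ^ 2 := by
          rw [← hnorm_sq]
          exact pow_le_pow_left₀ (hnorm_nonneg _ _) ((UH x hx').2.trans (ptB x hx')) 2
        linarith
      have C0 := K.Cpos
      have h3 := mul_le_mul h1 h2 (Real.sqrt_nonneg _) (Real.sqrt_nonneg _)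
      calc _ ≤ |(k : ℝ)| * (C * (1 + |(k : ℝ)|) * (Real.sqrt (D / n) * (2 * B))) := by
            apply mul_le_mul_of_nonneg_left _ (abs_nonneg _)
            apply mul_le_mul_of_nonneg_left h3 (by positivity)
        _ = _ := by ring
    · filter_upwards [eventually_ge_atTop k.natAbs] with n hn x hx
      refine (hu n x ((hmem x).1 hx).le).2.2 k ?_
      rw [mem_Fw, abs_le]; omega
    · exact fun x hx => hU x k ((hmem x).1 hx).le
  · funext k
    have h1 := hU 0 k (by simpa using hT0)
    refine tendsto_nhds_unique h1 ?_
    refine (tendsto_congr' ?_).2 tendsto_const_nhds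
    filter_upwards [eventually_ge_atTop k.natAbs] with n hn
    refine u0 n k ?_
    rw [mem_Fw, abs_le]; omega
end


section
variable {lam s C : ℝ} {S : ℤ → ℤ → ℤ → ℂ}

lemma Ker.uniq (K : Ker lam s C S) {T B : ℝ} {u v : ℝ → ℤ → ℂ}
    (hu : ∀ t, |t| ≤ T → InHs s (u t) ∧ hnorm s (u t) ≤ B ∧
      ∀ k, HasDerivAt (fun τ => u τ k) (Fld S (u t) k) t)
    (hv : ∀ t, |t| ≤ T → InHs s (v t) ∧ hnorm s (v t) ≤ B ∧
      ∀ k, HasDerivAt (fun τ => v τ k) (Fld S (v t) k) t)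
    (h0 : u 0 = v 0) : ∀ t, |t| ≤ T → u t = v t := by
  intro t ht
  have B0 : 0 ≤ B := (hnorm_nonneg _ _).trans (hu t ht).2.1
  obtain ⟨D, D0, hD⟩ := K.compare T B B0
  have h1 : ∀ N : ℕ, 1 ≤ N → En (s - 1) (fun k => u t k - v t k) ≤ D / N := fun N hN =>
    hD N u v hN (fun t ht => ⟨(hu t ht).1, (hu t ht).2.1, fun k _ => (hu t ht).2.2 k⟩)
      (fun t ht => ⟨(hv t ht).1, (hv t ht).2.1, fun k _ => (hv t ht).2.2 k⟩)
      (fun k _ => by rw [h0]) t ht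
  have h2 : En (s - 1) (fun k => u t k - v t k) ≤ 0 := by
    refine ge_of_tendsto (tendsto_const_div_atTop_nhds_zero_nat D) ?_
    filter_upwards [eventually_ge_atTop 1] with n hn using h1 n hn
  have h3 : InHs (s - 1) (fun k => u t k - v t k) :=
    ((hu t ht).1.sub (hv t ht).1).mono (by linarith)
  funext k
  have := h3.coef_weak k
  rw [Real.sqrt_eq_zero'.2 h2, mul_zero] at this
  exact sub_eq_zero.1 (norm_le_zero_iff.1 this)

lemma cont_of {l : Filter ℝ} {U : ℝ → ℤ → ℂ} {y : ℤ → ℂ} (hy : InHs s y)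
    (hk : ∀ k, Tendsto (fun t => U t k) l (nhds (y k))) (hU : ∀ᶠ t in l, InHs s (U t))
    (hA : ∀ A, hnorm s y < A → ∀ᶠ t in l, hnorm s (U t) ≤ A) :
    Tendsto (fun t => hnorm s fun k => U t k - y k) l (nhds 0) := by
  have main : ∀ ε > 0, ∀ᶠ t in l, En s (fun k => U t k - y k) ≤ 7 * ε := by
    intro ε hε
    have hsum : HasSum (fun k => Wt s y k ^ 2) (En s y) := hy.summ.hasSum
    obtain ⟨F, hF⟩ := (hsum.eventually (lt_mem_nhds (show En s y - ε < En s y by linarith))).exists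
    have hlim : Tendsto (fun t => ∑ k ∈ F, (2 * Wt s (U t) k ^ 2 + 2 * Wt s y k ^ 2 -
        Wt s (fun k => U t k - y k) k ^ 2)) l (nhds (∑ k ∈ F, 4 * Wt s y k ^ 2)) := by
      refine tendsto_finsetSum _ fun k _ => ?_
      have h1 : Tendsto (fun t => Wt s (U t) k ^ 2) l (nhds (Wt s y k ^ 2)) :=
        (((hk k).norm).const_mul _).pow 2
      have h2 : Tendsto (fun t => Wt s (fun k => U t k - y k) k ^ 2) l (nhds 0) := by
        have := ((((hk k).sub_const (y k)).norm).const_mul (|(k : ℝ)| ^ s)).pow 2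
        simpa [Wt] using this
      have h3 := ((h1.const_mul 2).add_const (2 * Wt s y k ^ 2)).sub h2
      have e : 2 * Wt s y k ^ 2 + 2 * Wt s y k ^ 2 - 0 = 4 * Wt s y k ^ 2 := by ring
      rwa [e] at h3
    have hlim2 : 4 * (En s y - ε) < ∑ k ∈ F, 4 * Wt s y k ^ 2 := by
      rw [← Finset.mul_sum]; linarith
    have e1 := hlim.eventually (lt_mem_nhds hlim2)
    have hy2 : hnorm s y < Real.sqrt (En s y + ε) := by
      rw [hnorm_eq]; exact Real.sqrt_lt_sqrt (En_nonneg _ _) (by linarith)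
    filter_upwards [e1, hA _ hy2, hU] with t h1 h2 h3
    have h4 : En s (U t) ≤ En s y + ε := by
      have := pow_le_pow_left₀ (hnorm_nonneg _ _) h2 2
      rwa [hnorm_sq, Real.sq_sqrt (by linarith [En_nonneg s y])] at this
    have s1 := (h3.summ.mul_left 2).add (hy.summ.mul_left 2)
    have s2 := (h3.sub hy).summ
    have h5 := (s1.sub s2).sum_le_tsum F (fun k _ => sub_nonneg.2 (Wt_sub_sq s (U t) y k))
    rw [s1.tsum_sub s2, (h3.summ.mul_left 2).tsum_add (hy.summ.mul_left 2), tsum_mul_left,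
      tsum_mul_left] at h5
    have e2 : ∑' k, Wt s (U t) k ^ 2 = En s (U t) := rfl
    have e3 : ∑' k, Wt s y k ^ 2 = En s y := rfl
    have e4 : ∑' k, Wt s (fun k => U t k - y k) k ^ 2 = En s (fun k => U t k - y k) := rfl
    rw [e2, e3, e4] at h5
    linarith
  have t0 : Tendsto (fun t => En s fun k => U t k - y k) l (nhds 0) := by
    rw [tendsto_order]
    refine ⟨fun a ha => Eventually.of_forall fun t => ha.trans_le (En_nonneg _ _), fun a ha => ?_⟩
    filter_upwards [main (a / 14) (by positivity)] with t ht
    linarith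
  have := (Real.continuous_sqrt.tendsto 0).comp t0
  simpa [Function.comp_def, hnorm_eq] using this

lemma Ker.Fld_En (K : Ker lam s C S) {u v : ℤ → ℂ} (hu : InHs s u) (hv : InHs s v) :
    hnorm (s - 1) (fun k => Fld S u k - Fld S v k) ≤
      Ca s C * (hnorm s (fun k => u k - v k) *
        Real.sqrt (4 * hnorm s (fun k => u k - v k) ^ 2 + 6 * En s v)) := by
  have e : (fun k => Fld S u k - Fld S v k) =
      fun k : ℤ => -(Complex.I * (k : ℂ) * aHat S (fun k => u k - v k) (fun k => u k + v k) k) := by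
    funext k
    rw [← K.aHat_diff hu hv]; unfold Fld; ring
  have e2 : En (s - 1) (fun k => Fld S u k - Fld S v k) =
      En s (aHat S (fun k => u k - v k) (fun k => u k + v k)) := by
    rw [e]
    unfold En
    refine tsum_congr fun k => ?_
    rw [Wt_deriv _ (K.aHat_zero _ _)]
  have h1 := (K.aHat_bound (hu.sub hv) (hu.add hv)).2
  have h2 := hu.En_add hv
  have h3 := (hu.sub hv).En_add hv
  simp only [sub_add_cancel] at h3
  have h4 : En s (fun k => u k + v k) ≤ 4 * hnorm s (fun k => u k - v k) ^ 2 + 6 * En s v := by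
    rw [hnorm_sq]; linarith
  have n0 := hnorm_nonneg s (fun k => u k - v k)
  have c0 := K.Ca_nonneg
  rw [hnorm_eq (s - 1), e2, Real.sqrt_le_left (by positivity), mul_pow, mul_pow,
    Real.sq_sqrt (by have := En_nonneg s v; positivity)]
  refine h1.trans ?_
  rw [← hnorm_sq s (fun k => u k - v k)]
  gcongr

lemma Ker.Fld_cont (K : Ker lam s C S) {I : Set ℝ} {u : ℝ → ℤ → ℂ} (hu : ∀ t ∈ I, InHs s (u t))
    (hc : HsContOn s u I) : HsContOn (s - 1) (fun t => Fld S (u t)) I := by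
  intro t0 ht0
  have h := hc t0 ht0
  have h2 : Tendsto (fun t => Ca s C * (hnorm s (fun k => u t k - u t0 k) *
        Real.sqrt (4 * hnorm s (fun k => u t k - u t0 k) ^ 2 + 6 * En s (u t0))))
        (nhdsWithin t0 I) (nhds 0) := by
    have h3 := (Real.continuous_sqrt.tendsto _).comp (((h.pow 2).const_mul 4).add_const (6 * En s (u t0)))
    have := (h.mul h3).const_mul (Ca s C)
    simpa using this
  refine squeeze_zero' (Eventually.of_forall fun t => hnorm_nonneg _ _) ?_ h2
  filter_upwards [self_mem_nhdsWithin] with t ht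
  exact K.Fld_En (hu t ht) (hu t0 ht0)

lemma bdd_of_cont {I J : Set ℝ} {u : ℝ → ℤ → ℂ} (hu : ∀ t ∈ I, InHs s (u t))
    (hc : HsContOn s u I) (hJ : IsCompact J) (hJI : J ⊆ I) :
    ∃ B, ∀ t ∈ J, hnorm s (u t) ≤ B := by
  refine hJ.induction_on (p := fun J => ∃ B, ∀ t ∈ J, hnorm s (u t) ≤ B) ⟨0, by simp⟩ ?_ ?_ ?_
  · rintro a b hab ⟨B, hB⟩
    exact ⟨B, fun t ht => hB t (hab ht)⟩
  · rintro a b ⟨B, hB⟩ ⟨B', hB'⟩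
    refine ⟨max B B', fun t ht => ?_⟩
    rcases ht with h | h
    · exact (hB t h).trans (le_max_left _ _)
    · exact (hB' t h).trans (le_max_right _ _)
  · intro x hx
    have h1 := (hc x (hJI hx)).mono_left (nhdsWithin_mono x hJI)
    have h2 := h1.eventually (gt_mem_nhds one_pos)
    refine ⟨{t | hnorm s (fun k => u t k - u x k) < 1} ∩ J, inter_mem h2 self_mem_nhdsWithin,
      Real.sqrt (2 * 1 + 2 * En s (u x)), ?_⟩
    rintro t ⟨ht, htJ⟩
    rw [hnorm_eq]
    apply Real.sqrt_le_sqrt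
    have h3 := ((hu t (hJI htJ)).sub (hu x (hJI hx))).En_add (hu x (hJI hx))
    simp only [sub_add_cancel] at h3
    refine h3.trans ?_
    have : En s (fun k => u t k - u x k) ≤ 1 := by
      rw [← hnorm_sq]
      have ht' : hnorm s (fun k => u t k - u x k) < 1 := ht
      nlinarith [hnorm_nonneg s (fun k => u t k - u x k)]
    linarith

theorem Ker.main (K : Ker lam s C S) {Cs : ℝ} (hcs : CsHyp lam s Cs) {f : ℤ → ℂ}
    (hf : InHs s f) {tp : ℝ} (htp : 0 < tp)
    (hK : ∃ A, 0 < A ∧ hnorm s f ≤ A ∧ C * Cs * Mconst (s + lam - 1) * A * tp ≤ 1) :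
    ∃ u : ℝ → ℤ → ℂ, (IsSolution S s (Set.Ioo (-tp) tp) u ∧ u 0 = f) ∧
      ∀ v : ℝ → ℤ → ℂ, IsSolution S s (Set.Ioo (-tp) tp) v → v 0 = f →
        ∀ t ∈ Set.Ioo (-tp) tp, v t = u t := by
  obtain ⟨A, A0, hA, hKA⟩ := hK
  have hmem : ∀ x, x ∈ Set.Ioo (-tp) tp ↔ |x| < tp := fun x => by rw [Set.mem_Ioo, abs_lt]
  set K0 := C * Cs * Mconst (s + lam - 1) with hK0
  have K00 : 0 < K0 := mul_pos (mul_pos K.Cpos (hcs.pos K.s_pos)) (Mconst_sum K.hs2).2.2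
  have ex : ∀ T, ∃ (U : ℝ → ℤ → ℂ) (B : ℝ), 0 ≤ T → T < tp →
      (∀ t, |t| ≤ T → InHs s (U t) ∧ hnorm s (U t) ≤ B) ∧
      (∀ t, |t| < T → ∀ k, HasDerivAt (fun τ => U τ k) (Fld S (U t) k) t) ∧ U 0 = f := by
    intro T
    by_cases hT : 0 ≤ T ∧ T < tp
    · obtain ⟨hT0, hT1⟩ := hT
      have h1 : K0 * A * T < 1 := by
        refine lt_of_lt_of_le ?_ hKA
        exact mul_lt_mul_of_pos_left hT1 (by positivity)
      obtain ⟨K', hK', hK'2⟩ : ∃ K', K0 < K' ∧ K' * A * T < 1 := by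
        have hc : Tendsto (fun x : ℝ => x * A * T) (nhdsWithin K0 (Set.Ioi K0)) (nhds (K0 * A * T)) :=
          (Continuous.tendsto (by fun_prop) _).mono_left nhdsWithin_le_nhds
        obtain ⟨x, hx, hx2⟩ := ((hc.eventually (gt_mem_nhds h1)).and self_mem_nhdsWithin).exists
        exact ⟨x, hx2, hx⟩
      obtain ⟨U, h1, h2, h3⟩ := K.exists_T hcs hf A0 hA hK' hT0 hK'2
      refine ⟨U, A / (1 - K' * A * T), fun _ _ => ⟨fun t ht => ⟨(h1 t ht).1, (h1 t ht).2.trans ?_⟩,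
        h2, h3⟩⟩
      have p : 0 < K' := K00.trans hK'
      have : K' * A * |t| ≤ K' * A * T := mul_le_mul_of_nonneg_left ht (by positivity)
      exact div_le_div_of_nonneg_left A0.le (by linarith) (by linarith)
    · exact ⟨fun _ => f, 0, fun h1 h2 => absurd ⟨h1, h2⟩ hT⟩
  choose V BV hV using ex
  set τ : ℝ → ℝ := fun t => (|t| + tp) / 2 with hτ
  have τ0 : ∀ t, 0 ≤ τ t := fun t => by rw [hτ]; have := abs_nonneg t; simp only; linarith
  have τ1 : ∀ t, |t| < tp → |t| < τ t ∧ τ t < tp := fun t ht => by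
    rw [hτ]; constructor <;> simp only <;> linarith
  set U : ℝ → ℤ → ℂ := fun t => V (τ t) t with hU
  have glue : ∀ T, T < tp → ∀ t, |t| < T → U t = V T t := by
    intro T hT t ht
    have ht' := ht.trans hT
    have hT0 : 0 ≤ T := (abs_nonneg t).trans ht.le
    obtain ⟨a1, a2, a3⟩ := hV T hT0 hT
    obtain ⟨b1, b2, b3⟩ := hV (τ t) (τ0 t) (τ1 t ht').2
    refine K.uniq (T := |t|) (B := max (BV T) (BV (τ t))) (u := V (τ t)) (v := V T)
      (fun x hx => ?_) (fun x hx => ?_) (b3.trans a3.symm) t le_rfl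
    · have hx' := hx.trans_lt (τ1 t ht').1
      exact ⟨(b1 x hx'.le).1, (b1 x hx'.le).2.trans (le_max_right _ _), b2 x hx'⟩
    · have hx' := hx.trans_lt ht
      exact ⟨(a1 x hx'.le).1, (a1 x hx'.le).2.trans (le_max_left _ _), a2 x hx'⟩
  have UH : ∀ t, |t| < tp → InHs s (U t) := fun t ht =>
    ((hV (τ t) (τ0 t) (τ1 t ht).2).1 t (τ1 t ht).1.le).1
  have UD : ∀ t, |t| < tp → ∀ k, HasDerivAt (fun x => U x k) (Fld S (U t) k) t := by
    intro t ht k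
    obtain ⟨h1, h2⟩ := τ1 t ht
    have h3 := (hV (τ t) (τ0 t) h2).2.1 t h1 k
    refine h3.congr_of_eventuallyEq ?_
    have : ∀ᶠ x in nhds t, |x| < τ t := (continuous_abs.tendsto t).eventually (gt_mem_nhds h1)
    filter_upwards [this] with x hx
    rw [glue (τ t) h2 x hx]
  have UB : ∀ T, T < tp → ∃ B, ∀ t, |t| ≤ T → hnorm s (U t) ≤ B := by
    intro T hT
    refine ⟨BV ((T + tp) / 2), fun t ht => ?_⟩
    have h1 : |t| < (T + tp) / 2 := by linarith
    rw [glue ((T + tp) / 2) (by linarith) t h1]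
    exact ((hV ((T + tp) / 2) ((abs_nonneg t).trans h1.le) (by linarith)).1 t h1.le).2
  have U0 : U 0 = f := (hV (τ 0) (τ0 0) (τ1 0 (by simpa using htp)).2).2.2
  have cont : HsContOn s U (Set.Ioo (-tp) tp) := by
    intro t0 ht0
    have ht0' := (hmem t0).1 ht0
    have hmn : ∀ᶠ t in nhdsWithin t0 (Set.Ioo (-tp) tp), |t| < tp := by
      filter_upwards [self_mem_nhdsWithin] with t ht using (hmem t).1 ht
    refine cont_of (UH t0 ht0') (fun k => ?_) (hmn.mono UH) ?_
    · exact (UD t0 ht0' k).continuousAt.tendsto.mono_left nhdsWithin_le_nhds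
    · intro A2 hA2
      obtain ⟨A1, hA1, hA12⟩ := exists_between hA2
      have A10 : 0 < A1 := (hnorm_nonneg _ _).trans_lt hA1
      set K' := K0 + 1 with hK'
      have K'0 : 0 < K' := by rw [hK']; linarith
      set T := 1 / (2 * (K' * A1)) with hT
      have T0 : 0 < T := by positivity
      have hT1 : K' * A1 * T < 1 := by
        have e : K' * A1 * T = 1 / 2 := by
          rw [hT]
          have : K' * A1 ≠ 0 := by positivity
          field_simp
        rw [e]; norm_num
      obtain ⟨W, w1, w2, w3⟩ := K.exists_T hcs (UH t0 ht0') A10 hA1.le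
        (show C * Cs * Mconst (s + lam - 1) < K' by rw [hK']; linarith) T0.le hT1
      -- coincidence
      set δ := min (T / 2) ((tp - |t0|) / 2) with hδ
      have δ0 : 0 < δ := lt_min (by linarith) (by linarith)
      have δT : δ < T := (min_le_left _ _).trans_lt (by linarith)
      have δt : |t0| + δ < tp := by
        have := min_le_right (T / 2) ((tp - |t0|) / 2)
        rw [← hδ] at this; linarith
      obtain ⟨B, hB⟩ := UB (|t0| + δ) δt
      have tr : ∀ x, |x| ≤ δ → |t0 + x| ≤ |t0| + δ := fun x hx =>
        (abs_add_le _ _).trans (by linarith)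
      have co : ∀ x, |x| ≤ δ → U (t0 + x) = W x := by
        refine K.uniq (T := δ) (B := max B (A1 / (1 - K' * A1 * T))) (u := fun x => U (t0 + x))
          (v := W) (fun x hx => ?_) (fun x hx => ?_) (by simp [w3])
        · refine ⟨UH _ ((tr x hx).trans_lt δt), (hB _ (tr x hx)).trans (le_max_left _ _), fun k => ?_⟩
          exact (UD (t0 + x) ((tr x hx).trans_lt δt) k).comp_const_add t0 x
        · have hxT : |x| < T := hx.trans_lt δT
          refine ⟨(w1 x hxT.le).1, ((w1 x hxT.le).2.trans ?_).trans (le_max_right _ _), w2 x hxT⟩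
          have : K' * A1 * |x| ≤ K' * A1 * T := mul_le_mul_of_nonneg_left hxT.le (by positivity)
          exact div_le_div_of_nonneg_left A10.le (by linarith) (by linarith)
      have lim : Tendsto (fun t => A1 / (1 - K' * A1 * |t - t0|)) (nhds t0) (nhds A1) := by
        have h1 : Tendsto (fun t => 1 - K' * A1 * |t - t0|) (nhds t0) (nhds 1) := by
          have : Continuous fun t => 1 - K' * A1 * |t - t0| := by fun_prop
          have := this.tendsto t0
          simpa using this
        have h2 := (tendsto_const_nhds (x := A1) (f := nhds t0)).div h1 one_ne_zero
        rw [div_one] at h2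
        exact h2
      have near : ∀ᶠ t in nhds t0, |t - t0| < δ := by
        have : Tendsto (fun t => |t - t0|) (nhds t0) (nhds 0) := by
          have : Continuous fun t => |t - t0| := by fun_prop
          have := this.tendsto t0
          simpa using this
        exact this.eventually (gt_mem_nhds δ0)
      have fin : ∀ᶠ t in nhds t0, hnorm s (U t) ≤ A2 := by
        filter_upwards [near, lim.eventually (gt_mem_nhds hA12)] with t h1 h2
        have h3 := co (t - t0) h1.le
        rw [add_sub_cancel] at h3
        rw [h3]
        exact (w1 (t - t0) (h1.trans δT).le).2.trans h2.le
      exact fin.filter_mono nhdsWithin_le_nhds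
  refine ⟨U, ⟨⟨fun t ht => UH t ((hmem t).1 ht), cont, fun t ht => UD t ((hmem t).1 ht),
    fun t ht => K.deriv_inHs (UH t ((hmem t).1 ht)),
    K.Fld_cont (fun t ht => UH t ((hmem t).1 ht)) cont⟩, U0⟩, ?_⟩
  rintro v ⟨v1, v2, v3, -, -⟩ v0 t ht
  have ht' := (hmem t).1 ht
  have sub : Set.Icc (-|t|) |t| ⊆ Set.Ioo (-tp) tp := fun x hx => by
    rw [hmem]; exact (abs_le.2 hx).trans_lt ht'
  obtain ⟨B1, hB1⟩ := bdd_of_cont v1 v2 isCompact_Icc sub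
  obtain ⟨B2, hB2⟩ := UB |t| ht'
  refine K.uniq (T := |t|) (B := max B1 B2) (fun x hx => ?_) (fun x hx => ?_) (v0.trans U0.symm) t le_rfl
  · have hx' : x ∈ Set.Icc (-|t|) |t| := abs_le.1 hx
    exact ⟨v1 x (sub hx'), (hB1 x hx').trans (le_max_left _ _), v3 x (sub hx')⟩
  · exact ⟨UH x (hx.trans_lt ht'), (hB2 x hx).trans (le_max_right _ _), UD x (hx.trans_lt ht')⟩
end

/-- Short-time existence and uniqueness for kernels of negative degree `−λ < 0`. -/
theorem short_time_existence_negative_degree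
    (lam : ℝ) (hlam : 0 < lam) (S : ℤ → ℤ → ℤ → ℂ)
    (hS0 : ∀ k m n : ℤ, k * m * n = 0 → S k m n = 0)
    (hSreal : ∀ k m n : ℤ, S k m n = starRingEnd ℂ (S (-k) (-m) (-n)))
    (hSsym : ∀ k m n : ℤ, S k m n = S k n m)
    (hScyc : ∀ k m n : ℤ, S k m n = S m n k)
    (hShom : ∀ η : ℕ, 0 < η → ∀ k m n : ℤ,
      S (η * k) (η * m) (η * n) = ((((η : ℝ) ^ (-lam) : ℝ)) : ℂ) * S k m n)
    (C : ℝ) (hC : 0 < C)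
    (hSbound : ∀ k m n : ℤ, k * m * n ≠ 0 → ‖S k m n‖ ≤
      C / min (|(k : ℝ)| ^ lam) (min (|(m : ℝ)| ^ lam) (|(n : ℝ)| ^ lam)))
    (s : ℝ) (hs : max (3 / 2 - lam) (1 / 2) < s)
    (Cslam : ℝ)
    (hCslam : ∀ k m n : ℝ, k ≠ 0 → m ≠ 0 → n ≠ 0 → k + m + n = 0 →
      |k * |k| ^ (2 * s) + m * |m| ^ (2 * s) + n * |n| ^ (2 * s)| /
          min (|k| ^ lam) (min (|m| ^ lam) (|n| ^ lam)) ≤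
        Cslam * (|k| ^ s * |m| ^ s * |n| ^ (1 - lam) + |n| ^ s * |k| ^ s * |m| ^ (1 - lam) +
          |m| ^ s * |n| ^ s * |k| ^ (1 - lam)))
    (Kslam : ℝ) (hKslam : Kslam = C * Cslam * Mconst (s + lam - 1))
    (f : ℤ → ℂ) (hf : InHs s f) :
    ∃ u : ℝ → ℤ → ℂ,
      (IsSolution S s (Set.Ioo (-(1 / (Kslam * hnorm s f))) (1 / (Kslam * hnorm s f))) u ∧
        u 0 = f) ∧
      ∀ v : ℝ → ℤ → ℂ,
        IsSolution S s (Set.Ioo (-(1 / (Kslam * hnorm s f))) (1 / (Kslam * hnorm s f))) v →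
        v 0 = f →
        ∀ t ∈ Set.Ioo (-(1 / (Kslam * hnorm s f))) (1 / (Kslam * hnorm s f)), v t = u t := by
  have K : Ker lam s C S := ⟨hlam, hS0, hSreal, hSsym, hScyc, hC, hSbound,
    (max_lt_iff.1 hs).2, by linarith [(max_lt_iff.1 hs).1]⟩
  have hcs : CsHyp lam s Cslam := hCslam
  have hK0 : 0 < Kslam := by
    rw [hKslam]
    exact mul_pos (mul_pos hC (hcs.pos K.s_pos)) (Mconst_sum K.hs2).2.2
  rcases (hnorm_nonneg s f).eq_or_lt with h | h
  · rw [← h]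
    refine ⟨fun _ => f, ⟨⟨?_, ?_, ?_, ?_, ?_⟩, rfl⟩, fun v _ _ t ht => ?_⟩
    · intro t ht; simp at ht
    · intro t ht; simp at ht
    · intro t ht; simp at ht
    · intro t ht; simp at ht
    · intro t ht; simp at ht
    · simp at ht
  · refine K.main hcs hf (by positivity) ⟨hnorm s f, h, le_rfl, ?_⟩
    rw [← hKslam]
    have : Kslam * hnorm s f ≠ 0 := by positivity
    exact (mul_one_div_cancel this).le
end

section
/- Let μ ≥ 0 and let S : ℤ³ → ℂ satisfy S(k,m,n) = 0 whenever kmn = 0 and the bound |S(k,m,n)| ≤ C·min{|k|^μ, |m|^μ, |n|^μ} for some constant C > 0 and all k,m,n ∈ ℤ. If s > μ + 1/2, then for all u, v ∈ Ḣ^s(𝕋) one has a(u,v) ∈ Ḣ^s(𝕋) with ‖a(u,v)‖_s ≤ 2 B_s C M_{s−μ} ‖u‖_s ‖v‖_s, where B_s = 1 if 0 < s ≤ 1 and B_s = 2^{s−1} if s ≥ 1, and M_σ = (2 Σ_{n=1}^∞ n^{−2σ})^{1/2}. In particular a : Ḣ^s × Ḣ^s → Ḣ^s is a bounded bilinear form,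 and it is symmetric, a(u,v) = a(v,u), whenever S(k,m,n) = S(k,n,m). -/
open scoped BigOperators

/-- `B_s = 1` for `0 < s ≤ 1` and `B_s = 2^{s-1}` for `s ≥ 1`. -/
noncomputable def Bconst (s : ℝ) : ℝ := if s ≤ 1 then 1 else (2 : ℝ) ^ (s - 1)

theorem aux_cs (f g : ℤ → ENNReal) :
    (∑' n, f n * g n) ^ 2 ≤ (∑' n, f n ^ 2) * (∑' n, g n ^ 2) := by
  have h := ENNReal.lintegral_mul_le_Lp_mul_Lq (MeasureTheory.Measure.count : MeasureTheory.Measure ℤ)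
    (p := 2) (q := 2) Real.HolderConjugate.two_two
    (f := f) (g := g) (measurable_of_countable f).aemeasurable
    (measurable_of_countable g).aemeasurable
  simp only [MeasureTheory.lintegral_count, Pi.mul_apply, ENNReal.rpow_two] at h
  calc (∑' n, f n * g n) ^ 2
      ≤ ((∑' n, f n ^ 2) ^ ((1:ℝ)/2) * (∑' n, g n ^ 2) ^ ((1:ℝ)/2)) ^ 2 := by gcongr
    _ = _ := by
      rw [mul_pow, ← ENNReal.rpow_two, ← ENNReal.rpow_mul, ← ENNReal.rpow_two, ← ENNReal.rpow_mul]
      norm_num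

theorem aux_young (f g : ℤ → ENNReal) :
    ∑' k : ℤ, (∑' n : ℤ, f (k - n) * g n) ^ 2 ≤ (∑' n, g n) ^ 2 * ∑' n, f n ^ 2 := by
  have sq : ∀ x : ENNReal, (x ^ ((1:ℝ)/2)) ^ 2 = x := by
    intro x
    rw [← ENNReal.rpow_two, ← ENNReal.rpow_mul]
    norm_num
  have h1 : ∀ k : ℤ, (∑' n : ℤ, f (k - n) * g n) ^ 2
      ≤ (∑' n, f (k - n) ^ 2 * g n) * ∑' n, g n := by
    intro k
    have := aux_cs (fun n => f (k - n) * g n ^ ((1:ℝ)/2)) (fun n => g n ^ ((1:ℝ)/2))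
    simp only [mul_pow, sq] at this
    refine le_trans (le_of_eq ?_) this
    congr 1
    refine tsum_congr fun n => ?_
    rw [mul_assoc, ← pow_two, sq]
  calc ∑' k : ℤ, (∑' n : ℤ, f (k - n) * g n) ^ 2
      ≤ ∑' k : ℤ, (∑' n, f (k - n) ^ 2 * g n) * ∑' n, g n := ENNReal.tsum_le_tsum h1
    _ = (∑' n, ∑' k : ℤ, f (k - n) ^ 2 * g n) * ∑' n, g n := by
      rw [ENNReal.tsum_mul_right, ENNReal.tsum_comm]
    _ = (∑' n, (∑' k : ℤ, f k ^ 2) * g n) * ∑' n, g n := by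
      congr 1
      refine tsum_congr fun n => ?_
      rw [ENNReal.tsum_mul_right]
      congr 1
      exact (Equiv.subRight n).tsum_eq (fun k => f k ^ 2)
    _ = _ := by
      rw [ENNReal.tsum_mul_left]; ring

theorem aux_B (s : ℝ) (hs : 0 < s) (k m n : ℝ) (h : k = m + n) :
    |k| ^ s ≤ Bconst s * (|m| ^ s + |n| ^ s) := by
  have h0 : |k| ^ s ≤ (|m| + |n|) ^ s := by
    apply Real.rpow_le_rpow (abs_nonneg _) _ hs.le
    rw [h]; exact abs_add_le m n
  refine h0.trans ?_
  unfold Bconst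
  split_ifs with h1
  · rw [one_mul]
    exact Real.rpow_add_le_add_rpow (abs_nonneg _) (abs_nonneg _) hs.le h1
  · have := NNReal.rpow_add_le_mul_rpow_add_rpow (Real.nnabs m) (Real.nnabs n) (not_le.1 h1).le
    have := NNReal.coe_le_coe.2 this
    push_cast at this
    simpa using this

theorem aux_B_nonneg (s : ℝ) : 0 ≤ Bconst s := by
  unfold Bconst; split_ifs <;> positivity

theorem aux_M (σ : ℝ) (hσ : 1 / 2 < σ) :
    ∑' n : ℤ, ENNReal.ofReal (|(n : ℝ)| ^ (-(2 * σ))) = ENNReal.ofReal (Mconst σ ^ 2) := by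
  have hsum : Summable fun n : ℕ => ((n : ℝ) + 1) ^ (-(2 * σ)) := by
    have := (summable_nat_add_iff 1).2 (Real.summable_nat_rpow.2 (show -(2 * σ) < -1 by linarith))
    simpa using this
  have hnn : ∀ n : ℕ, 0 ≤ ((n : ℝ) + 1) ^ (-(2 * σ)) := fun n => by positivity
  rw [tsum_of_add_one_of_neg_add_one ENNReal.summable ENNReal.summable]
  have e1 : ∀ n : ℕ, |(((n : ℤ) + 1 : ℤ) : ℝ)| = (n : ℝ) + 1 := by
    intro n; push_cast; exact abs_of_nonneg (by positivity)
  have e2 : ∀ n : ℕ, |((-((n : ℤ) + 1) : ℤ) : ℝ)| = (n : ℝ) + 1 := by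
    intro n; push_cast; rw [abs_neg]; exact abs_of_nonneg (by positivity)
  simp only [e1, e2]
  rw [← ENNReal.ofReal_tsum_of_nonneg hnn hsum]
  have : |((0 : ℤ) : ℝ)| ^ (-(2 * σ)) = 0 := by
    simp only [Int.cast_zero, abs_zero]
    exact Real.zero_rpow (by linarith)
  rw [this, ENNReal.ofReal_zero, add_zero]
  have hS : 0 ≤ ∑' n : ℕ, ((n : ℝ) + 1) ^ (-(2 * σ)) := tsum_nonneg hnn
  rw [← ENNReal.ofReal_add hS hS]
  unfold Mconst
  rw [Real.sq_sqrt (by positivity)]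
  congr 1; ring

theorem aux_l1 (s μ : ℝ) (hs : μ + 1 / 2 < s) (u : ℤ → ℂ) (h0 : u 0 = 0) :
    (∑' n : ℤ, ENNReal.ofReal (|(n : ℝ)| ^ μ * ‖u n‖)) ^ 2 ≤
      ENNReal.ofReal (Mconst (s - μ) ^ 2) *
        ∑' n : ℤ, ENNReal.ofReal (|(n : ℝ)| ^ s * ‖u n‖) ^ 2 := by
  rw [← aux_M _ (by linarith)]
  refine le_trans (le_of_eq ?_) (le_trans (aux_cs
    (fun n : ℤ => ENNReal.ofReal (|(n : ℝ)| ^ (-(s - μ))))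
    (fun n : ℤ => ENNReal.ofReal (|(n : ℝ)| ^ s * ‖u n‖))) (le_of_eq ?_))
  · congr 1
    refine tsum_congr fun n => ?_
    rw [← ENNReal.ofReal_mul (by positivity)]
    congr 1
    by_cases hn : n = 0
    · subst hn; simp [h0]
    · have : 0 < |(n : ℝ)| := by positivity
      rw [← mul_assoc, ← Real.rpow_add this]
      congr 2; ring
  · congr 1
    refine tsum_congr fun n => ?_
    rw [← ENNReal.ofReal_pow (by positivity), ← Real.rpow_mul_natCast (abs_nonneg _)]
    congr 2; push_cast; ring

theorem aux_norm (s : ℝ) (u : ℤ → ℂ) (k : ℤ) :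
    |(k : ℝ)| ^ (2 * s) * ‖u k‖ ^ 2 = (|(k : ℝ)| ^ s * ‖u k‖) ^ 2 := by
  rw [mul_pow, ← Real.rpow_mul_natCast (abs_nonneg _)]
  congr 2; push_cast; ring

theorem aux_P (s : ℝ) (u : ℤ → ℂ)
    (h : Summable fun k : ℤ => |(k : ℝ)| ^ (2 * s) * ‖u k‖ ^ 2) :
    ∑' n : ℤ, ENNReal.ofReal (|(n : ℝ)| ^ s * ‖u n‖) ^ 2 = ENNReal.ofReal (hnorm s u ^ 2) := by
  have hn : ∀ k : ℤ, 0 ≤ |(k : ℝ)| ^ (2 * s) * ‖u k‖ ^ 2 := fun k => by positivity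
  unfold hnorm
  rw [← Real.sqrt_eq_rpow, Real.sq_sqrt (tsum_nonneg hn), ENNReal.ofReal_tsum_of_nonneg hn h]
  refine tsum_congr fun n => ?_
  rw [aux_norm, ENNReal.ofReal_pow (by positivity)]

theorem aux_point (μ : ℝ) (S : ℤ → ℤ → ℤ → ℂ)
    (C : ℝ) (hC : 0 < C)
    (hSbound : ∀ k m n : ℤ, ‖S k m n‖ ≤
      C * min (|(k : ℝ)| ^ μ) (min (|(m : ℝ)| ^ μ) (|(n : ℝ)| ^ μ)))
    (s : ℝ) (hs : 0 < s) (u v : ℤ → ℂ) (k n : ℤ) :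
    |(k : ℝ)| ^ s * ‖S (-k) (k - n) n * u (k - n) * v n‖ ≤
      Bconst s * C * ((|((k - n : ℤ) : ℝ)| ^ s * ‖u (k - n)‖) * (|(n : ℝ)| ^ μ * ‖v n‖)
        + (|((k - n : ℤ) : ℝ)| ^ μ * ‖u (k - n)‖) * (|(n : ℝ)| ^ s * ‖v n‖)) := by
  rw [norm_mul, norm_mul]
  have hB := aux_B s hs (k : ℝ) ((k - n : ℤ) : ℝ) (n : ℝ) (by push_cast; ring)
  have hb := hSbound (-k) (k - n) n
  generalize k - n = m at *
  have h1 : ‖S (-k) m n‖ ≤ C * |(m : ℝ)| ^ μ := hb.trans (by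
    gcongr; exact (min_le_right _ _).trans (min_le_left _ _))
  have h2 : ‖S (-k) m n‖ ≤ C * |(n : ℝ)| ^ μ := hb.trans (by
    gcongr; exact (min_le_right _ _).trans (min_le_right _ _))
  have hBn := aux_B_nonneg s
  calc |(k : ℝ)| ^ s * (‖S (-k) m n‖ * ‖u m‖ * ‖v n‖)
      ≤ (Bconst s * (|(m : ℝ)| ^ s + |(n : ℝ)| ^ s)) * (‖S (-k) m n‖ * ‖u m‖ * ‖v n‖) := by gcongr
    _ = Bconst s * (|(m : ℝ)| ^ s * (‖S (-k) m n‖ * ‖u m‖ * ‖v n‖)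
          + |(n : ℝ)| ^ s * (‖S (-k) m n‖ * ‖u m‖ * ‖v n‖)) := by ring
    _ ≤ Bconst s * (|(m : ℝ)| ^ s * (C * |(n : ℝ)| ^ μ * ‖u m‖ * ‖v n‖)
          + |(n : ℝ)| ^ s * (C * |(m : ℝ)| ^ μ * ‖u m‖ * ‖v n‖)) := by gcongr
    _ = _ := by ring

theorem aux_sq (x y : ENNReal) : (x + y) ^ 2 ≤ 2 * (x ^ 2 + y ^ 2) := by
  have := ENNReal.rpow_add_le_mul_rpow_add_rpow x y (p := 2) (by norm_num)
  norm_num at this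
  exact this

theorem aux_main (μ : ℝ) (S : ℤ → ℤ → ℤ → ℂ)
    (C : ℝ) (hC : 0 < C)
    (hSbound : ∀ k m n : ℤ, ‖S k m n‖ ≤
      C * min (|(k : ℝ)| ^ μ) (min (|(m : ℝ)| ^ μ) (|(n : ℝ)| ^ μ)))
    (s : ℝ) (hs0 : 0 < s) (hs : μ + 1 / 2 < s) (u v : ℤ → ℂ) (hu : InHs s u) (hv : InHs s v) :
    ∑' k : ℤ, ENNReal.ofReal (|(k : ℝ)| ^ (2 * s) * ‖aHat S u v k‖ ^ 2) ≤
      ENNReal.ofReal ((2 * Bconst s * C * Mconst (s - μ) * hnorm s u * hnorm s v) ^ 2) := by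
  obtain ⟨hu0, -, hus⟩ := hu
  obtain ⟨hv0, -, hvs⟩ := hv
  set p : ℤ → ENNReal := fun n => ENNReal.ofReal (|(n : ℝ)| ^ s * ‖u n‖) with hp
  set q : ℤ → ENNReal := fun n => ENNReal.ofReal (|(n : ℝ)| ^ s * ‖v n‖) with hq
  set a : ℤ → ENNReal := fun n => ENNReal.ofReal (|(n : ℝ)| ^ μ * ‖u n‖) with ha
  set b : ℤ → ENNReal := fun n => ENNReal.ofReal (|(n : ℝ)| ^ μ * ‖v n‖) with hb
  have hP : ∑' n, p n ^ 2 = _ := aux_P s u hus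
  have hQ : ∑' n, q n ^ 2 = _ := aux_P s v hvs
  have hA : (∑' n, a n) ^ 2 ≤ _ * ∑' n, p n ^ 2 := aux_l1 s μ hs u hu0
  have hB : (∑' n, b n) ^ 2 ≤ _ * ∑' n, q n ^ 2 := aux_l1 s μ hs v hv0
  have hBn := aux_B_nonneg s
  have hk : ∀ k : ℤ, ENNReal.ofReal (|(k : ℝ)| ^ (2 * s) * ‖aHat S u v k‖ ^ 2) ≤
      ENNReal.ofReal (Bconst s * C) ^ 2 *
        (2 * ((∑' n, p (k - n) * b n) ^ 2 + (∑' n, q (k - n) * a n) ^ 2)) := by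
    intro k
    rw [aux_norm, ENNReal.ofReal_pow (by positivity)]
    have h1 : ENNReal.ofReal (|(k : ℝ)| ^ s * ‖aHat S u v k‖) ≤
        ENNReal.ofReal (Bconst s * C) * ((∑' n, p (k - n) * b n) + ∑' n, q (k - n) * a n) := by
      have e : ∑' n, q (k - n) * a n = ∑' n, a (k - n) * q n := by
        rw [← (Equiv.subLeft k).tsum_eq (fun n => q (k - n) * a n)]
        refine tsum_congr fun n => ?_
        simp [mul_comm]
      rw [e, ← ENNReal.tsum_add, ← ENNReal.tsum_mul_left, ENNReal.ofReal_mul (by positivity),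
        ofReal_norm]
      calc ENNReal.ofReal (|(k : ℝ)| ^ s) * ‖aHat S u v k‖ₑ
          ≤ ENNReal.ofReal (|(k : ℝ)| ^ s) * ∑' n : ℤ, ‖S (-k) (k - n) n * u (k - n) * v n‖ₑ := by
            gcongr
            exact enorm_tsum_le_tsum_enorm
        _ ≤ _ := by
          rw [← ENNReal.tsum_mul_left]
          refine ENNReal.tsum_le_tsum fun n => ?_
          rw [← ofReal_norm, ← ENNReal.ofReal_mul (by positivity)]
          refine (ENNReal.ofReal_le_ofReal
            (aux_point μ S C hC hSbound s hs0 u v k n)).trans (le_of_eq ?_)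
          simp only [hp, hq, ha, hb]
          rw [ENNReal.ofReal_mul (by positivity), ENNReal.ofReal_add (by positivity) (by positivity),
            ENNReal.ofReal_mul (by positivity : 0 ≤ |((k - n : ℤ) : ℝ)| ^ s * ‖u (k - n)‖),
            ENNReal.ofReal_mul (by positivity : 0 ≤ |((k - n : ℤ) : ℝ)| ^ μ * ‖u (k - n)‖)]
    calc _ ≤ (ENNReal.ofReal (Bconst s * C) *
          ((∑' n, p (k - n) * b n) + ∑' n, q (k - n) * a n)) ^ 2 := by gcongr
      _ ≤ _ := by
        rw [mul_pow]
        gcongr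
        exact aux_sq _ _
  have hM : 0 ≤ Mconst (s - μ) := Real.sqrt_nonneg _
  calc _ ≤ ∑' k : ℤ, ENNReal.ofReal (Bconst s * C) ^ 2 *
        (2 * ((∑' n, p (k - n) * b n) ^ 2 + (∑' n, q (k - n) * a n) ^ 2)) :=
        ENNReal.tsum_le_tsum hk
    _ = ENNReal.ofReal (Bconst s * C) ^ 2 * (2 * (∑' k : ℤ, (∑' n, p (k - n) * b n) ^ 2
          + ∑' k : ℤ, (∑' n, q (k - n) * a n) ^ 2)) := by
        rw [ENNReal.tsum_mul_left, ENNReal.tsum_mul_left, ENNReal.tsum_add]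
    _ ≤ ENNReal.ofReal (Bconst s * C) ^ 2 * (2 * (
          ENNReal.ofReal (Mconst (s - μ) ^ 2) * ENNReal.ofReal (hnorm s v ^ 2)
            * ENNReal.ofReal (hnorm s u ^ 2)
          + ENNReal.ofReal (Mconst (s - μ) ^ 2) * ENNReal.ofReal (hnorm s u ^ 2)
            * ENNReal.ofReal (hnorm s v ^ 2))) := by
        rw [← hP, ← hQ]
        gcongr
        · exact (aux_young p b).trans (by gcongr)
        · exact (aux_young q a).trans (by gcongr)
    _ = ENNReal.ofReal ((Bconst s * C) ^ 2) * (ENNReal.ofReal 4 *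
          (ENNReal.ofReal (Mconst (s - μ) ^ 2) * ENNReal.ofReal (hnorm s u ^ 2)
            * ENNReal.ofReal (hnorm s v ^ 2))) := by
        rw [ENNReal.ofReal_pow (by positivity : 0 ≤ Bconst s * C)]
        simp only [ENNReal.ofReal_ofNat]
        ring
    _ = _ := by
        rw [← ENNReal.ofReal_mul (by positivity), ← ENNReal.ofReal_mul (by positivity),
          ← ENNReal.ofReal_mul (by positivity), ← ENNReal.ofReal_mul (by positivity)]
        congr 1; ring

theorem aux_hnorm_nonneg (s : ℝ) (u : ℤ → ℂ) : 0 ≤ hnorm s u := by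
  unfold hnorm
  exact Real.rpow_nonneg (tsum_nonneg fun k => by positivity) _

/-- The bilinear form `a` is bounded from `Ḣ^s × Ḣ^s` to `Ḣ^s` for `s > μ + 1/2`,
with `‖a(u,v)‖_s ≤ 2 B_s C M_{s−μ} ‖u‖_s ‖v‖_s`; it is symmetric whenever
`S(k,m,n) = S(k,n,m)`. -/
theorem bilinear_form_bounded
    (μ : ℝ) (hμ : 0 ≤ μ) (S : ℤ → ℤ → ℤ → ℂ)
    (hS0 : ∀ k m n : ℤ, k * m * n = 0 → S k m n = 0)
    (C : ℝ) (hC : 0 < C)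
    (hSbound : ∀ k m n : ℤ, ‖S k m n‖ ≤
      C * min (|(k : ℝ)| ^ μ) (min (|(m : ℝ)| ^ μ) (|(n : ℝ)| ^ μ)))
    (s : ℝ) (hs : μ + 1 / 2 < s) :
    (∀ u v : ℤ → ℂ, InHs s u → InHs s v →
      aHat S u v 0 = 0 ∧
      (Summable fun k : ℤ => |(k : ℝ)| ^ (2 * s) * ‖aHat S u v k‖ ^ 2) ∧
      hnorm s (aHat S u v) ≤ 2 * Bconst s * C * Mconst (s - μ) * hnorm s u * hnorm s v) ∧
    ((∀ k m n : ℤ, S k m n = S k n m) →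
      ∀ u v : ℤ → ℂ, InHs s u → InHs s v → aHat S u v = aHat S v u) := by
  have hs0 : 0 < s := by linarith
  refine ⟨fun u v hu hv => ?_, fun hsym u v _ _ => ?_⟩
  · have main := aux_main μ S C hC hSbound s hs0 hs u v hu hv
    have hn : ∀ k : ℤ, 0 ≤ |(k : ℝ)| ^ (2 * s) * ‖aHat S u v k‖ ^ 2 := fun k => by positivity
    have hsum : Summable fun k : ℤ => |(k : ℝ)| ^ (2 * s) * ‖aHat S u v k‖ ^ 2 := by
      have := ENNReal.summable_toReal (ne_top_of_le_ne_top ENNReal.ofReal_ne_top main)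
      simpa only [ENNReal.toReal_ofReal (hn _)] using this
    refine ⟨?_, hsum, ?_⟩
    · unfold aHat
      rw [← tsum_zero (α := ℂ) (β := ℤ)]
      refine tsum_congr fun n => ?_
      rw [hS0 _ _ _ (by simp)]
      simp
    · have hB := aux_B_nonneg s
      have hM : 0 ≤ Mconst (s - μ) := Real.sqrt_nonneg _
      have h1 := aux_hnorm_nonneg s u
      have h2 := aux_hnorm_nonneg s v
      rw [← ENNReal.ofReal_tsum_of_nonneg hn hsum,
        ENNReal.ofReal_le_ofReal_iff (by positivity)] at main
      have e : hnorm s (aHat S u v) =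
          Real.sqrt (∑' k : ℤ, |(k : ℝ)| ^ (2 * s) * ‖aHat S u v k‖ ^ 2) := by
        rw [Real.sqrt_eq_rpow]; rfl
      rw [e]
      exact Real.sqrt_le_iff.2 ⟨by positivity, main⟩
  · funext k
    unfold aHat
    rw [← (Equiv.subLeft k).tsum_eq (fun n => S (-k) (k - n) n * u (k - n) * v n)]
    refine tsum_congr fun n => ?_
    simp only [Equiv.subLeft_apply, sub_sub_cancel]
    rw [hsym (-k) n (k - n)]
    ring
end

section
/- Let μ ≥ 0 and let S : ℤ³ → ℂ satisfy S(k,m,n) = 0 whenever kmn = 0, the cyclic symmetry S(k,m,n) = S(m,n,k), and |S(k,m,n)| ≤ C·min{|k|^μ, |m|^μ, |n|^μ} for all k,m,n ∈ ℤ. Let s > μ + 1/2. Then for all u, v, w ∈ Ḣ^s(𝕋), (1/2π) ∫_𝕋 u·a(v,w) dx = (1/2π) ∫_𝕋 v·a(w,u) dx; equivalently, the absolutely convergent double sum Σ_{k,n∈ℤ} S(−k, k−n, n) û(−k) v̂(k−n) ŵ(n) is invariant under cyclic permutation of (u, v, w). -/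
open scoped BigOperators

lemma InHs.summable_weight {s μ : ℝ} (hs : μ + 1 / 2 < s) {u : ℤ → ℂ} (hu : InHs s u) :
    Summable fun k : ℤ => |(k : ℝ)| ^ μ * ‖u k‖ := by
  obtain ⟨h0, -, h⟩ := hu
  have h2 : Summable fun k : ℤ => |(k : ℝ)| ^ (-(2 * (s - μ))) :=
    Real.summable_abs_int_rpow (by linarith)
  refine Summable.of_nonneg_of_le (fun k => by positivity) (fun k => ?_) (h.add h2)
  by_cases hk : k = 0
  · subst hk
    rw [h0]
    simp only [norm_zero, mul_zero]
    positivity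
  · have hp : 0 < |(k : ℝ)| := by positivity
    have e1 : |(k : ℝ)| ^ (2 * s) = (|(k : ℝ)| ^ s) ^ 2 := by
      rw [← Real.rpow_natCast, ← Real.rpow_mul hp.le]; congr 1; push_cast; ring
    have e2 : |(k : ℝ)| ^ (-(2 * (s - μ))) = (|(k : ℝ)| ^ (μ - s)) ^ 2 := by
      rw [← Real.rpow_natCast, ← Real.rpow_mul hp.le]; congr 1; push_cast; ring
    have e3 : |(k : ℝ)| ^ μ = |(k : ℝ)| ^ s * |(k : ℝ)| ^ (μ - s) := by
      rw [← Real.rpow_add hp]; congr 1; ring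
    rw [e1, e2, e3]
    nlinarith [sq_nonneg (|(k : ℝ)| ^ s * ‖u k‖ - |(k : ℝ)| ^ (μ - s)),
      sq_nonneg (|(k : ℝ)| ^ s * ‖u k‖), sq_nonneg (|(k : ℝ)| ^ (μ - s))]

lemma InHs.summable_norm' {s : ℝ} (hs : 1 / 2 < s) {u : ℤ → ℂ} (hu : InHs s u) :
    Summable fun k : ℤ => ‖u k‖ := by
  simpa using InHs.summable_weight (μ := 0) (by linarith) hu

lemma summable_triple {μ : ℝ} (hμ : 0 ≤ μ) {S : ℤ → ℤ → ℤ → ℂ} {C : ℝ} (hC : 0 < C)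
    (hSbound : ∀ k m n : ℤ, ‖S k m n‖ ≤
      C * min (|(k : ℝ)| ^ μ) (min (|(m : ℝ)| ^ μ) (|(n : ℝ)| ^ μ)))
    {s : ℝ} (hs : μ + 1 / 2 < s)
    {u v w : ℤ → ℂ} (hu : InHs s u) (hv : InHs s v) (hw : InHs s w) :
    Summable fun p : ℤ × ℤ =>
      u (-p.1) * (S (-p.1) (p.1 - p.2) p.2 * v (p.1 - p.2) * w p.2) := by
  have h1 : Summable fun k : ℤ => ‖u (-k)‖ :=
    (Equiv.neg ℤ).summable_iff.mpr (hu.summable_norm' (by linarith))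
  have h2 := hv.summable_norm' (by linarith)
  have h3 := hw.summable_weight hs
  have h4 := (Summable.mul_of_nonneg h1 h3 (fun k => norm_nonneg _)
    (fun k => by positivity)).mul_left (C * ∑' k, ‖v k‖)
  refine Summable.of_norm_bounded h4 (fun p => ?_)
  have hb : ‖v (p.1 - p.2)‖ ≤ ∑' k, ‖v k‖ := h2.le_tsum _ (fun _ _ => norm_nonneg _)
  have hSb : ‖S (-p.1) (p.1 - p.2) p.2‖ ≤ C * |(p.2 : ℝ)| ^ μ :=
    (hSbound _ _ _).trans (mul_le_mul_of_nonneg_left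
      ((min_le_right _ _).trans (min_le_right _ _)) hC.le)
  simp only [norm_mul]
  calc _ ≤ ‖u (-p.1)‖ * ((C * |(p.2 : ℝ)| ^ μ) * (∑' k, ‖v k‖) * ‖w p.2‖) := by gcongr
    _ = _ := by ring

lemma tsum_triple {S : ℤ → ℤ → ℤ → ℂ} {u v w : ℤ → ℂ}
    (h : Summable fun p : ℤ × ℤ =>
      u (-p.1) * (S (-p.1) (p.1 - p.2) p.2 * v (p.1 - p.2) * w p.2)) :
    ∑' k : ℤ, u (-k) * aHat S v w k = ∑' p : ℤ × ℤ,
      u (-p.1) * (S (-p.1) (p.1 - p.2) p.2 * v (p.1 - p.2) * w p.2) := by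
  rw [h.tsum_prod]
  simp only [aHat, tsum_mul_left]

/-- The change of variables. -/
def cycEquiv : ℤ × ℤ ≃ ℤ × ℤ where
  toFun p := (p.2 - p.1, -p.1)
  invFun q := (-q.2, q.1 - q.2)
  left_inv p := by ext <;> simp
  right_inv q := by ext <;> simp

/-- Cyclic symmetry of the trilinear integral:
`(1/2π) ∫ u a(v,w) dx = (1/2π) ∫ v a(w,u) dx`, written in Fourier coefficients as
`Σ_k û(−k) \widehat{a(v,w)}(k) = Σ_k v̂(−k) \widehat{a(w,u)}(k)`. -/
theorem cyclic_symmetry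
    (μ : ℝ) (hμ : 0 ≤ μ) (S : ℤ → ℤ → ℤ → ℂ)
    (hS0 : ∀ k m n : ℤ, k * m * n = 0 → S k m n = 0)
    (hScyc : ∀ k m n : ℤ, S k m n = S m n k)
    (C : ℝ) (hC : 0 < C)
    (hSbound : ∀ k m n : ℤ, ‖S k m n‖ ≤
      C * min (|(k : ℝ)| ^ μ) (min (|(m : ℝ)| ^ μ) (|(n : ℝ)| ^ μ)))
    (s : ℝ) (hs : μ + 1 / 2 < s)
    (u v w : ℤ → ℂ) (hu : InHs s u) (hv : InHs s v) (hw : InHs s w) :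
    ∑' k : ℤ, u (-k) * aHat S v w k = ∑' k : ℤ, v (-k) * aHat S w u k := by
  rw [tsum_triple (summable_triple hμ hC hSbound hs hu hv hw),
    tsum_triple (summable_triple hμ hC hSbound hs hv hw hu)]
  symm
  rw [← cycEquiv.tsum_eq]
  refine tsum_congr (fun p => ?_)
  have e1 : -(p.2 - p.1) = p.1 - p.2 := by ring
  have e2 : p.2 - p.1 - -p.1 = p.2 := by ring
  simp only [cycEquiv, Equiv.coe_fn_mk, e1, e2]
  rw [hScyc (-p.1) (p.1 - p.2) p.2]
  ring
end

section
/- Let μ ≥ 0 and let S : ℤ³ → ℂ satisfy S(k,m,n) = 0 whenever kmn = 0 and |S(k,m,n)| ≤ C·min{|k|^μ, |m|^μ, |n|^μ} for some constant C > 0 and all k,m,n ∈ ℤ. Let s > μ + 1/2 and set M_{s−μ} = (2 Σ_{n=1}^∞ n^{−2(s−μ)})^{1/2}. Then for all u, v, w ∈ Ḣ^s(𝕋), |(1/2π) ∫_𝕋 u·a(v,w) dx| = |Σ_{k,n∈ℤ} S(−k, k−n, n) û(−k) v̂(k−n) ŵ(n)| ≤ C·M_{s−μ}·‖u‖_s ‖v‖_0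 ‖w‖_0. -/
open scoped BigOperators

lemma cs_aux_s5 (f g : ℤ → ℝ) (hf : ∀ k, 0 ≤ f k) (hg : ∀ k, 0 ≤ g k)
    (hf2 : Summable fun k => f k ^ 2) (hg2 : Summable fun k => g k ^ 2) :
    (Summable fun k => f k * g k) ∧
    ∑' k, f k * g k ≤ (∑' k, f k ^ 2) ^ ((1 : ℝ) / 2) * (∑' k, g k ^ 2) ^ ((1 : ℝ) / 2) := by
  have hpq : (2 : ℝ).HolderConjugate 2 := Real.HolderConjugate.two_two
  have h := Real.summable_and_inner_le_Lp_mul_Lq_tsum_of_nonneg hpq hf hg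
    (by simpa using hf2) (by simpa using hg2)
  simpa using h

lemma sq_summable_aux (s : ℝ) (hs : 0 < s) (v : ℤ → ℂ) (hv : InHs s v) :
    Summable fun k => ‖v k‖ ^ 2 := by
  obtain ⟨h0, -, h⟩ := hv
  refine Summable.of_nonneg_of_le (fun k => by positivity) (fun k => ?_) h
  by_cases hk : k = 0
  · subst hk; simp [h0]
  · have h1 : (1 : ℝ) ≤ |(k : ℝ)| := by exact_mod_cast Int.one_le_abs hk
    have h2 : (1 : ℝ) ≤ |(k : ℝ)| ^ (2 * s) := Real.one_le_rpow h1 (by linarith)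
    nlinarith [sq_nonneg ‖v k‖]

lemma hnorm_zero_aux (v : ℤ → ℂ) : hnorm 0 v = (∑' k, ‖v k‖ ^ 2) ^ ((1 : ℝ) / 2) := by
  simp [hnorm]

/-- The weight used in the last Cauchy-Schwarz step. -/
noncomputable def wgt (σ : ℝ) (k : ℤ) : ℝ := if k = 0 then 0 else |(k : ℝ)| ^ (-σ)

lemma wgt_aux (σ : ℝ) (hσ : 1 / 2 < σ) :
    HasSum (fun k => wgt σ k ^ 2) (2 * ∑' n : ℕ, ((n : ℝ) + 1) ^ (-(2 * σ))) := by
  have hsum : Summable fun n : ℕ => ((n : ℝ) + 1) ^ (-(2 * σ)) := by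
    have := (summable_nat_add_iff 1).2
      (Real.summable_nat_rpow (p := -(2 * σ)) |>.2 (by linarith))
    simpa using this
  have e : ∀ n : ℕ, (((n : ℝ) + 1) ^ (-σ)) ^ 2 = ((n : ℝ) + 1) ^ (-(2 * σ)) := by
    intro n
    rw [← Real.rpow_natCast, ← Real.rpow_mul (by positivity)]
    congr 1; push_cast; ring
  have a : ∀ n : ℕ, wgt σ ((n : ℤ) + 1) ^ 2 = ((n : ℝ) + 1) ^ (-(2 * σ)) := by
    intro n
    have : (n : ℤ) + 1 ≠ 0 := by omega
    have h2 : |(n : ℝ) + 1| = n + 1 := abs_of_nonneg (by positivity)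
    rw [wgt, if_neg this]; push_cast; rw [h2, e]
  have b : ∀ n : ℕ, wgt σ (-((n : ℤ) + 1)) ^ 2 = ((n : ℝ) + 1) ^ (-(2 * σ)) := by
    intro n
    have : -((n : ℤ) + 1) ≠ 0 := by omega
    have h2 : |(n : ℝ) + 1| = n + 1 := abs_of_nonneg (by positivity)
    rw [wgt, if_neg this, Int.cast_neg, abs_neg]; push_cast; rw [h2, e]
  have h := HasSum.of_add_one_of_neg_add_one (f := fun k => wgt σ k ^ 2)
    (by simpa only [a] using hsum.hasSum) (by simpa only [b] using hsum.hasSum)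
  have h0 : wgt σ 0 = 0 := by simp [wgt]
  rw [h0] at h
  convert h using 1
  ring

/-- The trilinear estimate
`|(1/2π) ∫ u a(v,w) dx| ≤ C M_{s−μ} ‖u‖_s ‖v‖_0 ‖w‖_0`. -/
theorem trilinear_bound
    (μ : ℝ) (hμ : 0 ≤ μ) (S : ℤ → ℤ → ℤ → ℂ)
    (hS0 : ∀ k m n : ℤ, k * m * n = 0 → S k m n = 0)
    (C : ℝ) (hC : 0 < C)
    (hSbound : ∀ k m n : ℤ, ‖S k m n‖ ≤
      C * min (|(k : ℝ)| ^ μ) (min (|(m : ℝ)| ^ μ) (|(n : ℝ)| ^ μ)))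
    (s : ℝ) (hs : μ + 1 / 2 < s)
    (u v w : ℤ → ℂ) (hu : InHs s u) (hv : InHs s v) (hw : InHs s w) :
    ‖∑' k : ℤ, u (-k) * aHat S v w k‖ ≤
      C * Mconst (s - μ) * hnorm s u * hnorm 0 v * hnorm 0 w := by
  have hs0 : 0 < s := by linarith
  have hu2 := hu.2.2
  have hv2 := sq_summable_aux s hs0 v hv
  have hw2 := sq_summable_aux s hs0 w hw
  have ha : ∀ k, ‖aHat S v w k‖ ≤ C * |(k : ℝ)| ^ μ * (hnorm 0 v * hnorm 0 w) := by
    intro k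
    have hv2' : Summable fun n => ‖v (k - n)‖ ^ 2 :=
      (Equiv.subLeft k).summable_iff.2 hv2
    have hvt : ∑' n, ‖v (k - n)‖ ^ 2 = ∑' n, ‖v n‖ ^ 2 :=
      (Equiv.subLeft k).tsum_eq (fun n => ‖v n‖ ^ 2)
    obtain ⟨c1, c2⟩ := cs_aux_s5 (fun n => ‖v (k - n)‖) (fun n => ‖w n‖)
      (fun _ => norm_nonneg _) (fun _ => norm_nonneg _) hv2' hw2
    rw [hvt, ← hnorm_zero_aux, ← hnorm_zero_aux] at c2
    have hk : 0 ≤ C * |(k : ℝ)| ^ μ := by positivity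
    refine (tsum_of_norm_bounded (c1.mul_left (C * |(k : ℝ)| ^ μ)).hasSum ?_).trans ?_
    · intro n
      rw [norm_mul, norm_mul, mul_assoc]
      refine mul_le_mul_of_nonneg_right ?_ (by positivity)
      refine (hSbound _ _ _).trans (mul_le_mul_of_nonneg_left ?_ hC.le)
      refine (min_le_left _ _).trans ?_
      rw [Int.cast_neg, abs_neg]
    · rw [tsum_mul_left]
      exact mul_le_mul_of_nonneg_left c2 hk
  have hW := wgt_aux (s - μ) (by linarith)
  have hsq : ∀ k : ℤ, (|(k : ℝ)| ^ s * ‖u k‖) ^ 2 = |(k : ℝ)| ^ (2 * s) * ‖u k‖ ^ 2 := by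
    intro k
    rw [mul_pow, ← Real.rpow_natCast (|(k : ℝ)| ^ s), ← Real.rpow_mul (abs_nonneg _)]
    congr 2; push_cast; ring
  obtain ⟨d1, d2⟩ := cs_aux_s5 (wgt (s - μ)) (fun k => |(k : ℝ)| ^ s * ‖u k‖)
    (fun k => by unfold wgt; split_ifs <;> positivity) (fun k => by positivity)
    hW.summable (by simpa only [hsq] using hu2)
  simp only [hsq] at d2
  rw [hW.tsum_eq, ← Real.sqrt_eq_rpow] at d2
  change _ ≤ Mconst (s - μ) * hnorm s u at d2
  have hn : ∀ t x, 0 ≤ hnorm t x := fun t x =>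
    Real.rpow_nonneg (tsum_nonneg fun k => by positivity) _
  have hP : 0 ≤ C * (hnorm 0 v * hnorm 0 w) := mul_nonneg hC.le (mul_nonneg (hn _ _) (hn _ _))
  refine (tsum_of_norm_bounded (d1.mul_left (C * (hnorm 0 v * hnorm 0 w))).hasSum ?_).trans ?_
  · intro k
    rw [norm_mul, hu.2.1, RCLike.norm_conj]
    by_cases hk : k = 0
    · subst hk; simp [hu.1]
    · have hk' : 0 < |(k : ℝ)| := by positivity
      have e : wgt (s - μ) k * |(k : ℝ)| ^ s = |(k : ℝ)| ^ μ := by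
        rw [wgt, if_neg hk, ← Real.rpow_add hk']; congr 1; ring
      calc ‖u k‖ * ‖aHat S v w k‖
          ≤ ‖u k‖ * (C * |(k : ℝ)| ^ μ * (hnorm 0 v * hnorm 0 w)) :=
            mul_le_mul_of_nonneg_left (ha k) (norm_nonneg _)
        _ = _ := by rw [← e]; ring
  · rw [tsum_mul_left]
    refine (mul_le_mul_of_nonneg_left d2 hP).trans (le_of_eq ?_)
    ring
end

section
/- Let μ ≥ 0, let S : ℤ³ → ℂ satisfy S(k,m,n) = 0 whenever kmn = 0, S(k,m,n) = S(k,n,m), S(k,m,n) = S(m,n,k), S(k,m,n) = conj(S(−k,−m,−n)), and |S(k,m,n)| ≤ C·min{|k|^μ, |m|^μ, |n|^μ} for all k,m,n ∈ ℤ. Let s > μ + 3/2, let C_s be a constant such that |k|k|^{2s} + m|m|^{2s} + n|n|^{2s}| ≤ C_s(|k|^s|m|^s|n| + |n|^s|k|^s|m| + |m|^s|n|^s|k|) for all real k,m,n with k+m+n = 0, and set K_s = C·C_s·M_{s−μ−1} where M_σ = (2 Σ_{n=1}^∞ n^{−2σ})^{1/2}. Suppose N ∈ ℕ and û : ℤ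 × ℝ → ℂ is differentiable in t, satisfies û(k,t) = 0 for |k| > N, û(0,t) = 0, û(−k,t) = conj(û(k,t)), and solves the Galerkin system ∂_t û(k,t) + ik Σ_{n∈ℤ} S(−k, k−n, n) û(k−n,t) û(n,t) = 0 for all |k| ≤ N. Then the squared Sobolev norm E(t) = Σ_{k∈ℤ} |k|^{2s} |û(k,t)|² satisfies |E′(t)| ≤ 2 K_s E(t)^{3/2} for all t. -/
open scoped BigOperators

theorem gal_M_bound (σ : ℝ) (hσ : 1 / 2 < σ) (F : Finset ℤ) :
    ∑ n ∈ F, (|(n : ℝ)| ^ (-σ)) ^ 2 ≤ Mconst σ ^ 2 := by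
  have hsum : Summable (fun n : ℕ => ((n : ℝ) + 1) ^ (-(2 * σ))) := by
    have h := (summable_nat_add_iff 1).2 (Real.summable_nat_rpow (p := -(2 * σ)) |>.2 (by linarith))
    simpa using h
  have hnn : 0 ≤ ∑' n : ℕ, ((n : ℝ) + 1) ^ (-(2 * σ)) := tsum_nonneg fun n => by positivity
  have hM : Mconst σ ^ 2 = 2 * ∑' n : ℕ, ((n : ℝ) + 1) ^ (-(2 * σ)) := by
    unfold Mconst
    rw [Real.sq_sqrt (by positivity)]
  have key : ∀ n : ℕ, (((n : ℝ) + 1) ^ (-σ)) ^ 2 = ((n : ℝ) + 1) ^ (-(2 * σ)) := by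
    intro n
    rw [← Real.rpow_natCast, ← Real.rpow_mul (by positivity)]
    congr 1
    push_cast
    ring
  have h1 : HasSum (fun n : ℤ => (|(n : ℝ)| ^ (-σ)) ^ 2)
      ((∑' n : ℕ, ((n : ℝ) + 1) ^ (-(2 * σ))) + (|((0 : ℤ) : ℝ)| ^ (-σ)) ^ 2
        + (∑' n : ℕ, ((n : ℝ) + 1) ^ (-(2 * σ)))) := by
    apply HasSum.of_add_one_of_neg_add_one
    · convert hsum.hasSum using 2 with n
      rw [← key n]
      push_cast
      rw [abs_of_nonneg (by positivity)]
    · convert hsum.hasSum using 2 with n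
      rw [← key n]
      push_cast
      rw [abs_neg, abs_of_nonneg (by positivity)]
  have h2 := sum_le_hasSum F (fun n _ => by positivity) h1
  have h0 : (|((0 : ℤ) : ℝ)| ^ (-σ)) ^ 2 = 0 := by
    rw [Int.cast_zero, abs_zero, Real.zero_rpow (by linarith)]
    norm_num
  rw [h0] at h2
  linarith

theorem gal_tri (F : Finset ℤ) (a b : ℤ → ℝ) (hb : ∀ n, 0 ≤ b n) :
    ∑ k ∈ F, ∑ m ∈ F, ∑ n ∈ F, (if k + m + n = 0 then a k * a m * b n else 0) ≤
      (∑ k ∈ F, a k ^ 2) * ∑ n ∈ F, b n := by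
  have h1 : ∑ k ∈ F, ∑ m ∈ F, ∑ n ∈ F, (if k + m + n = 0 then a k ^ 2 * b n else 0) ≤
      (∑ k ∈ F, a k ^ 2) * ∑ n ∈ F, b n := by
    rw [Finset.sum_mul_sum]
    refine Finset.sum_le_sum fun k _ => ?_
    rw [Finset.sum_comm]
    refine Finset.sum_le_sum fun n _ => ?_
    have : ∀ m : ℤ, (k + m + n = 0) ↔ (m = -k - n) := fun m => by omega
    simp only [this, Finset.sum_ite_eq']
    have := hb n
    split_ifs
    · exact le_rfl
    · positivity
  have h2 : ∑ k ∈ F, ∑ m ∈ F, ∑ n ∈ F, (if k + m + n = 0 then a m ^ 2 * b n else 0) ≤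
      (∑ k ∈ F, a k ^ 2) * ∑ n ∈ F, b n := by
    rw [Finset.sum_comm]
    refine le_of_eq_of_le ?_ h1
    refine Finset.sum_congr rfl fun k _ => Finset.sum_congr rfl fun m _ =>
      Finset.sum_congr rfl fun n _ => ?_
    rw [add_comm m k]
  have h3 : 2 * ∑ k ∈ F, ∑ m ∈ F, ∑ n ∈ F, (if k + m + n = 0 then a k * a m * b n else 0) ≤
      ∑ k ∈ F, ∑ m ∈ F, ∑ n ∈ F, (if k + m + n = 0 then a k ^ 2 * b n else 0) +
      ∑ k ∈ F, ∑ m ∈ F, ∑ n ∈ F, (if k + m + n = 0 then a m ^ 2 * b n else 0) := by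
    simp only [Finset.mul_sum, ← Finset.sum_add_distrib]
    refine Finset.sum_le_sum fun k _ => Finset.sum_le_sum fun m _ =>
      Finset.sum_le_sum fun n _ => ?_
    split_ifs
    · nlinarith [mul_nonneg (sq_nonneg (a k - a m)) (hb n)]
    · simp
  linarith

/-- cyclic relabelling of a triple sum -/
theorem gal_cyc {R : Type*} [AddCommMonoid R] (F : Finset ℤ) (f : ℤ → ℤ → ℤ → R) :
    ∑ k ∈ F, ∑ m ∈ F, ∑ n ∈ F, f m n k = ∑ k ∈ F, ∑ m ∈ F, ∑ n ∈ F, f k m n := by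
  rw [Finset.sum_comm]
  exact Finset.sum_congr rfl fun m _ => Finset.sum_comm

theorem gal_A_bound
    (μ : ℝ) (S : ℤ → ℤ → ℤ → ℂ)
    (hScyc : ∀ k m n : ℤ, S k m n = S m n k)
    (C : ℝ) (hC : 0 < C)
    (hSbound : ∀ k m n : ℤ, ‖S k m n‖ ≤
      C * min (|(k : ℝ)| ^ μ) (min (|(m : ℝ)| ^ μ) (|(n : ℝ)| ^ μ)))
    (s : ℝ) (hμ : 0 ≤ μ) (hs : μ + 3 / 2 < s)
    (Cs : ℝ)
    (hCs : ∀ k m n : ℝ, k + m + n = 0 →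
      |k * |k| ^ (2 * s) + m * |m| ^ (2 * s) + n * |n| ^ (2 * s)| ≤
        Cs * (|k| ^ s * |m| ^ s * |n| + |n| ^ s * |k| ^ s * |m| + |m| ^ s * |n| ^ s * |k|))
    (F : Finset ℤ) (v : ℤ → ℂ) (hv0 : v 0 = 0) :
    ‖∑ k ∈ F, ∑ m ∈ F, ∑ n ∈ F, (((k : ℝ) * |(k : ℝ)| ^ (2 * s) : ℝ) : ℂ) *
      (if k + m + n = 0 then S k m n * v k * v m * v n else 0)‖ ≤
      C * Cs * Mconst (s - μ - 1) * (∑ k ∈ F, |(k : ℝ)| ^ (2 * s) * ‖v k‖ ^ 2) ^ ((3 : ℝ) / 2) := by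
  set g : ℤ → ℝ := fun k => (k : ℝ) * |(k : ℝ)| ^ (2 * s) with hg
  set w : ℤ → ℤ → ℤ → ℂ := fun k m n =>
    if k + m + n = 0 then S k m n * v k * v m * v n else 0 with hw
  set a : ℤ → ℝ := fun k => |(k : ℝ)| ^ s * ‖v k‖ with ha
  set b : ℤ → ℝ := fun k => |(k : ℝ)| ^ (1 + μ) * ‖v k‖ with hb
  have ha0 : ∀ k, 0 ≤ a k := fun k => by positivity
  have hb0 : ∀ k, 0 ≤ b k := fun k => by positivity
  have hCs0 : 0 ≤ Cs := by
    have h := (abs_nonneg _).trans (hCs 1 1 (-2) (by norm_num))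
    by_contra hneg
    push Not at hneg
    have : 0 < (|(1:ℝ)| ^ s * |(1:ℝ)| ^ s * |(-2:ℝ)| + |(-2:ℝ)| ^ s * |(1:ℝ)| ^ s * |(1:ℝ)|
      + |(1:ℝ)| ^ s * |(-2:ℝ)| ^ s * |(1:ℝ)|) := by
      have : |(-2:ℝ)| = 2 := by norm_num
      rw [this, abs_one]
      positivity
    nlinarith
  set E : ℝ := ∑ k ∈ F, |(k : ℝ)| ^ (2 * s) * ‖v k‖ ^ 2 with hE
  have hE0 : 0 ≤ E := Finset.sum_nonneg fun k _ => by positivity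
  have hEa : ∑ k ∈ F, a k ^ 2 = E := by
    refine Finset.sum_congr rfl fun k _ => ?_
    simp only [ha, mul_pow]
    congr 1
    rw [← Real.rpow_natCast, ← Real.rpow_mul (abs_nonneg _)]
    congr 1
    push_cast
    ring
  have hwc : ∀ k m n, w m n k = w k m n := by
    intro k m n
    simp only [hw]
    have : (m + n + k = 0) ↔ (k + m + n = 0) := by omega
    simp only [this]
    split_ifs
    · rw [hScyc k m n]; ring
    · rfl
  have h3 : (3 : ℂ) * ∑ k ∈ F, ∑ m ∈ F, ∑ n ∈ F, ((g k : ℝ) : ℂ) * w k m n =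
      ∑ k ∈ F, ∑ m ∈ F, ∑ n ∈ F, ((g k + g m + g n : ℝ) : ℂ) * w k m n := by
    have e1 := gal_cyc F (fun k m n => ((g k : ℝ) : ℂ) * w k m n)
    have e2 := gal_cyc F (fun k m n => ((g m : ℝ) : ℂ) * w k m n)
    simp only [hwc] at e1 e2
    simp only [Complex.ofReal_add, add_mul, Finset.sum_add_distrib]
    linear_combination (-1 : ℂ) * e1 - e2 - e1
  have hpt : ∀ k m n : ℤ, ‖((g k + g m + g n : ℝ) : ℂ) * w k m n‖ ≤
      C * Cs * ((if k + m + n = 0 then a k * a m * b n else 0) +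
        (if n + k + m = 0 then a n * a k * b m else 0) +
        (if m + n + k = 0 then a m * a n * b k else 0)) := by
    intro k m n
    have q1 : (n + k + m = 0) ↔ (k + m + n = 0) := by omega
    have q2 : (m + n + k = 0) ↔ (k + m + n = 0) := by omega
    simp only [hw, q1, q2]
    split_ifs with h
    · have hr : (k : ℝ) + m + n = 0 := by exact_mod_cast h
      have h1 := hCs k m n hr
      have h2 := hSbound k m n
      set P := min (|(k : ℝ)| ^ μ) (min (|(m : ℝ)| ^ μ) (|(n : ℝ)| ^ μ)) with hP
      have hP0 : 0 ≤ P := by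
        simp only [hP, le_min_iff]
        exact ⟨by positivity, by positivity, by positivity⟩
      have hPk : P ≤ |(k : ℝ)| ^ μ := min_le_left _ _
      have hPm : P ≤ |(m : ℝ)| ^ μ := (min_le_right _ _).trans (min_le_left _ _)
      have hPn : P ≤ |(n : ℝ)| ^ μ := (min_le_right _ _).trans (min_le_right _ _)
      have hbb : ∀ j : ℤ, P ≤ |(j : ℝ)| ^ μ → |(j : ℝ)| * P * ‖v j‖ ≤ b j := by
        intro j hj
        simp only [hb]
        rw [Real.rpow_add_of_nonneg (abs_nonneg _) zero_le_one hμ, Real.rpow_one]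
        gcongr
      rw [norm_mul, norm_mul, norm_mul, norm_mul, Complex.norm_real, Real.norm_eq_abs]
      calc |g k + g m + g n| * (‖S k m n‖ * ‖v k‖ * ‖v m‖ * ‖v n‖)
          ≤ (Cs * (|(k:ℝ)| ^ s * |(m:ℝ)| ^ s * |(n:ℝ)| + |(n:ℝ)| ^ s * |(k:ℝ)| ^ s * |(m:ℝ)|
            + |(m:ℝ)| ^ s * |(n:ℝ)| ^ s * |(k:ℝ)|)) * (C * P * ‖v k‖ * ‖v m‖ * ‖v n‖) := by
            gcongr
        _ = C * Cs * (a k * a m * (|(n:ℝ)| * P * ‖v n‖) + a n * a k * (|(m:ℝ)| * P * ‖v m‖)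
            + a m * a n * (|(k:ℝ)| * P * ‖v k‖)) := by
            simp only [ha]; ring
        _ ≤ _ := by
            have z1 := ha0 k
            have z2 := ha0 m
            have z3 := ha0 n
            have y1 := hbb k hPk
            have y2 := hbb m hPm
            have y3 := hbb n hPn
            gcongr
    · simp
  have hB : ∑ n ∈ F, b n ≤ Mconst (s - μ - 1) * Real.sqrt E := by
    have hbe : ∀ n ∈ F, b n = |(n : ℝ)| ^ (-(s - μ - 1)) * a n := by
      intro n _
      by_cases hn : n = 0
      · simp [ha, hb, hn, hv0]
      · have : 0 < |(n : ℝ)| := abs_pos.2 (by exact_mod_cast hn)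
        simp only [ha, hb]
        rw [← mul_assoc, ← Real.rpow_add this]
        congr 2
        ring
    rw [Finset.sum_congr rfl hbe]
    have hcs := Finset.sum_mul_sq_le_sq_mul_sq F (fun n : ℤ => |(n : ℝ)| ^ (-(s - μ - 1))) a
    have hM := gal_M_bound (s - μ - 1) (by linarith) F
    have hM0 : 0 ≤ Mconst (s - μ - 1) := Real.sqrt_nonneg _
    rw [hEa] at hcs
    refine (sq_le_sq₀ (Finset.sum_nonneg fun n _ => mul_nonneg (by positivity) (ha0 n)) (by positivity)).1 ?_
    rw [mul_pow, Real.sq_sqrt hE0]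
    exact hcs.trans (by gcongr)
  have htri := gal_tri F a b hb0
  rw [hEa] at htri
  have hfin : ‖(3 : ℂ) * ∑ k ∈ F, ∑ m ∈ F, ∑ n ∈ F, ((g k : ℝ) : ℂ) * w k m n‖ ≤
      C * Cs * (3 * (E * ∑ n ∈ F, b n)) := by
    rw [h3]
    refine (norm_sum_le_of_le F fun k _ => norm_sum_le_of_le F fun m _ =>
      norm_sum_le_of_le F fun n _ => hpt k m n).trans ?_
    simp only [← Finset.mul_sum, Finset.sum_add_distrib]
    have e1 := gal_cyc F (fun k m n => if k + m + n = 0 then a k * a m * b n else 0)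
    have e2 := gal_cyc F (fun k m n => if n + k + m = 0 then a n * a k * b m else 0)
    beta_reduce at e1 e2
    have : 0 ≤ C * Cs := by positivity
    refine mul_le_mul_of_nonneg_left ?_ this
    linarith
  rw [norm_mul] at hfin
  have h33 : ‖(3 : ℂ)‖ = 3 := by norm_num
  rw [h33] at hfin
  have hpow : E ^ ((3 : ℝ) / 2) = E * Real.sqrt E := by
    rw [show (3 : ℝ) / 2 = 1 + 1 / 2 by norm_num,
      Real.rpow_add_of_nonneg hE0 (by norm_num) (by norm_num), Real.rpow_one, Real.sqrt_eq_rpow]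
  have hlast : C * Cs * (E * ∑ n ∈ F, b n) ≤ C * Cs * (E * (Mconst (s - μ - 1) * Real.sqrt E)) := by
    gcongr
  rw [hpow]
  linarith

/-- A priori estimate for the Galerkin approximations: the squared Sobolev norm
`E(t) = Σ_k |k|^{2s} |û(k,t)|²` satisfies `|E′(t)| ≤ 2 K_s E(t)^{3/2}`. -/
theorem galerkin_energy_estimate
    (μ : ℝ) (hμ : 0 ≤ μ) (S : ℤ → ℤ → ℤ → ℂ)
    (hS0 : ∀ k m n : ℤ, k * m * n = 0 → S k m n = 0)
    (hSsym : ∀ k m n : ℤ, S k m n = S k n m)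
    (hScyc : ∀ k m n : ℤ, S k m n = S m n k)
    (hSreal : ∀ k m n : ℤ, S k m n = starRingEnd ℂ (S (-k) (-m) (-n)))
    (C : ℝ) (hC : 0 < C)
    (hSbound : ∀ k m n : ℤ, ‖S k m n‖ ≤
      C * min (|(k : ℝ)| ^ μ) (min (|(m : ℝ)| ^ μ) (|(n : ℝ)| ^ μ)))
    (s : ℝ) (hs : μ + 3 / 2 < s)
    (Cs : ℝ)
    (hCs : ∀ k m n : ℝ, k + m + n = 0 →
      |k * |k| ^ (2 * s) + m * |m| ^ (2 * s) + n * |n| ^ (2 * s)| ≤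
        Cs * (|k| ^ s * |m| ^ s * |n| + |n| ^ s * |k| ^ s * |m| + |m| ^ s * |n| ^ s * |k|))
    (Ks : ℝ) (hKs : Ks = C * Cs * Mconst (s - μ - 1))
    (N : ℕ) (u : ℝ → ℤ → ℂ)
    (hsupp : ∀ t : ℝ, ∀ k : ℤ, (N : ℤ) < |k| → u t k = 0)
    (hzero : ∀ t : ℝ, u t 0 = 0)
    (hconj : ∀ t : ℝ, ∀ k : ℤ, u t (-k) = starRingEnd ℂ (u t k))
    (heq : ∀ t : ℝ, ∀ k : ℤ, |k| ≤ (N : ℤ) →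
      HasDerivAt (fun τ => u τ k)
        (-(Complex.I * (k : ℂ) * ∑' n : ℤ, S (-k) (k - n) n * u t (k - n) * u t n)) t) :
    ∀ t : ℝ, ∃ e : ℝ,
      HasDerivAt (fun τ => ∑' k : ℤ, |(k : ℝ)| ^ (2 * s) * ‖u τ k‖ ^ 2) e t ∧
      |e| ≤ 2 * Ks * (∑' k : ℤ, |(k : ℝ)| ^ (2 * s) * ‖u t k‖ ^ 2) ^ ((3 : ℝ) / 2) := by
  intro t
  set F : Finset ℤ := Finset.Icc (-(N : ℤ)) N with hF
  have hmem : ∀ k : ℤ, k ∈ F ↔ |k| ≤ (N : ℤ) := fun k => by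
    rw [hF, Finset.mem_Icc, abs_le]
  have hout : ∀ τ : ℝ, ∀ k : ℤ, k ∉ F → u τ k = 0 := fun τ k hk =>
    hsupp τ k (not_le.1 fun h => hk ((hmem k).2 h))
  have hEs : ∀ τ : ℝ, ∑' k : ℤ, |(k : ℝ)| ^ (2 * s) * ‖u τ k‖ ^ 2 =
      ∑ k ∈ F, |(k : ℝ)| ^ (2 * s) * ‖u τ k‖ ^ 2 := fun τ =>
    tsum_eq_sum fun k hk => by simp [hout τ k hk]
  simp only [hEs]
  set d : ℤ → ℂ := fun k =>
    -(Complex.I * (k : ℂ) * ∑' n : ℤ, S (-k) (k - n) n * u t (k - n) * u t n) with hd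
  refine ⟨∑ k ∈ F, |(k : ℝ)| ^ (2 * s) * (2 * inner ℝ (u t k) (d k)), ?_, ?_⟩
  · apply HasDerivAt.fun_sum
    intro k hk
    exact ((heq t k ((hmem k).1 hk)).norm_sq).const_mul _
  set w : ℤ → ℤ → ℤ → ℂ := fun k m n =>
    if k + m + n = 0 then S k m n * u t k * u t m * u t n else 0 with hw
  have hA := gal_A_bound μ S hScyc C hC hSbound s hμ hs Cs hCs F (u t) (hzero t)
  set A : ℂ := ∑ k ∈ F, ∑ m ∈ F, ∑ n ∈ F, (((k : ℝ) * |(k : ℝ)| ^ (2 * s) : ℝ) : ℂ) * w k m n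
    with hAdef
  have hterm : ∀ k ∈ F, |(k : ℝ)| ^ (2 * s) * (2 * inner ℝ (u t k) (d k)) =
      2 * (Complex.I * ∑ m ∈ F, ∑ n ∈ F,
        ((((-k : ℤ) : ℝ) * |((-k : ℤ) : ℝ)| ^ (2 * s) : ℝ) : ℂ) * w (-k) m n).re := by
    intro k hk
    have hts : ∑' n : ℤ, S (-k) (k - n) n * u t (k - n) * u t n =
        ∑ m ∈ F, ∑ n ∈ F, if -k + m + n = 0 then S (-k) m n * u t m * u t n else 0 := by
      rw [tsum_eq_sum (s := F) fun n hn => by simp [hout t n hn], Finset.sum_comm]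
      refine Finset.sum_congr rfl fun n _ => ?_
      have : ∀ m : ℤ, (-k + m + n = 0) ↔ (m = k - n) := fun m => by omega
      simp only [this, Finset.sum_ite_eq']
      split_ifs with h
      · rfl
      · simp [hout t _ h]
    have hww : ∀ m n, w (-k) m n = starRingEnd ℂ (u t k) *
        (if -k + m + n = 0 then S (-k) m n * u t m * u t n else 0) := by
      intro m n
      simp only [hw, hconj]
      split_ifs
      · ring
      · simp
    rw [Complex.inner]
    simp only [hww, ← Finset.mul_sum]
    rw [← hts]
    simp only [hd]
    set T := ∑' n : ℤ, S (-k) (k - n) n * u t (k - n) * u t n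
    have : Complex.I * ((((((-k : ℤ) : ℝ) * |((-k : ℤ) : ℝ)| ^ (2 * s) : ℝ)) : ℂ) *
        (starRingEnd ℂ (u t k) * T)) =
        ((|(k : ℝ)| ^ (2 * s) : ℝ) : ℂ) *
          (starRingEnd ℂ (u t k) * -(Complex.I * (k : ℂ) * T)) := by
      rw [Int.cast_neg, abs_neg, Complex.ofReal_mul, Complex.ofReal_neg, Complex.ofReal_intCast]
      ring
    rw [this, Complex.re_ofReal_mul]
    ring
  have he : ∑ k ∈ F, |(k : ℝ)| ^ (2 * s) * (2 * inner ℝ (u t k) (d k)) =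
      2 * (Complex.I * A).re := by
    rw [Finset.sum_congr rfl hterm, hAdef, ← Finset.mul_sum, ← Complex.re_sum, ← Finset.mul_sum]
    congr 3
    refine Finset.sum_equiv (Equiv.neg ℤ) (fun k => ?_) (fun k _ => rfl)
    simp [hmem]
  rw [he, abs_mul, abs_two, hKs]
  have h1 : |(Complex.I * A).re| ≤ ‖A‖ := by
    refine (Complex.abs_re_le_norm _).trans ?_
    simp
  linarith
end
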